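/- Let d ≥ 2 be an integer, τ₀ > 0, α > 0, and a > 0, γ > 0. Let V₁, V₂ : ℝ^d → ℝ with V₁ continuously differentiable, satisfying |V₁(x)| ≤ a(1+|x|)^{−γ}, |V₂(x)| ≤ a(1+|x|)^{−γ−1} and ∂_rV₁(x) ≤ a(1+|x|)^{−γ−1} for all x. Then there exists a constant C(τ₀) (depending only on τ₀, α, a, γ, d, and independent of ε and τ) such that for every ε ≠ 0, every τ ≥ τ₀, every f ∈ L²((1+|x|)^{1+α}) and every classical solution u of −Δu + (V₁+V₂)u ± iεu − τu = f with u, ∇u ∈ L²((1+|x|)^{−1−α}), one has ‖∇u‖²_{L²((1+|x|)^{−1−α})} + τ·‖u‖²_{L²((1+|x|)^{−1−α})} ≤ C(τ₀)‖f‖²_{L²((1+|x|)^{1+α})}. -/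

import Mathlib

/-!
A Morawetz multiplier argument is applied to the equation conjugated by a bounded radial
exponential, written as a real system for `u₁ = Re u`, `u₂ = Im u` that is coupled by `s = ± ε`.

*Reductions.* `V₂` need not be measurable. Replacing it pointwise by the admissible value that
minimises `|f|` makes it measurable and only decreases the right-hand side. Lowering `α` to
`min α (1/2) (γ/2)` strengthens the claim once `u` is known to lie in `H¹`, which is where `ε ≠ 0`
enters: the imaginary part of the equation tested against `ψ ū`, for a weight `ψ` whose logarithmic
gradient is `O(1/R)`, bounds `∫ ψ |u|²` uniformly in `R`, and the real part does the same for
`∫ ψ |∇u|²`; let `R → ∞`.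

*Carleman estimate.* Put `v = e^φ u` with `φ' = b / ((1 + r) (1 + β r))`, and multiply the
conjugated equation by `(w / r) (x · ∇v + (d - 1) / 2 v)` with `w` bounded, increasing and
regularised at the origin on the scale `K / √τ`. The divergence of an explicit flux is then, up to
nonnegative terms, a quadratic form in `v` and its corrected radial derivative which dominates
`τ (1 + r)^(-1-α) v²` minus the contribution of `f`. Inside a large ball the gain `(φ')²` beats the
potential, whatever the size of `a`; outside of it the decay of the potential makes it small against
`τ ≥ τ₀`; near the origin an auxiliary weight `h` compensates the inverse square term, which has the
wrong sign for `d = 2`. The flux is integrable because `u ∈ H¹`, and its singularity at the origin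
is removable.

*Removing `ε`.* The coupling of `u₁` and `u₂` leaves the term `|ε| (√τ ‖u‖² + ‖∇u‖² / √τ)`. If
`|ε| ≤ τ`, the unweighted energy identities `|ε| ‖u‖² ≤ ∫ |u| |f|` and
`‖∇u‖² ≤ (τ + 2 a) ‖u‖² + ∫ |u| |f|` bound it by `√τ ∫ |u| |f|`, which is absorbed; if `|ε| ≥ τ`,
the first identity alone suffices. The gradient is controlled by a Caccioppoli inequality.
-/

noncomputable section
open MeasureTheory Metric Set ENNReal

abbrev Ed (d : ℕ) := EuclideanSpace ℝ (Fin d)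

/-- partial derivative of a complex valued function -/
def pd {d : ℕ} (u : Ed d → ℂ) (i : Fin d) (x : Ed d) : ℂ :=
  fderiv ℝ u x (EuclideanSpace.single i 1)

/-- Laplacian of a complex valued function -/
def lap {d : ℕ} (u : Ed d → ℂ) (x : Ed d) : ℂ :=
  ∑ i, fderiv ℝ (pd u i) x (EuclideanSpace.single i 1)

/-- squared norm of the gradient, as an extended nonnegative real -/
def gradSq {d : ℕ} (u : Ed d → ℂ) (x : Ed d) : ℝ≥0∞ :=
  ∑ i, (‖pd u i x‖₊ : ℝ≥0∞) ^ 2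

/-- |u(x)|² as an extended nonnegative real -/
def usq {d : ℕ} (u : Ed d → ℂ) (x : Ed d) : ℝ≥0∞ := (‖u x‖₊ : ℝ≥0∞) ^ 2

/-- radial derivative ∂_r V (x) = (x/|x|)·∇V(x) -/
def radialDeriv {d : ℕ} (V : Ed d → ℝ) (x : Ed d) : ℝ :=
  fderiv ℝ V x x / ‖x‖

/-- Morrey–Campanato type quantity sup_{R>0} (1/R) ∫_{B(0,R)} g -/
def nX2 {d : ℕ} (g : Ed d → ℝ≥0∞) : ℝ≥0∞ :=
  ⨆ (R : ℝ) (_ : 0 < R), (ENNReal.ofReal R)⁻¹ * ∫⁻ x in ball (0 : Ed d) R, g x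

/-- dyadic shell C_j -/
def shell (d : ℕ) (j : ℤ) : Set (Ed d) := {x | (2:ℝ)^j < ‖x‖ ∧ ‖x‖ ≤ (2:ℝ)^(j+1)}

/-- the dual norm ‖f‖_{X*} applied to g = |f|² -/
def nXstar {d : ℕ} (g : Ed d → ℝ≥0∞) : ℝ≥0∞ :=
  ∑' j : ℤ, (ENNReal.ofReal ((2:ℝ)^(j+1)) * ∫⁻ x in shell d j, g x) ^ (1/2 : ℝ)

/-- the index j₀ with 2^{j₀} < ρ ≤ 2^{j₀+1} -/
def jIdx (ρ : ℝ) : ℤ := ⌈Real.logb 2 ρ⌉ - 1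

/-- sup_{R ≥ ρ} (1/R)∫_{B(0,R)} g -/
def nX2r {d : ℕ} (ρ : ℝ) (g : Ed d → ℝ≥0∞) : ℝ≥0∞ :=
  ⨆ (R : ℝ) (_ : ρ ≤ R), (ENNReal.ofReal R)⁻¹ * ∫⁻ x in ball (0 : Ed d) R, g x

/-- the dual norm ‖f‖_{X*_ρ} applied to g = |f|² -/
def nXstarr {d : ℕ} (ρ : ℝ) (g : Ed d → ℝ≥0∞) : ℝ≥0∞ :=
  (∑' j : {j : ℤ // jIdx ρ ≤ j},
    (ENNReal.ofReal ((2:ℝ)^((j:ℤ)+1)) * ∫⁻ x in shell d (j:ℤ), g x) ^ (1/2 : ℝ))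
  + (ENNReal.ofReal ρ * ∫⁻ x in ball (0 : Ed d) ρ, g x) ^ (1/2 : ℝ)

/-- integral of g over the sphere of radius R w.r.t. (d-1)-dimensional Hausdorff measure -/
def sphInt {d : ℕ} (R : ℝ) (g : Ed d → ℝ≥0∞) : ℝ≥0∞ :=
  ∫⁻ x in Metric.sphere (0 : Ed d) R, g x ∂(μH[(d:ℝ) - 1])

/-! ### The divergence theorem on a punctured space -/

section PuncturedDivergence

open Filter Topology

variable {E : Type*} [NormedAddCommGroup E] [NormedSpace ℝ E]

section Cutoff

variable [HasContDiffBump E]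

variable (E) in
/-- A smooth function that is `1` on the closed unit ball and `0` outside the ball of radius `2`. -/
def unitBump : ContDiffBump (0 : E) := ⟨1, 2, by norm_num, by norm_num⟩

/-- The cutoff to the annulus `1 / n ≤ |x| ≤ 2 n`, equal to `1` for `2 / n ≤ |x| ≤ n`; it serves to
integrate by parts away from both the origin and infinity. -/
def annularCutoff (n : ℝ) (x : E) : ℝ := unitBump E (n⁻¹ • x) - unitBump E (n • x)

theorem unitBump_eq_one {x : E} (hx : ‖x‖ ≤ 1) : unitBump E x = 1 :=
  (unitBump E).one_of_mem_closedBall (by simpa [unitBump] using hx)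

theorem unitBump_eq_zero {x : E} (hx : 2 ≤ ‖x‖) : unitBump E x = 0 :=
  (unitBump E).zero_of_le_dist (by simpa [unitBump] using hx)

theorem fderiv_unitBump_eq_zero {x : E} (hx : 2 < ‖x‖) : fderiv ℝ (unitBump E) x = 0 := by
  have hzero : unitBump E =ᶠ[𝓝 x] fun _ => 0 := by
    filter_upwards [(isOpen_lt continuous_const continuous_norm).mem_nhds hx] with y hy
    exact unitBump_eq_zero (le_of_lt hy)
  rw [hzero.fderiv_eq, fderiv_fun_const, Pi.zero_apply]

theorem exists_norm_fderiv_unitBump_le [FiniteDimensional ℝ E] :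
    ∃ C, ∀ x : E, ‖fderiv ℝ (unitBump E) x‖ ≤ C :=
  ((unitBump E).hasCompactSupport.fderiv ℝ).exists_bound_of_continuous
    (((unitBump E).contDiff (n := 1)).continuous_fderiv one_ne_zero)

theorem contDiff_annularCutoff (n : ℝ) : ContDiff ℝ 1 (annularCutoff n : E → ℝ) :=
  ((unitBump E).contDiff.comp (contDiff_const_smul _)).sub
    ((unitBump E).contDiff.comp (contDiff_const_smul _))

theorem fderiv_annularCutoff (n : ℝ) (x : E) :
    fderiv ℝ (annularCutoff n) x
      = n⁻¹ • fderiv ℝ (unitBump E) (n⁻¹ • x) - n • fderiv ℝ (unitBump E) (n • x) := by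
  have hd (c : ℝ) : DifferentiableAt ℝ (fun y : E => unitBump E (c • y)) x :=
    (((unitBump E).contDiff (n := 1)).differentiable one_ne_zero).differentiableAt.comp x
      (differentiableAt_id.const_smul c)
  unfold annularCutoff
  rw [fderiv_fun_sub (hd _) (hd _), fderiv_comp_smul, fderiv_comp_smul]

variable {n : ℝ} {x : E}

theorem annularCutoff_eq_one (hn : 0 < n) (hinner : 2 / n ≤ ‖x‖) (houter : ‖x‖ ≤ n) :
    annularCutoff n x = 1 := by
  rw [annularCutoff, unitBump_eq_one, unitBump_eq_zero, sub_zero]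
  · rw [norm_smul_of_nonneg hn.le]
    exact (div_le_iff₀' hn).mp hinner
  · rw [norm_smul_of_nonneg (inv_nonneg.mpr hn.le)]
    exact inv_mul_le_one_of_le₀ houter hn.le

theorem annularCutoff_eq_zero_of_norm_le_inv (hn : 1 ≤ n) (hx : ‖x‖ ≤ n⁻¹) :
    annularCutoff n x = 0 := by
  have hn0 : 0 < n := by linarith
  rw [annularCutoff, unitBump_eq_one, unitBump_eq_one, sub_self]
  · rw [norm_smul_of_nonneg hn0.le]
    exact (le_inv_mul_iff₀ hn0).mp (by rwa [mul_one])
  · rw [norm_smul_of_nonneg (inv_nonneg.mpr hn0.le)]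
    have hinv : n⁻¹ ≤ 1 := inv_le_one_of_one_le₀ hn
    exact mul_le_one₀ hinv (norm_nonneg x) (hx.trans hinv)

theorem annularCutoff_eq_zero_of_le_norm (hn : 1 ≤ n) (hx : 2 * n ≤ ‖x‖) :
    annularCutoff n x = 0 := by
  have hn0 : 0 < n := by linarith
  rw [annularCutoff, unitBump_eq_zero, unitBump_eq_zero, sub_self]
  · rw [norm_smul_of_nonneg hn0.le]
    nlinarith
  · rw [norm_smul_of_nonneg (inv_nonneg.mpr hn0.le), le_inv_mul_iff₀ hn0]
    linarith

theorem annularCutoff_mem_Icc (hn : 2 ≤ n) (x : E) : annularCutoff n x ∈ Icc (0 : ℝ) 1 := by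
  have hn0 : 0 < n := by linarith
  refine ⟨?_, by linarith [(unitBump E).le_one (x := n⁻¹ • x), (unitBump E).nonneg' (n • x),
    show annularCutoff n x = unitBump E (n⁻¹ • x) - unitBump E (n • x) from rfl]⟩
  unfold annularCutoff
  rcases le_total ‖x‖ n with hx | hx
  · rw [unitBump_eq_one (x := n⁻¹ • x)]
    · linarith [(unitBump E).le_one (x := n • x)]
    · rw [norm_smul_of_nonneg (inv_nonneg.mpr hn0.le)]
      exact inv_mul_le_one_of_le₀ hx hn0.le
  · rw [unitBump_eq_zero (x := n • x), sub_zero]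
    · exact (unitBump E).nonneg' _
    · rw [norm_smul_of_nonneg hn0.le]
      nlinarith

theorem hasCompactSupport_annularCutoff [ProperSpace E] (hn : 1 ≤ n) :
    HasCompactSupport (annularCutoff n : E → ℝ) := by
  refine HasCompactSupport.intro (isCompact_closedBall 0 (2 * n)) fun x hx => ?_
  rw [mem_closedBall, dist_zero_right, not_le] at hx
  exact annularCutoff_eq_zero_of_le_norm hn hx.le

theorem zero_notMem_tsupport_annularCutoff (hn : 1 ≤ n) :
    (0 : E) ∉ tsupport (annularCutoff n : E → ℝ) := by
  rw [notMem_tsupport_iff_eventuallyEq]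
  filter_upwards [closedBall_mem_nhds (0 : E) (inv_pos.mpr (by linarith : 0 < n))] with y hy
  exact annularCutoff_eq_zero_of_norm_le_inv hn (by simpa using hy)

theorem norm_fderiv_annularCutoff_le {C : ℝ} (hC : ∀ x : E, ‖fderiv ℝ (unitBump E) x‖ ≤ C)
    (hn : 0 < n) (x : E) :
    ‖fderiv ℝ (annularCutoff n) x‖
      ≤ C * n⁻¹ + (closedBall 0 (2 / n)).indicator (fun _ => C * n) x := by
  rw [fderiv_annularCutoff]
  refine (norm_sub_le _ _).trans (add_le_add ?_ ?_)
  · rw [norm_smul, Real.norm_of_nonneg (inv_nonneg.mpr hn.le), mul_comm]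
    gcongr
    exact hC _
  · rw [norm_smul, Real.norm_of_nonneg hn.le]
    by_cases hx : x ∈ closedBall 0 (2 / n)
    · rw [indicator_of_mem hx, mul_comm]
      gcongr
      exact hC _
    · rw [indicator_of_notMem hx, fderiv_unitBump_eq_zero, norm_zero, mul_zero]
      rw [mem_closedBall, dist_zero_right, not_le, div_lt_iff₀' hn] at hx
      rwa [norm_smul_of_nonneg hn.le]

theorem norm_fderiv_annularCutoff_mul_le {C M n y N : ℝ} {x : E} (v : E)
    (hC : ∀ x : E, ‖fderiv ℝ (unitBump E) x‖ ≤ C) (hn : 2 ≤ n) (hy : |y| ≤ N)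
    (hM : x ∈ closedBall (0 : E) 1 → N ≤ M) :
    ‖fderiv ℝ (annularCutoff n) x v * y‖
      ≤ ‖v‖ * (C * n⁻¹ * N + (closedBall 0 (2 / n)).indicator (fun _ => C * n * M) x) := by
  have hn0 : 0 < n := by linarith
  have hC0 : 0 ≤ C := (norm_nonneg _).trans (hC 0)
  have hN0 : 0 ≤ N := (abs_nonneg _).trans hy
  have hNM : (closedBall 0 (2 / n)).indicator (fun _ => C * n) x * N
      ≤ (closedBall 0 (2 / n)).indicator (fun _ => C * n * M) x := by
    by_cases hx : x ∈ closedBall 0 (2 / n)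
    · rw [indicator_of_mem hx, indicator_of_mem hx]
      gcongr
      exact hM (closedBall_subset_closedBall ((div_le_one hn0).mpr hn) hx)
    · rw [indicator_of_notMem hx, indicator_of_notMem hx, zero_mul]
  calc ‖fderiv ℝ (annularCutoff n) x v * y‖
      ≤ ‖fderiv ℝ (annularCutoff n) x‖ * ‖v‖ * N := by
        rw [norm_mul]
        exact mul_le_mul (ContinuousLinearMap.le_opNorm _ _) hy (norm_nonneg _) (by positivity)
    _ ≤ (C * n⁻¹ + (closedBall 0 (2 / n)).indicator (fun _ => C * n) x) * ‖v‖ * N := by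
        gcongr
        exact norm_fderiv_annularCutoff_le hC hn0 x
    _ = ‖v‖ * (C * n⁻¹ * N + (closedBall 0 (2 / n)).indicator (fun _ => C * n) x * N) := by ring
    _ ≤ _ := by gcongr

end Cutoff

theorem continuous_mul_of_continuousAt_on_tsupport {X : Type*} [TopologicalSpace X] {g h : X → ℝ}
    (hg : Continuous g) (hh : ∀ x ∈ tsupport g, ContinuousAt h x) :
    Continuous fun x => g x * h x :=
  continuous_of_tsupport fun x hx =>
    hg.continuousAt.mul (hh x (tsupport_mul_subset_left hx))

variable [MeasurableSpace E] [BorelSpace E] {μ : Measure E}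

section IntegrationByParts

variable {κ Y : E → ℝ}

theorem integrable_mul_fderiv_of_hasCompactSupport [IsFiniteMeasureOnCompacts μ]
    (hκ : ContDiff ℝ 1 κ) (hsupp : HasCompactSupport κ)
    (hY : ∀ x ∈ tsupport κ, ContDiffAt ℝ 1 Y x) (v : E) :
    Integrable (fun x => κ x * fderiv ℝ Y x v) μ :=
  (continuous_mul_of_continuousAt_on_tsupport hκ.continuous fun x hx =>
    ((hY x hx).continuousAt_fderiv one_ne_zero).clm_apply continuousAt_const)
      |>.integrable_of_hasCompactSupport hsupp.mul_right

theorem integrable_fderiv_mul_of_hasCompactSupport [IsFiniteMeasureOnCompacts μ]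
    (hκ : ContDiff ℝ 1 κ) (hsupp : HasCompactSupport κ)
    (hY : ∀ x ∈ tsupport κ, ContDiffAt ℝ 1 Y x) (v : E) :
    Integrable (fun x => fderiv ℝ κ x v * Y x) μ :=
  (continuous_mul_of_continuousAt_on_tsupport
    ((hκ.continuous_fderiv one_ne_zero).clm_apply continuous_const) fun x hx =>
      (hY x (tsupport_fderiv_apply_subset ℝ v hx)).continuousAt)
      |>.integrable_of_hasCompactSupport (hsupp.fderiv_apply ℝ v).mul_right

theorem integral_mul_fderiv_of_hasCompactSupport [FiniteDimensional ℝ E] [μ.IsAddHaarMeasure]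
    (hκ : ContDiff ℝ 1 κ) (hsupp : HasCompactSupport κ)
    (hY : ∀ x ∈ tsupport κ, ContDiffAt ℝ 1 Y x) (v : E) :
    ∫ x, κ x * fderiv ℝ Y x v ∂μ = -∫ x, fderiv ℝ κ x v * Y x ∂μ := by
  have hκY : Integrable (fun x => κ x * Y x) μ :=
    (continuous_mul_of_continuousAt_on_tsupport hκ.continuous fun x hx => (hY x hx).continuousAt)
      |>.integrable_of_hasCompactSupport hsupp.mul_right
  exact integral_mul_fderiv_eq_neg_fderiv_mul_of_integrable
    (integrable_fderiv_mul_of_hasCompactSupport hκ hsupp hY v)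
    (integrable_mul_fderiv_of_hasCompactSupport hκ hsupp hY v) hκY
    (fun x _ => hκ.differentiable one_ne_zero x)
    (fun x hx => (hY x hx).differentiableAt one_ne_zero)

end IntegrationByParts

variable [FiniteDimensional ℝ E] [μ.IsAddHaarMeasure]

theorem measureReal_closedBall_two_div_le (hdim : 2 ≤ Module.finrank ℝ E) {n : ℝ} (hn : 2 ≤ n) :
    μ.real (closedBall (0 : E) (2 / n)) ≤ (2 / n) ^ 2 * μ.real (ball (0 : E) 1) := by
  rw [Measure.real, Measure.addHaar_closedBall _ _ (by positivity), ENNReal.toReal_mul,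
    ENNReal.toReal_ofReal (by positivity), Measure.real]
  gcongr ?_ * _
  exact pow_le_pow_of_le_one (by positivity) ((div_le_one (by linarith)).mpr hn) hdim

/-- The inner part of the gradient of the cutoff has size `n`, but lives on a ball of volume
`O(n⁻²)`. -/
theorem exists_abs_integral_fderiv_annularCutoff_mul_le (hdim : 2 ≤ Module.finrank ℝ E)
    {Y N : E → ℝ} (hN : Continuous N) (hNint : Integrable N μ)
    (hYN : ∀ x, x ≠ 0 → |Y x| ≤ N x) (v : E) :
    ∃ K, ∀ n : ℝ, 2 ≤ n → |∫ x, fderiv ℝ (annularCutoff n) x v * Y x ∂μ| ≤ K * n⁻¹ := by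
  have : Nontrivial E := Module.nontrivial_of_finrank_pos (R := ℝ) (by lia)
  obtain ⟨C, hC⟩ := exists_norm_fderiv_unitBump_le (E := E)
  obtain ⟨M, hM⟩ := (isCompact_closedBall (0 : E) 1).exists_bound_of_continuousOn hN.continuousOn
  have hC0 : 0 ≤ C := (norm_nonneg _).trans (hC 0)
  have hM0 : 0 ≤ M := (norm_nonneg _).trans (hM 0 (by simp))
  refine ⟨‖v‖ * (C * (∫ x, N x ∂μ) + 4 * C * M * μ.real (ball (0 : E) 1)), fun n hn => ?_⟩
  have : 0 < n := by linarith
  set B : Set E := closedBall 0 (2 / n)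
  have hind : Integrable (B.indicator fun _ => C * n * M) μ :=
    (integrable_indicator_iff measurableSet_closedBall).mpr
      (integrableOn_const measure_closedBall_lt_top.ne)
  have hbound : Integrable (fun x => C * n⁻¹ * N x + B.indicator (fun _ => C * n * M) x) μ :=
    (hNint.const_mul _).add hind
  calc |∫ x, fderiv ℝ (annularCutoff n) x v * Y x ∂μ|
      ≤ ∫ x, ‖v‖ * (C * n⁻¹ * N x + B.indicator (fun _ => C * n * M) x) ∂μ := by
        rw [← Real.norm_eq_abs]
        refine norm_integral_le_of_norm_le (hbound.const_mul _) ?_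
        filter_upwards [Measure.ae_ne μ 0] with x hx
        exact norm_fderiv_annularCutoff_mul_le v hC hn (hYN x hx)
          fun hx1 => (le_abs_self _).trans (hM x hx1)
    _ = ‖v‖ * (C * n⁻¹ * (∫ x, N x ∂μ) + μ.real B * (C * n * M)) := by
        rw [integral_const_mul, integral_add (hNint.const_mul _) hind, integral_const_mul,
          integral_indicator measurableSet_closedBall, setIntegral_const, smul_eq_mul]
    _ ≤ ‖v‖ * (C * n⁻¹ * (∫ x, N x ∂μ)
          + (2 / n) ^ 2 * μ.real (ball (0 : E) 1) * (C * n * M)) := by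
        gcongr
        exact measureReal_closedBall_two_div_le (E := E) hdim hn
    _ = _ := by field_simp; ring

theorem tendsto_integral_annularCutoff_mul [Nontrivial E] {G : E → ℝ} (hG : Integrable G μ) :
    Tendsto (fun n : ℝ => ∫ x, annularCutoff n x * G x ∂μ) atTop (𝓝 (∫ x, G x ∂μ)) := by
  refine tendsto_integral_filter_of_dominated_convergence (fun x => ‖G x‖) ?_ ?_ hG.norm ?_
  · exact Eventually.of_forall fun n =>
      (contDiff_annularCutoff n).continuous.aestronglyMeasurable.mul hG.aestronglyMeasurable
  · filter_upwards [eventually_ge_atTop 2] with n hn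
    refine Eventually.of_forall fun x => ?_
    obtain ⟨h0, h1⟩ := annularCutoff_mem_Icc hn x
    rw [norm_mul, Real.norm_of_nonneg h0]
    exact mul_le_of_le_one_left (norm_nonneg _) h1
  · filter_upwards [Measure.ae_ne μ 0] with x hx
    have hx0 : 0 < ‖x‖ := norm_pos_iff.mpr hx
    refine tendsto_const_nhds.congr' ?_
    filter_upwards [eventually_gt_atTop 0, eventually_ge_atTop ‖x‖,
      eventually_ge_atTop (2 / ‖x‖)] with n hn houter hinner
    rw [annularCutoff_eq_one hn ((div_le_comm₀ hx0 hn).mp hinner) houter, one_mul]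

theorem integral_nonpos_of_le_divergence_of_ne_zero (hdim : 2 ≤ Module.finrank ℝ E)
    {ι : Type*} [Fintype ι] {v : ι → E} {Y : ι → E → ℝ} {N G : E → ℝ}
    (hY : ∀ i x, x ≠ 0 → ContDiffAt ℝ 1 (Y i) x)
    (hN : Continuous N) (hNint : Integrable N μ) (hYN : ∀ i x, x ≠ 0 → |Y i x| ≤ N x)
    (hG : Integrable G μ) (hGY : ∀ x, x ≠ 0 → G x ≤ ∑ i, fderiv ℝ (Y i) x (v i)) :
    ∫ x, G x ∂μ ≤ 0 := by
  have : Nontrivial E := Module.nontrivial_of_finrank_pos (R := ℝ) (by lia)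
  choose K hK using fun i =>
    exists_abs_integral_fderiv_annularCutoff_mul_le hdim hN hNint (hYN i) (v i)
  have hcut (n : ℝ) (hn : 2 ≤ n) : ∫ x, annularCutoff n x * G x ∂μ ≤ (∑ i, K i) * n⁻¹ := by
    have hYsupp (i : ι) (x : E) (hx : x ∈ tsupport (annularCutoff n : E → ℝ)) :
        ContDiffAt ℝ 1 (Y i) x :=
      hY i x (ne_of_mem_of_not_mem hx (zero_notMem_tsupport_annularCutoff (by linarith)))
    have hcs : HasCompactSupport (annularCutoff n : E → ℝ) :=
      hasCompactSupport_annularCutoff (by linarith)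
    have hint (i : ι) := integrable_mul_fderiv_of_hasCompactSupport (μ := μ)
      (contDiff_annularCutoff n) hcs (hYsupp i) (v i)
    calc ∫ x, annularCutoff n x * G x ∂μ
        ≤ ∫ x, ∑ i, annularCutoff n x * fderiv ℝ (Y i) x (v i) ∂μ := by
          refine integral_mono_ae ?_ (integrable_finsetSum _ fun i _ => hint i) ?_
          · refine hG.bdd_mul (c := 1) (contDiff_annularCutoff n).continuous.aestronglyMeasurable
              (Eventually.of_forall fun x => ?_)
            obtain ⟨h0, h1⟩ := annularCutoff_mem_Icc hn x
            rwa [Real.norm_of_nonneg h0]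
          · filter_upwards [Measure.ae_ne μ 0] with x hx
            rw [← Finset.mul_sum]
            exact mul_le_mul_of_nonneg_left (hGY x hx) (annularCutoff_mem_Icc hn x).1
      _ = ∑ i, -∫ x, fderiv ℝ (annularCutoff n) x (v i) * Y i x ∂μ := by
          rw [integral_finsetSum _ fun i _ => hint i]
          exact Finset.sum_congr rfl fun i _ =>
            integral_mul_fderiv_of_hasCompactSupport (contDiff_annularCutoff n) hcs (hYsupp i) _
      _ ≤ ∑ i, K i * n⁻¹ := Finset.sum_le_sum fun i _ => (neg_le_abs _).trans (hK i n hn)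
      _ = _ := (Finset.sum_mul ..).symm
  refine le_of_tendsto_of_tendsto (tendsto_integral_annularCutoff_mul hG)
    (by simpa using tendsto_inv_atTop_zero.const_mul (∑ i, K i)) ?_
  filter_upwards [eventually_ge_atTop 2] with n hn using hcut n hn

end PuncturedDivergence

/-! ### Calculus in Cartesian and radial coordinates -/

section RadialCalculus

open Filter Topology

variable {d : ℕ}

/-- The partial derivative `∂ᵢ g` of a real-valued function. -/
def partialDeriv (i : Fin d) (g : Ed d → ℝ) (x : Ed d) : ℝ :=
  fderiv ℝ g x (EuclideanSpace.single i 1)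

/-- The squared length `|∇v|²` of the gradient of a real-valued function. -/
def gradNormSq (v : Ed d → ℝ) (x : Ed d) : ℝ := ∑ i, partialDeriv i v x ^ 2

/-- The Laplacian `Δv` of a real-valued function. -/
def realLaplacian (v : Ed d → ℝ) (x : Ed d) : ℝ := ∑ i, partialDeriv i (partialDeriv i v) x

variable {g h v : Ed d → ℝ} {x : Ed d} {i : Fin d}

theorem gradNormSq_nonneg (v : Ed d → ℝ) (x : Ed d) : 0 ≤ gradNormSq v x :=
  Finset.sum_nonneg fun _ _ => sq_nonneg _

theorem partialDeriv_sq_le_gradNormSq (v : Ed d → ℝ) (x : Ed d) (i : Fin d) :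
    partialDeriv i v x ^ 2 ≤ gradNormSq v x :=
  Finset.single_le_sum (f := fun j => partialDeriv j v x ^ 2) (fun _ _ => sq_nonneg _)
    (Finset.mem_univ i)

theorem norm_sq_eq_sum_sq (x : Ed d) : ‖x‖ ^ 2 = ∑ i, x i ^ 2 := by
  simp [EuclideanSpace.norm_sq_eq]

theorem partialDeriv_add (hg : DifferentiableAt ℝ g x) (hh : DifferentiableAt ℝ h x) :
    partialDeriv i (fun y => g y + h y) x = partialDeriv i g x + partialDeriv i h x := by
  simp [partialDeriv, fderiv_fun_add hg hh]

theorem partialDeriv_mul (hg : DifferentiableAt ℝ g x) (hh : DifferentiableAt ℝ h x) :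
    partialDeriv i (fun y => g y * h y) x
      = g x * partialDeriv i h x + h x * partialDeriv i g x := by
  simp [partialDeriv, fderiv_fun_mul hg hh]

theorem partialDeriv_congr (hgh : g =ᶠ[𝓝 x] h) : partialDeriv i g x = partialDeriv i h x := by
  rw [partialDeriv, hgh.fderiv_eq, partialDeriv]

theorem partialDeriv_coord (i j : Fin d) (x : Ed d) :
    partialDeriv i (fun y => y j) x = if j = i then 1 else 0 := by
  have hproj : HasFDerivAt (fun y : Ed d => y j) (EuclideanSpace.proj j : Ed d →L[ℝ] ℝ) x :=
    (EuclideanSpace.proj j : Ed d →L[ℝ] ℝ).hasFDerivAt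
  simp [partialDeriv, hproj.fderiv, PiLp.single_apply]

theorem contDiff_coord (j : Fin d) {n : WithTop ℕ∞} : ContDiff ℝ n (fun y : Ed d => y j) :=
  (EuclideanSpace.proj j : Ed d →L[ℝ] ℝ).contDiff

theorem contDiffAt_partialDeriv {n m : WithTop ℕ∞} (hv : ContDiffAt ℝ n v x) (hmn : m + 1 ≤ n)
    (i : Fin d) : ContDiffAt ℝ m (partialDeriv i v) x :=
  (hv.fderiv_right hmn).clm_apply contDiffAt_const

theorem differentiableAt_partialDeriv (hv : ContDiffAt ℝ 2 v x) (i : Fin d) :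
    DifferentiableAt ℝ (partialDeriv i v) x :=
  (contDiffAt_partialDeriv (m := 1) hv (by norm_num) i).differentiableAt one_ne_zero

theorem contDiffAt_gradNormSq (hv : ContDiffAt ℝ 2 v x) : ContDiffAt ℝ 1 (gradNormSq v) x :=
  ContDiffAt.sum fun i _ => (contDiffAt_partialDeriv hv (by norm_num) i).pow 2

theorem contDiffAt_radialDeriv (hv : ContDiffAt ℝ 2 v x) (hx : x ≠ 0) :
    ContDiffAt ℝ 1 (radialDeriv v) x :=
  ((hv.fderiv_right (m := 1) (by norm_num)).clm_apply contDiffAt_id).div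
    (contDiffAt_norm ℝ hx) (norm_ne_zero_iff.mpr hx)

theorem partialDeriv_comm (hv : ContDiffAt ℝ 2 v x) (i j : Fin d) :
    partialDeriv i (partialDeriv j v) x = partialDeriv j (partialDeriv i v) x := by
  have hdiff : DifferentiableAt ℝ (fderiv ℝ v) x :=
    (hv.fderiv_right (m := 1) (by norm_num)).differentiableAt one_ne_zero
  have hsecond (a b : Fin d) : partialDeriv a (partialDeriv b v) x
      = fderiv ℝ (fderiv ℝ v) x (EuclideanSpace.single a 1) (EuclideanSpace.single b 1) := by
    unfold partialDeriv
    rw [fderiv_clm_apply hdiff (differentiableAt_const _)]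
    simp
  rw [hsecond, hsecond]
  exact hv.isSymmSndFDerivAt (by simp) _ _

theorem fderiv_apply_eq_sum (v : Ed d → ℝ) (x y : Ed d) :
    fderiv ℝ v x y = ∑ i, y i * partialDeriv i v x := by
  conv_lhs => rw [← (EuclideanSpace.basisFun (Fin d) ℝ).sum_repr y]
  simp [partialDeriv]

theorem norm_mul_radialDeriv (hx : x ≠ 0) (v : Ed d → ℝ) :
    ‖x‖ * radialDeriv v x = ∑ i, x i * partialDeriv i v x := by
  rw [radialDeriv, mul_div_cancel₀ _ (norm_ne_zero_iff.mpr hx), fderiv_apply_eq_sum]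

theorem radialDeriv_sq_le_gradNormSq (hx : x ≠ 0) (v : Ed d → ℝ) :
    radialDeriv v x ^ 2 ≤ gradNormSq v x := by
  refine le_of_mul_le_mul_left ?_ (pow_pos (norm_pos_iff.mpr hx) 2)
  rw [← mul_pow, norm_mul_radialDeriv hx, norm_sq_eq_sum_sq]
  exact Finset.sum_mul_sq_le_sq_mul_sq _ _ _

theorem radialDeriv_add (hg : DifferentiableAt ℝ g x) (hh : DifferentiableAt ℝ h x) :
    radialDeriv (fun y => g y + h y) x = radialDeriv g x + radialDeriv h x := by
  simp [radialDeriv, fderiv_fun_add hg hh, add_div]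

theorem radialDeriv_mul (hg : DifferentiableAt ℝ g x) (hh : DifferentiableAt ℝ h x) :
    radialDeriv (fun y => g y * h y) x = g x * radialDeriv h x + h x * radialDeriv g x := by
  simp [radialDeriv, fderiv_fun_mul hg hh, add_div, mul_div_assoc]

section RadialFunctions

variable {F : ℝ → ℝ}

theorem contDiffAt_comp_norm {n : WithTop ℕ∞} (hF : ContDiffAt ℝ n F ‖x‖) (hx : x ≠ 0) :
    ContDiffAt ℝ n (fun y : Ed d => F ‖y‖) x :=
  hF.comp x (contDiffAt_norm ℝ hx)

theorem fderiv_norm_apply (hx : x ≠ 0) (y : Ed d) :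
    fderiv ℝ (fun y : Ed d => ‖y‖) x y = inner ℝ x y / ‖x‖ := by
  have hnorm : HasFDerivAt (fun y : Ed d => ‖y‖) _ x :=
    ((contDiffAt_norm ℝ hx).differentiableAt (n := 1) one_ne_zero).hasFDerivAt
  have hsq := congrArg (· y) ((hasStrictFDerivAt_norm_sq x).hasFDerivAt.unique (hnorm.pow 2))
  simp only [smul_apply, coe_innerSL_apply, nsmul_eq_mul, Nat.cast_ofNat,
    Nat.add_one_sub_one, pow_one, smul_eq_mul] at hsq
  field_simp [norm_ne_zero_iff.mpr hx]
  linarith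

theorem fderiv_comp_norm_apply (hx : x ≠ 0) (hF : DifferentiableAt ℝ F ‖x‖) (y : Ed d) :
    fderiv ℝ (fun y : Ed d => F ‖y‖) x y = deriv F ‖x‖ * (inner ℝ x y / ‖x‖) := by
  have hnorm : HasFDerivAt (fun y : Ed d => ‖y‖) _ x :=
    ((contDiffAt_norm ℝ hx).differentiableAt (n := 1) one_ne_zero).hasFDerivAt
  have hcomp : HasFDerivAt (fun y : Ed d => F ‖y‖) _ x := hF.hasDerivAt.comp_hasFDerivAt x hnorm
  rw [hcomp.fderiv, ← fderiv_norm_apply hx]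
  rfl

theorem partialDeriv_comp_norm (hx : x ≠ 0) (hF : DifferentiableAt ℝ F ‖x‖) (i : Fin d) :
    partialDeriv i (fun y => F ‖y‖) x = deriv F ‖x‖ * (x i / ‖x‖) := by
  simp [partialDeriv, fderiv_comp_norm_apply hx hF, EuclideanSpace.inner_single_right]

theorem radialDeriv_comp_norm (hx : x ≠ 0) (hF : DifferentiableAt ℝ F ‖x‖) :
    radialDeriv (fun y => F ‖y‖) x = deriv F ‖x‖ := by
  have : ‖x‖ ≠ 0 := norm_ne_zero_iff.mpr hx
  rw [radialDeriv, fderiv_comp_norm_apply hx hF, real_inner_self_eq_norm_sq]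
  field_simp

theorem sum_partialDeriv_comp_norm_mul (hx : x ≠ 0) (hF : DifferentiableAt ℝ F ‖x‖)
    (v : Ed d → ℝ) :
    ∑ i, partialDeriv i (fun y => F ‖y‖) x * partialDeriv i v x
      = deriv F ‖x‖ * radialDeriv v x := by
  simp only [partialDeriv_comp_norm hx hF, radialDeriv, fderiv_apply_eq_sum, Finset.sum_div,
    Finset.mul_sum]
  exact Finset.sum_congr rfl fun i _ => by ring

end RadialFunctions

section Divergence

theorem sum_partialDeriv_mul_partialDeriv (hg : DifferentiableAt ℝ g x)
    (hv : ContDiffAt ℝ 2 v x) :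
    ∑ i, partialDeriv i (fun y => g y * partialDeriv i v y) x
      = ∑ i, partialDeriv i g x * partialDeriv i v x + g x * realLaplacian v x := by
  simp only [partialDeriv_mul hg (differentiableAt_partialDeriv hv _), realLaplacian,
    Finset.mul_sum, ← Finset.sum_add_distrib]
  exact Finset.sum_congr rfl fun i _ => by ring

theorem sum_partialDeriv_coord_mul (hg : DifferentiableAt ℝ g x) :
    ∑ i, partialDeriv i (fun y => y i * g y) x = d * g x + fderiv ℝ g x x := by
  have hcoord (i : Fin d) : partialDeriv i (fun y => y i * g y) x
      = x i * partialDeriv i g x + g x := by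
    rw [partialDeriv_mul ((contDiff_coord i (n := 1)).differentiable one_ne_zero x) hg,
      partialDeriv_coord, if_pos rfl, mul_one]
  simp [hcoord, Finset.sum_add_distrib, fderiv_apply_eq_sum, add_comm]

theorem sum_partialDeriv_coord_div_norm_mul (hx : x ≠ 0) (hg : DifferentiableAt ℝ g x) :
    ∑ i, partialDeriv i (fun y => y i / ‖y‖ * g y) x
      = ((d : ℝ) - 1) / ‖x‖ * g x + radialDeriv g x := by
  have hx0 : ‖x‖ ≠ 0 := norm_ne_zero_iff.mpr hx
  have hinv : DifferentiableAt ℝ (fun r : ℝ => r⁻¹) ‖x‖ := differentiableAt_inv hx0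
  have hinvx : DifferentiableAt ℝ (fun y : Ed d => ‖y‖⁻¹) x :=
    (contDiffAt_comp_norm (contDiffAt_inv ℝ hx0 (n := 1)) hx).differentiableAt one_ne_zero
  simp only [div_mul_eq_mul_div, mul_div_assoc, div_eq_inv_mul (g _)]
  rw [sum_partialDeriv_coord_mul (hinvx.fun_mul hg), fderiv_fun_mul hinvx hg]
  simp only [add_apply, smul_apply, smul_eq_mul,
    fderiv_comp_norm_apply hx hinv, real_inner_self_eq_norm_sq, deriv_inv, radialDeriv]
  field_simp
  ring

end Divergence

theorem realLaplacian_mul (hg : ContDiffAt ℝ 2 g x) (hh : ContDiffAt ℝ 2 h x) :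
    realLaplacian (fun y => g y * h y) x
      = g x * realLaplacian h x + 2 * ∑ i, partialDeriv i g x * partialDeriv i h x
        + h x * realLaplacian g x := by
  have hdiff {k : Ed d → ℝ} (hk : ContDiffAt ℝ 2 k x) : ∀ᶠ y in 𝓝 x, DifferentiableAt ℝ k y := by
    filter_upwards [hk.eventually (by simp)] with y hy using hy.differentiableAt two_ne_zero
  have hprod (i : Fin d) : partialDeriv i (partialDeriv i fun y => g y * h y) x
      = partialDeriv i (fun y => g y * partialDeriv i h y) x
        + partialDeriv i (fun y => h y * partialDeriv i g y) x := by
    rw [← partialDeriv_add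
      ((hdiff hg).self_of_nhds.fun_mul (differentiableAt_partialDeriv hh i))
      ((hdiff hh).self_of_nhds.fun_mul (differentiableAt_partialDeriv hg i))]
    refine partialDeriv_congr ?_
    filter_upwards [hdiff hg, hdiff hh] with y hgy hhy using partialDeriv_mul hgy hhy
  simp only [realLaplacian, hprod, Finset.sum_add_distrib]
  rw [sum_partialDeriv_mul_partialDeriv (hdiff hg).self_of_nhds hh,
    sum_partialDeriv_mul_partialDeriv (hdiff hh).self_of_nhds hg]
  simp only [mul_comm (partialDeriv _ h x), realLaplacian]
  ring

theorem realLaplacian_comp_norm {F : ℝ → ℝ} (hx : x ≠ 0) (hF : ContDiffAt ℝ 2 F ‖x‖) :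
    realLaplacian (fun y : Ed d => F ‖y‖) x
      = deriv (deriv F) ‖x‖ + ((d : ℝ) - 1) / ‖x‖ * deriv F ‖x‖ := by
  have hF' : ContDiffAt ℝ 1 (deriv F) ‖x‖ := hF.derivWithin (by norm_num)
  have hFx : ∀ᶠ y in 𝓝 x, DifferentiableAt ℝ F ‖y‖ := by
    filter_upwards [continuous_norm.continuousAt.eventually (hF.eventually (by simp))] with y hy
      using hy.differentiableAt two_ne_zero
  have hgrad (i : Fin d) : partialDeriv i (partialDeriv i fun y => F ‖y‖) x
      = partialDeriv i (fun y => y i / ‖y‖ * deriv F ‖y‖) x := by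
    refine partialDeriv_congr ?_
    filter_upwards [hFx, isOpen_ne.mem_nhds hx] with y hFy hy
    rw [partialDeriv_comp_norm hy hFy, mul_comm]
  simp only [realLaplacian, hgrad]
  rw [sum_partialDeriv_coord_div_norm_mul hx
    ((contDiffAt_comp_norm hF' hx).differentiableAt one_ne_zero),
    radialDeriv_comp_norm hx (hF'.differentiableAt one_ne_zero), add_comm]

theorem radialDeriv_gradNormSq (hv : ContDiffAt ℝ 2 v x) :
    radialDeriv (gradNormSq v) x
      = 2 * (∑ i, partialDeriv i v x * ∑ j, x j * partialDeriv i (partialDeriv j v) x) / ‖x‖ := by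
  have hd (i : Fin d) := differentiableAt_partialDeriv hv i
  unfold radialDeriv gradNormSq
  rw [fderiv_fun_sum fun i _ => (hd i).fun_pow 2]
  simp only [sum_apply, fderiv_fun_pow _ (hd _), smul_apply, nsmul_eq_mul,
    Nat.cast_ofNat, smul_eq_mul, Nat.add_one_sub_one, pow_one, fderiv_apply_eq_sum,
    fun i j => partialDeriv_comm hv j i, mul_assoc, ← Finset.mul_sum]

theorem norm_mul_partialDeriv_radialDeriv (hx : x ≠ 0) (hv : ContDiffAt ℝ 2 v x) (i : Fin d) :
    ‖x‖ * partialDeriv i (radialDeriv v) x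
      = partialDeriv i v x + ∑ j, x j * partialDeriv i (partialDeriv j v) x
        - radialDeriv v x * (x i / ‖x‖) := by
  have hd (j : Fin d) := differentiableAt_partialDeriv hv j
  have hr : DifferentiableAt ℝ (radialDeriv v) x :=
    (contDiffAt_radialDeriv hv hx).differentiableAt one_ne_zero
  have hcoord (j : Fin d) : DifferentiableAt ℝ (fun y : Ed d => y j) x :=
    (contDiff_coord j (n := 1)).differentiable one_ne_zero x
  have hnorm : DifferentiableAt ℝ (fun y : Ed d => ‖y‖) x :=
    (contDiffAt_norm ℝ hx (n := 1)).differentiableAt one_ne_zero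
  have heuler : (fun y => ‖y‖ * radialDeriv v y)
      =ᶠ[𝓝 x] fun y => ∑ j, y j * partialDeriv j v y := by
    filter_upwards [isOpen_ne.mem_nhds hx] with y hy using norm_mul_radialDeriv hy v
  have hnormx : partialDeriv i (fun y => ‖y‖) x = x i / ‖x‖ := by
    simpa using partialDeriv_comp_norm hx differentiableAt_id i
  have hsum : partialDeriv i (fun y => ∑ j, y j * partialDeriv j v y) x
      = ∑ j, partialDeriv i (fun y => y j * partialDeriv j v y) x := by
    rw [partialDeriv, fderiv_fun_sum fun j _ => (hcoord j).fun_mul (hd j)]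
    simp only [sum_apply]
    rfl
  have hdr := partialDeriv_congr (i := i) heuler
  simp only [partialDeriv_mul hnorm hr, hsum, hnormx, partialDeriv_mul (hcoord _) (hd _),
    partialDeriv_coord, Finset.sum_add_distrib, mul_ite, mul_one, mul_zero,
    Finset.sum_ite_eq', Finset.mem_univ, if_true] at hdr
  linarith

/-- The second derivatives of `v` enter only through a radial derivative, which is what makes the
radial multiplier work. -/
theorem sum_partialDeriv_radialDeriv_mul (hx : x ≠ 0) (hv : ContDiffAt ℝ 2 v x) :
    ∑ i, partialDeriv i (radialDeriv v) x * partialDeriv i v x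
      = radialDeriv (gradNormSq v) x / 2 + (gradNormSq v x - radialDeriv v x ^ 2) / ‖x‖ := by
  have hx0 : ‖x‖ ≠ 0 := norm_ne_zero_iff.mpr hx
  have hsplit (i : Fin d) : partialDeriv i (radialDeriv v) x * partialDeriv i v x
      = (partialDeriv i v x * ∑ j, x j * partialDeriv i (partialDeriv j v) x) / ‖x‖
        + partialDeriv i v x ^ 2 / ‖x‖
        - radialDeriv v x / ‖x‖ ^ 2 * (x i * partialDeriv i v x) := by
    rw [eq_div_of_mul_eq hx0 ((mul_comm _ _).trans (norm_mul_partialDeriv_radialDeriv hx hv i))]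
    field_simp
    ring
  rw [Finset.sum_congr rfl fun i _ => hsplit i, Finset.sum_sub_distrib, Finset.sum_add_distrib,
    ← Finset.mul_sum, ← norm_mul_radialDeriv hx, ← Finset.sum_div, ← Finset.sum_div,
    radialDeriv_gradNormSq hv, gradNormSq]
  field_simp
  ring

end RadialCalculus

/-! ### The Morawetz identity -/

section Morawetz

open Filter Topology

variable {d : ℕ}

/-- The radial derivative corrected by half the mean curvature of the spheres,
`∂ᵣv + (d - 1) / (2|x|) v = |x|^{-(d-1)/2} ∂ᵣ(|x|^{(d-1)/2} v)`. -/
def correctedRadialDeriv (v : Ed d → ℝ) (y : Ed d) : ℝ :=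
  radialDeriv v y + ((d : ℝ) - 1) / 2 * v y / ‖y‖

/-- The components of the vector field obtained from the multiplier
`w(|x|) * correctedRadialDeriv v`: its divergence is the Morawetz identity. The function `K` is
free and is chosen to cancel the cross terms `v ∂ᵣv`. -/
def morawetzFlux (w : ℝ → ℝ) (K v : Ed d → ℝ) (i : Fin d) (y : Ed d) : ℝ :=
  w ‖y‖ * correctedRadialDeriv v y * partialDeriv i v y
    + y i / ‖y‖ * (K y * v y ^ 2 - w ‖y‖ * gradNormSq v y / 2)

/-- The function `K` of `morawetzFlux` adapted to `-Δ + V - τ` conjugated by `exp (φ |x|)`; the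
additional radial function `h` trades `v²` against `v * correctedRadialDeriv v`. -/
def morawetzPotential (w φ h : ℝ → ℝ) (τ : ℝ) (V : Ed d → ℝ) (y : Ed d) : ℝ :=
  w ‖y‖ / 2 * (τ + deriv φ ‖y‖ ^ 2 - V y) + ((d : ℝ) - 1) / 4 * (w ‖y‖ / ‖y‖ ^ 2) + h ‖y‖

variable {w φ h : ℝ → ℝ} {K V u v : Ed d → ℝ} {x : Ed d} {τ V₂ G : ℝ}

theorem contDiffAt_correctedRadialDeriv (hx : x ≠ 0) (hv : ContDiffAt ℝ 2 v x) :
    ContDiffAt ℝ 1 (correctedRadialDeriv v) x :=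
  (contDiffAt_radialDeriv hv hx).add
    ((contDiffAt_const.mul (hv.of_le one_le_two)).div (contDiffAt_norm ℝ hx)
      (norm_ne_zero_iff.mpr hx))

theorem sum_partialDeriv_mul_correctedRadialDeriv_mul (hx : x ≠ 0)
    (hw : DifferentiableAt ℝ w ‖x‖) (hv : ContDiffAt ℝ 2 v x) :
    ∑ i, partialDeriv i (fun y => w ‖y‖ * correctedRadialDeriv v y) x * partialDeriv i v x
      = w ‖x‖ * (radialDeriv (gradNormSq v) x / 2
          + (gradNormSq v x - radialDeriv v x ^ 2) / ‖x‖)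
        + ((d : ℝ) - 1) / 2 * w ‖x‖ / ‖x‖ * gradNormSq v x
        + (deriv w ‖x‖ * correctedRadialDeriv v x
          - ((d : ℝ) - 1) / 2 * w ‖x‖ * v x / ‖x‖ ^ 2) * radialDeriv v x := by
  have hr : DifferentiableAt ℝ (radialDeriv v) x :=
    (contDiffAt_radialDeriv hv hx).differentiableAt one_ne_zero
  have hvx : DifferentiableAt ℝ v x := hv.differentiableAt two_ne_zero
  have hx0 : ‖x‖ ≠ 0 := norm_ne_zero_iff.mpr hx
  have hquot : HasDerivAt (fun r => ((d : ℝ) - 1) / 2 * w r / r) _ ‖x‖ :=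
    (hw.hasDerivAt.const_mul _).div (hasDerivAt_id _) hx0
  have hradial {g : ℝ → ℝ} (hg : DifferentiableAt ℝ g ‖x‖) :
      DifferentiableAt ℝ (fun y : Ed d => g ‖y‖) x :=
    hg.comp x ((contDiffAt_norm ℝ hx (n := 1)).differentiableAt one_ne_zero)
  have hsplit : (fun y => w ‖y‖ * correctedRadialDeriv v y)
      = fun y => w ‖y‖ * radialDeriv v y + ((d : ℝ) - 1) / 2 * w ‖y‖ / ‖y‖ * v y := by
    funext y
    rw [correctedRadialDeriv]
    ring
  have hsum (i : Fin d) :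
      partialDeriv i (fun y => w ‖y‖ * correctedRadialDeriv v y) x * partialDeriv i v x
        = w ‖x‖ * (partialDeriv i (radialDeriv v) x * partialDeriv i v x)
          + radialDeriv v x * (partialDeriv i (fun y => w ‖y‖) x * partialDeriv i v x)
          + ((d : ℝ) - 1) / 2 * w ‖x‖ / ‖x‖ * partialDeriv i v x ^ 2
          + v x * (partialDeriv i (fun y => ((d : ℝ) - 1) / 2 * w ‖y‖ / ‖y‖) x
            * partialDeriv i v x) := by
    rw [hsplit, partialDeriv_add ((hradial hw).fun_mul hr)
      ((hradial hquot.differentiableAt).fun_mul hvx), partialDeriv_mul (hradial hw) hr,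
      partialDeriv_mul (hradial hquot.differentiableAt) hvx]
    ring
  rw [Finset.sum_congr rfl fun i _ => hsum i]
  simp only [Finset.sum_add_distrib, ← Finset.mul_sum, sum_partialDeriv_radialDeriv_mul hx hv,
    sum_partialDeriv_comp_norm_mul hx hw, sum_partialDeriv_comp_norm_mul hx hquot.differentiableAt,
    hquot.deriv, correctedRadialDeriv, ← gradNormSq.eq_def]
  field_simp
  ring

theorem radialDeriv_mul_sq_sub_mul_gradNormSq (hx : x ≠ 0) (hw : DifferentiableAt ℝ w ‖x‖)
    (hK : DifferentiableAt ℝ K x) (hv : ContDiffAt ℝ 2 v x) :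
    radialDeriv (fun y => K y * v y ^ 2 - w ‖y‖ * gradNormSq v y / 2) x
      = radialDeriv K x * v x ^ 2 + 2 * K x * (v x * radialDeriv v x)
        - (deriv w ‖x‖ * gradNormSq v x + w ‖x‖ * radialDeriv (gradNormSq v) x) / 2 := by
  have hvx : DifferentiableAt ℝ v x := hv.differentiableAt two_ne_zero
  have hgs : DifferentiableAt ℝ (gradNormSq v) x :=
    (contDiffAt_gradNormSq hv).differentiableAt one_ne_zero
  have hw' : DifferentiableAt ℝ (fun r => -(w r / 2)) ‖x‖ := (hw.div_const 2).fun_neg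
  have hwx : DifferentiableAt ℝ (fun y : Ed d => -(w ‖y‖ / 2)) x :=
    hw'.comp x ((contDiffAt_norm ℝ hx (n := 1)).differentiableAt one_ne_zero)
  have hsplit : (fun y => K y * v y ^ 2 - w ‖y‖ * gradNormSq v y / 2)
      = fun y => K y * (v y * v y) + -(w ‖y‖ / 2) * gradNormSq v y := by
    funext y
    ring
  rw [hsplit, radialDeriv_add (hK.fun_mul (hvx.fun_mul hvx)) (hwx.fun_mul hgs),
    radialDeriv_mul hK (hvx.fun_mul hvx), radialDeriv_mul hvx hvx, radialDeriv_mul hwx hgs,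
    radialDeriv_comp_norm hx hw', deriv.fun_neg, deriv_div_const]
  ring

theorem sum_partialDeriv_morawetzFlux (hx : x ≠ 0) (hw : DifferentiableAt ℝ w ‖x‖)
    (hK : DifferentiableAt ℝ K x) (hv : ContDiffAt ℝ 2 v x) :
    ∑ i, partialDeriv i (morawetzFlux w K v i) x
      = (w ‖x‖ / ‖x‖ - deriv w ‖x‖ / 2) * gradNormSq v x
        + (deriv w ‖x‖ - w ‖x‖ / ‖x‖) * (radialDeriv v x * correctedRadialDeriv v x)
        + w ‖x‖ * correctedRadialDeriv v x * realLaplacian v x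
        + (((d : ℝ) - 1) / ‖x‖ * K x + radialDeriv K x) * v x ^ 2
        + 2 * K x * (v x * radialDeriv v x) := by
  have hwx : DifferentiableAt ℝ (fun y : Ed d => w ‖y‖) x :=
    hw.comp x ((contDiffAt_norm ℝ hx (n := 1)).differentiableAt one_ne_zero)
  have hmul : DifferentiableAt ℝ (fun y => w ‖y‖ * correctedRadialDeriv v y) x :=
    hwx.fun_mul ((contDiffAt_correctedRadialDeriv hx hv).differentiableAt one_ne_zero)
  have hcoord (i : Fin d) : DifferentiableAt ℝ (fun y : Ed d => y i / ‖y‖) x :=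
    ((contDiff_coord i (n := 1)).contDiffAt.div (contDiffAt_norm ℝ hx)
      (norm_ne_zero_iff.mpr hx)).differentiableAt one_ne_zero
  have hgs : DifferentiableAt ℝ (fun y => w ‖y‖ * gradNormSq v y) x :=
    hwx.fun_mul ((contDiffAt_gradNormSq hv).differentiableAt one_ne_zero)
  have hgs2 : DifferentiableAt ℝ (fun y => w ‖y‖ * gradNormSq v y / 2) x  := by
    simpa only [div_eq_mul_inv] using hgs.mul_const (2⁻¹ : ℝ)
  have hquad : DifferentiableAt ℝ (fun y => K y * v y ^ 2 - w ‖y‖ * gradNormSq v y / 2) x :=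
    (hK.fun_mul ((hv.differentiableAt two_ne_zero).fun_pow 2)).fun_sub hgs2
  unfold morawetzFlux
  simp only [partialDeriv_add (hmul.fun_mul (differentiableAt_partialDeriv hv _))
    ((hcoord _).fun_mul hquad), Finset.sum_add_distrib]
  rw [sum_partialDeriv_mul_partialDeriv hmul hv, sum_partialDeriv_coord_div_norm_mul hx hquad,
    sum_partialDeriv_mul_correctedRadialDeriv_mul hx hw hv,
    radialDeriv_mul_sq_sub_mul_gradNormSq hx hw hK hv, correctedRadialDeriv]
  field_simp
  ring

theorem morawetzPotential_eq (w φ h : ℝ → ℝ) (τ : ℝ) (V : Ed d → ℝ) :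
    morawetzPotential w φ h τ V
      = fun y => (fun r => w r / 2 * (τ + deriv φ r ^ 2) + ((d : ℝ) - 1) / 4 * (w r / r ^ 2) + h r)
          ‖y‖ + -(w ‖y‖ / 2) * V y := by
  funext y
  rw [morawetzPotential]
  ring

theorem contDiffAt_morawetzPotential (hx : x ≠ 0) (hw : ContDiffAt ℝ 1 w ‖x‖)
    (hφ : ContDiffAt ℝ 2 φ ‖x‖) (hh : ContDiffAt ℝ 1 h ‖x‖) (hV : ContDiffAt ℝ 1 V x) :
    ContDiffAt ℝ 1 (morawetzPotential w φ h τ V) x := by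
  have hφ' : ContDiffAt ℝ 1 (deriv φ) ‖x‖ := hφ.derivWithin (by norm_num)
  have hr : ContDiffAt ℝ 1 (fun r : ℝ => r ^ 2) ‖x‖ := contDiffAt_id.pow 2
  rw [morawetzPotential_eq]
  exact (contDiffAt_comp_norm ((((hw.div_const 2).mul (contDiffAt_const.add (hφ'.pow 2))).add
    (contDiffAt_const.mul (hw.div hr (pow_ne_zero 2 (norm_ne_zero_iff.mpr hx))))).add hh) hx).add
    ((contDiffAt_comp_norm (hw.div_const 2).neg hx).mul hV)

theorem radialDeriv_morawetzPotential (hx : x ≠ 0) (hw : DifferentiableAt ℝ w ‖x‖)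
    (hφ : ContDiffAt ℝ 2 φ ‖x‖) (hh : DifferentiableAt ℝ h ‖x‖) (hV : DifferentiableAt ℝ V x) :
    radialDeriv (morawetzPotential w φ h τ V) x
      = deriv w ‖x‖ / 2 * (τ + deriv φ ‖x‖ ^ 2 - V x)
        + w ‖x‖ / 2 * (2 * deriv φ ‖x‖ * deriv (deriv φ) ‖x‖ - radialDeriv V x)
        + ((d : ℝ) - 1) / 4 * (deriv w ‖x‖ / ‖x‖ ^ 2 - 2 * w ‖x‖ / ‖x‖ ^ 3)
        + deriv h ‖x‖ := by
  have hx0 : ‖x‖ ≠ 0 := norm_ne_zero_iff.mpr hx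
  have hφ' : ContDiffAt ℝ 1 (deriv φ) ‖x‖ := hφ.derivWithin (by norm_num)
  have hnorm : DifferentiableAt ℝ (fun y : Ed d => ‖y‖) x :=
    (contDiffAt_norm ℝ hx (n := 1)).differentiableAt one_ne_zero
  have hradial : HasDerivAt (fun r => w r / 2 * (τ + deriv φ r ^ 2)
      + ((d : ℝ) - 1) / 4 * (w r / r ^ 2) + h r) _ ‖x‖ :=
    (((hw.hasDerivAt.div_const 2).fun_mul
      (((hφ'.differentiableAt one_ne_zero).hasDerivAt.fun_pow 2).const_add τ)).fun_add
      ((hw.hasDerivAt.fun_div ((hasDerivAt_id ‖x‖).fun_pow 2) (pow_ne_zero 2 hx0)).const_mul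
        (((d : ℝ) - 1) / 4))).fun_add hh.hasDerivAt
  have hw' : DifferentiableAt ℝ (fun r => -(w r / 2)) ‖x‖ := (hw.div_const 2).fun_neg
  have hwx : DifferentiableAt ℝ (fun y : Ed d => -(w ‖y‖ / 2)) x := hw'.comp x hnorm
  have hradialx : DifferentiableAt ℝ (fun y : Ed d => (fun r => w r / 2 * (τ + deriv φ r ^ 2)
      + ((d : ℝ) - 1) / 4 * (w r / r ^ 2) + h r) ‖y‖) x := hradial.differentiableAt.comp x hnorm
  rw [morawetzPotential_eq, radialDeriv_add hradialx (hwx.fun_mul hV),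
    radialDeriv_comp_norm hx hradial.differentiableAt, hradial.deriv,
    radialDeriv_mul hwx hV, radialDeriv_comp_norm hx hw', deriv.fun_neg, deriv_div_const]
  simp only [id, Nat.cast_ofNat, Nat.add_one_sub_one, pow_one, mul_one]
  field_simp
  ring

theorem le_sum_partialDeriv_morawetzFlux (hx : x ≠ 0) (hw : ContDiffAt ℝ 1 w ‖x‖)
    (hφ : ContDiffAt ℝ 2 φ ‖x‖) (hh : ContDiffAt ℝ 1 h ‖x‖) (hV : ContDiffAt ℝ 1 V x)
    (hv : ContDiffAt ℝ 2 v x) (hww : deriv w ‖x‖ / 2 ≤ w ‖x‖ / ‖x‖)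
    (hΔ : realLaplacian v x = G + 2 * deriv φ ‖x‖ * correctedRadialDeriv v x
      + (deriv (deriv φ) ‖x‖ - deriv φ ‖x‖ ^ 2 + V x + V₂ - τ) * v x) :
    (2 * deriv φ ‖x‖ * w ‖x‖ + deriv w ‖x‖ / 2) * correctedRadialDeriv v x ^ 2
        + (w ‖x‖ * (V₂ + deriv (deriv φ) ‖x‖) + 2 * h ‖x‖) * (v x * correctedRadialDeriv v x)
        + (deriv w ‖x‖ / 2 * (τ + deriv φ ‖x‖ ^ 2 - V x)
          + w ‖x‖ * (deriv φ ‖x‖ * deriv (deriv φ) ‖x‖ - radialDeriv V x / 2) + deriv h ‖x‖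
          - (w ‖x‖ / ‖x‖ - deriv w ‖x‖ / 2) / (4 * ‖x‖ ^ 2)) * v x ^ 2
        + w ‖x‖ * correctedRadialDeriv v x * G
      ≤ ∑ i, partialDeriv i (morawetzFlux w (morawetzPotential w φ h τ V) v i) x := by
  have hx0 : ‖x‖ ≠ 0 := norm_ne_zero_iff.mpr hx
  have hw1 : DifferentiableAt ℝ w ‖x‖ := hw.differentiableAt one_ne_zero
  have hremainder : 0 ≤ (w ‖x‖ / ‖x‖ - deriv w ‖x‖ / 2)
      * (gradNormSq v x - radialDeriv v x ^ 2 + ((d : ℝ) - 2) ^ 2 / (4 * ‖x‖ ^ 2) * v x ^ 2) :=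
    mul_nonneg (sub_nonneg.mpr hww) (add_nonneg
      (sub_nonneg.mpr (radialDeriv_sq_le_gradNormSq hx v)) (by positivity))
  refine le_of_sub_nonneg (hremainder.trans_eq ?_)
  rw [sum_partialDeriv_morawetzFlux hx hw1
      ((contDiffAt_morawetzPotential hx hw hφ hh hV).differentiableAt one_ne_zero) hv,
    radialDeriv_morawetzPotential hx hw1 hφ (hh.differentiableAt one_ne_zero)
      (hV.differentiableAt one_ne_zero), hΔ, morawetzPotential, correctedRadialDeriv]
  field_simp
  ring

theorem contDiffAt_morawetzFlux (hx : x ≠ 0) (hw : ContDiffAt ℝ 1 w ‖x‖)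
    (hK : ContDiffAt ℝ 1 K x) (hv : ContDiffAt ℝ 2 v x) (i : Fin d) :
    ContDiffAt ℝ 1 (morawetzFlux w K v i) x := by
  have hwx : ContDiffAt ℝ 1 (fun y : Ed d => w ‖y‖) x := contDiffAt_comp_norm hw hx
  have hgs : ContDiffAt ℝ 1 (fun y => w ‖y‖ * gradNormSq v y / 2) x :=
    (hwx.mul (contDiffAt_gradNormSq hv)).div_const 2
  exact ((hwx.mul (contDiffAt_correctedRadialDeriv hx hv)).mul
    (contDiffAt_partialDeriv hv (by norm_num) i)).add
    (((contDiff_coord i).contDiffAt.div (contDiffAt_norm ℝ hx) (norm_ne_zero_iff.mpr hx)).mul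
      ((hK.mul ((hv.of_le one_le_two).pow 2)).sub hgs))

theorem abs_radialDeriv_mul_partialDeriv_le (hx : x ≠ 0) (i : Fin d) :
    |radialDeriv v x * partialDeriv i v x| ≤ gradNormSq v x := by
  refine abs_le_of_sq_le_sq ?_ (gradNormSq_nonneg v x)
  rw [mul_pow, sq (gradNormSq v x)]
  exact mul_le_mul (radialDeriv_sq_le_gradNormSq hx v) (partialDeriv_sq_le_gradNormSq v x i)
    (sq_nonneg _) (gradNormSq_nonneg v x)

theorem abs_mul_partialDeriv_le (c : ℝ) (i : Fin d) :
    |c * partialDeriv i v x| ≤ (c ^ 2 + gradNormSq v x) / 2 := by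
  have hpartial := partialDeriv_sq_le_gradNormSq v x i
  exact abs_le.mpr ⟨by nlinarith [sq_nonneg (c + partialDeriv i v x)],
    by nlinarith [sq_nonneg (c - partialDeriv i v x)]⟩

theorem abs_morawetzFlux_le {A : ℝ} (hx : x ≠ 0) (hw : 0 ≤ w ‖x‖) (hwA : w ‖x‖ ≤ A)
    (hwA' : w ‖x‖ / ‖x‖ ≤ A) (hK : |K x| ≤ A) (i : Fin d) :
    |morawetzFlux w K v i x| ≤ A * (d + 2) * (v x ^ 2 + gradNormSq v x) := by
  have hA : 0 ≤ A := hw.trans hwA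
  have hd : 0 ≤ ((d : ℝ) - 1) / 2 :=
    div_nonneg (sub_nonneg.mpr (Nat.one_le_cast.mpr i.pos)) zero_le_two
  have hg : 0 ≤ gradNormSq v x := gradNormSq_nonneg v x
  have hradial : |w ‖x‖ * (radialDeriv v x * partialDeriv i v x)| ≤ A * gradNormSq v x := by
    rw [abs_mul, abs_of_nonneg hw]
    exact mul_le_mul hwA (abs_radialDeriv_mul_partialDeriv_le hx i) (abs_nonneg _) hA
  have hcurvature : |((d : ℝ) - 1) / 2 * (w ‖x‖ / ‖x‖ * (v x * partialDeriv i v x))|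
      ≤ ((d : ℝ) - 1) / 2 * (A * ((v x ^ 2 + gradNormSq v x) / 2)) := by
    rw [abs_mul, abs_of_nonneg hd, abs_mul, abs_of_nonneg (div_nonneg hw (norm_nonneg x))]
    exact mul_le_mul_of_nonneg_left
      (mul_le_mul hwA' (abs_mul_partialDeriv_le (v x) i) (abs_nonneg _) hA) hd
  have hquad : |x i / ‖x‖ * (K x * v x ^ 2 - w ‖x‖ * gradNormSq v x / 2)|
      ≤ A * (v x ^ 2 + gradNormSq v x) := by
    have hcoord : |x i / ‖x‖| ≤ 1 := by
      rw [abs_div, abs_norm]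
      exact div_le_one_of_le₀ (PiLp.norm_apply_le x i) (norm_nonneg x)
    have hK' := abs_le.mp hK
    rw [abs_mul]
    refine (mul_le_of_le_one_left (abs_nonneg _) hcoord).trans (abs_le.mpr ⟨?_, ?_⟩) <;>
      nlinarith [sq_nonneg (v x), mul_nonneg hw hg]
  have hsplit : morawetzFlux w K v i x = w ‖x‖ * (radialDeriv v x * partialDeriv i v x)
      + ((d : ℝ) - 1) / 2 * (w ‖x‖ / ‖x‖ * (v x * partialDeriv i v x))
      + x i / ‖x‖ * (K x * v x ^ 2 - w ‖x‖ * gradNormSq v x / 2) := by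
    rw [morawetzFlux, correctedRadialDeriv]
    ring
  have hAv : 0 ≤ A * v x ^ 2 := by positivity
  have hAg : 0 ≤ A * gradNormSq v x := by positivity
  have hdA : 0 ≤ d * (A * (v x ^ 2 + gradNormSq v x)) := by positivity
  rw [hsplit]
  linarith [abs_add_three (w ‖x‖ * (radialDeriv v x * partialDeriv i v x))
    (((d : ℝ) - 1) / 2 * (w ‖x‖ / ‖x‖ * (v x * partialDeriv i v x)))
    (x i / ‖x‖ * (K x * v x ^ 2 - w ‖x‖ * gradNormSq v x / 2))]

theorem realLaplacian_exp_mul (hx : x ≠ 0) (hφ : ContDiffAt ℝ 2 φ ‖x‖) (hu : ContDiffAt ℝ 2 u x) :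
    realLaplacian (fun y => Real.exp (φ ‖y‖) * u y) x
      = Real.exp (φ ‖x‖) * realLaplacian u x
        + 2 * deriv φ ‖x‖ * correctedRadialDeriv (fun y => Real.exp (φ ‖y‖) * u y) x
        + (deriv (deriv φ) ‖x‖ - deriv φ ‖x‖ ^ 2) * (Real.exp (φ ‖x‖) * u x) := by
  have hexp : ContDiffAt ℝ 2 (fun r => Real.exp (φ r)) ‖x‖ := hφ.exp
  have hexpx : ContDiffAt ℝ 2 (fun y : Ed d => Real.exp (φ ‖y‖)) x := contDiffAt_comp_norm hexp hx
  have hd1 {r : ℝ} (hr : DifferentiableAt ℝ φ r) :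
      deriv (fun r => Real.exp (φ r)) r = Real.exp (φ r) * deriv φ r := hr.hasDerivAt.exp.deriv
  have hd2 : deriv (deriv fun r => Real.exp (φ r)) ‖x‖
      = Real.exp (φ ‖x‖) * (deriv φ ‖x‖ ^ 2 + deriv (deriv φ) ‖x‖) := by
    have hev : deriv (fun r => Real.exp (φ r)) =ᶠ[𝓝 ‖x‖] fun r => Real.exp (φ r) * deriv φ r := by
      filter_upwards [hφ.eventually (by simp)] with r hr using hd1 (hr.differentiableAt two_ne_zero)
    have hφ' : ContDiffAt ℝ 1 (deriv φ) ‖x‖ := hφ.derivWithin (by norm_num)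
    rw [hev.deriv_eq, deriv_fun_mul (hexp.differentiableAt two_ne_zero)
      (hφ'.differentiableAt one_ne_zero), hd1 (hφ.differentiableAt two_ne_zero)]
    ring
  have hd1x := hd1 (hφ.differentiableAt two_ne_zero)
  have hdexp := hexp.differentiableAt two_ne_zero
  rw [realLaplacian_mul hexpx hu, sum_partialDeriv_comp_norm_mul hx hdexp,
    realLaplacian_comp_norm hx hexp, correctedRadialDeriv,
    radialDeriv_mul (hexpx.differentiableAt two_ne_zero) (hu.differentiableAt two_ne_zero),
    radialDeriv_comp_norm hx hdexp, hd1x, hd2]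
  ring

end Morawetz

/-! ### The Carleman weights -/

/-- Admissible constants for the weights below; they depend only on `τ₀`, `α`, `a` and `γ`.
Beyond the radius `R₁` the potentials are small; `b` and `β` govern the exponential weight, whose
exponent has derivative `b / ((1 + r) (1 + β r))`; and `K / √τ₀`, `K / √τ` are the length scales of
the multiplier. -/
structure CarlemanParameters (τ₀ α a γ : ℝ) where
  (η R₁ b β K : ℝ)
  τ₀_pos : 0 < τ₀
  α_pos : 0 < α
  α_le_half : α ≤ 1 / 2
  α_le_half_γ : α ≤ γ / 2
  a_pos : 0 < a
  η_le : 32 * (a * (6 / α) * η) ≤ τ₀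
  η_sq_le : 192 * (a * (6 / α) * η) ^ 2 ≤ τ₀
  R₁_pos : 0 < R₁
  rpow_le_η : ∀ r, R₁ ≤ r → (1 + r) ^ (-(γ / 2)) ≤ η
  R₁_le_b : 2 * (1 + R₁) ≤ b
  a_le_b_sq : 16 * (1 + R₁) ^ 4 * (a + a ^ 2) ≤ b ^ 2
  inv_τ₀_le_b : 24 * (4608 * (6 / α) / τ₀) ^ 2 ≤ b
  β_pos : 0 < β
  β_le_half : β ≤ 1 / 2
  β_mul_R₁_le : β * R₁ ≤ 1
  β_mul_b_le : β * b ≤ 1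
  b_sq_mul_β_le : 128 * (6 / α) * b ^ 2 * β ≤ τ₀
  eight_le_K : 8 ≤ K
  inv_α_le_K : 32 / α ≤ K
  sqrt_τ₀_le_K : √τ₀ ≤ K
  b_sq_le_K : 128 * (6 / α) * b ^ 2 ≤ K * √τ₀

theorem exists_pos_mul_le_and_mul_sq_le {A t : ℝ} (hA : 0 < A) (ht : 0 < t) :
    ∃ η : ℝ, 0 < η ∧ 32 * (A * η) ≤ t ∧ 192 * (A * η) ^ 2 ≤ t := by
  have := Real.sqrt_pos.mpr ht
  refine ⟨min (t / (32 * A)) (√t / (14 * A)), by positivity, ?_, ?_⟩ <;>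
    set η := min (t / (32 * A)) (√t / (14 * A)) with hη
  · have := (le_div_iff₀ (by positivity)).mp (hη ▸ min_le_left (t / (32 * A)) (√t / (14 * A)))
    linarith
  · have := (le_div_iff₀ (by positivity)).mp (hη ▸ min_le_right (t / (32 * A)) (√t / (14 * A)))
    have : 0 ≤ η := by positivity
    have hsq : (14 * (A * η)) ^ 2 ≤ √t ^ 2 := by gcongr; linarith
    rw [Real.sq_sqrt ht.le] at hsq
    nlinarith [sq_nonneg (A * η)]

theorem exists_forall_one_add_rpow_neg_le {s η : ℝ} (hs : 0 < s) (hη : 0 < η) :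
    ∃ R : ℝ, 0 < R ∧ ∀ r, R ≤ r → (1 + r) ^ (-s) ≤ η := by
  have htendsto := (tendsto_rpow_neg_atTop hs).comp
    (Filter.tendsto_atTop_add_const_left Filter.atTop (1 : ℝ) Filter.tendsto_id)
  obtain ⟨R, hR⟩ := (htendsto.eventually (gt_mem_nhds hη)).exists_forall_of_atTop
  exact ⟨max R 1, by positivity, fun r hr => (hR r ((le_max_left _ _).trans hr)).le⟩

namespace CarlemanParameters

variable {τ₀ α a γ : ℝ}

theorem nonempty (hτ₀ : 0 < τ₀) (hα : 0 < α) (hα_half : α ≤ 1 / 2) (hαγ : α ≤ γ / 2) (ha : 0 < a) :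
    Nonempty (CarlemanParameters τ₀ α a γ) := by
  have hsqrt : 0 < √τ₀ := Real.sqrt_pos.mpr hτ₀
  obtain ⟨η, hη, hη_le, hη_sq_le⟩ :=
    exists_pos_mul_le_and_mul_sq_le (show 0 < a * (6 / α) by positivity) hτ₀
  obtain ⟨R₁, hR₁, hfar⟩ := exists_forall_one_add_rpow_neg_le (hα.trans_le hαγ) hη
  obtain ⟨b, hb_R₁, hb_a, hb_τ₀⟩ : ∃ b : ℝ, 2 * (1 + R₁) ≤ b ∧
      16 * (1 + R₁) ^ 4 * (a + a ^ 2) ≤ b ∧ 24 * (4608 * (6 / α) / τ₀) ^ 2 ≤ b :=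
    ⟨max (2 * (1 + R₁)) (max (16 * (1 + R₁) ^ 4 * (a + a ^ 2)) (24 * (4608 * (6 / α) / τ₀) ^ 2)),
      by simp, by simp, by simp⟩
  have hb : 1 ≤ b := by linarith
  obtain ⟨β, hβ, hβ_half, hβ_R₁, hβ_b, hβ_τ₀⟩ : ∃ β : ℝ, 0 < β ∧ β ≤ 1 / 2 ∧ β ≤ 1 / R₁ ∧
      β ≤ 1 / b ∧ β ≤ τ₀ / (128 * (6 / α) * b ^ 2) :=
    ⟨min (1 / 2) (min (1 / R₁) (min (1 / b) (τ₀ / (128 * (6 / α) * b ^ 2)))), by positivity,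
      by simp, by simp, by simp, by simp⟩
  obtain ⟨K, hK_8, hK_α, hK_τ₀, hK_b⟩ : ∃ K : ℝ, 8 ≤ K ∧ 32 / α ≤ K ∧ √τ₀ ≤ K ∧
      128 * (6 / α) * b ^ 2 / √τ₀ ≤ K :=
    ⟨max 8 (max (32 / α) (max (√τ₀) (128 * (6 / α) * b ^ 2 / √τ₀))), by simp, by simp, by simp,
      by simp⟩
  rw [le_div_iff₀ (by positivity)] at hβ_R₁ hβ_b hβ_τ₀
  exact ⟨{
    η, R₁, b, β, K
    τ₀_pos := hτ₀, α_pos := hα, α_le_half := hα_half, α_le_half_γ := hαγ, a_pos := ha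
    η_le := hη_le, η_sq_le := hη_sq_le, R₁_pos := hR₁, rpow_le_η := hfar
    R₁_le_b := hb_R₁, a_le_b_sq := by nlinarith, inv_τ₀_le_b := hb_τ₀
    β_pos := hβ, β_le_half := hβ_half, β_mul_R₁_le := hβ_R₁, β_mul_b_le := hβ_b
    b_sq_mul_β_le := by linarith
    eight_le_K := hK_8, inv_α_le_K := hK_α, sqrt_τ₀_le_K := hK_τ₀
    b_sq_le_K := (div_le_iff₀ hsqrt).mp hK_b }⟩

variable (P : CarlemanParameters τ₀ α a γ)

/-- The length scale of `CarlemanParameters.profile`. -/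
def scale : ℝ := P.K / √τ₀

/-- The length scale at which the multiplier is regularised at the origin. -/
def shift (τ : ℝ) : ℝ := P.K / √τ

/-- The bounded increasing function `∫₀ˢ (1 + t / scale)^(-1-α) dt`, the multiplier before its
regularisation at the origin. -/
def profile (s : ℝ) : ℝ := P.scale / α * (1 - (1 + s / P.scale) ^ (-α))

/-- The derivative of `CarlemanParameters.profile`. -/
def profileDeriv (s : ℝ) : ℝ := (1 + s / P.scale) ^ (-1 - α)

/-- The radial factor in front of the corrected radial derivative in the Morawetz multiplier. -/
def multiplier (τ r : ℝ) : ℝ := (r / (r + P.shift τ)) ^ 2 * P.profile (r + P.shift τ)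

/-- The derivative of `CarlemanParameters.multiplier`. -/
def multiplierDeriv (τ r : ℝ) : ℝ :=
  (r / (r + P.shift τ)) ^ 2 * P.profileDeriv (r + P.shift τ)
    + 2 * r * P.shift τ * P.profile (r + P.shift τ) / (r + P.shift τ) ^ 3

/-- The radial function `h` of `morawetzPotential`. Its derivative compensates, near the origin,
the inverse square term of the Morawetz identity, which is negative in dimension two. -/
def correction (τ r : ℝ) : ℝ :=
  √τ / 16 * (r / (r + P.shift τ) * P.profileDeriv (r + P.shift τ))

/-- The derivative of `CarlemanParameters.correction`. -/
def correctionDeriv (τ r : ℝ) : ℝ :=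
  √τ / 16 * (P.shift τ / (r + P.shift τ) ^ 2 * P.profileDeriv (r + P.shift τ)
    - r / (r + P.shift τ)
      * ((1 + α) / (P.scale + (r + P.shift τ)) * P.profileDeriv (r + P.shift τ)))

/-- The exponent of the Carleman weight `exp (exponent |x|)`. -/
def exponent (r : ℝ) : ℝ := P.b / (1 - P.β) * (Real.log (1 + r) - Real.log (1 + P.β * r))

/-- The derivative of `CarlemanParameters.exponent`. -/
def exponentDeriv (r : ℝ) : ℝ := P.b / ((1 + r) * (1 + P.β * r))

/-- The second derivative of `CarlemanParameters.exponent`. -/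
def exponentDeriv₂ (r : ℝ) : ℝ := -P.exponentDeriv r * (1 / (1 + r) + P.β / (1 + P.β * r))

theorem b_pos : 0 < P.b := by linarith [P.R₁_le_b, P.R₁_pos]

theorem K_pos : 0 < P.K := by linarith [P.eight_le_K]

theorem scale_pos : 0 < P.scale := div_pos P.K_pos (Real.sqrt_pos.mpr P.τ₀_pos)

theorem one_le_scale : 1 ≤ P.scale :=
  (one_le_div (Real.sqrt_pos.mpr P.τ₀_pos)).mpr P.sqrt_τ₀_le_K

theorem one_le_six_div_α (P : CarlemanParameters τ₀ α a γ) : 1 ≤ 6 / α :=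
  (one_le_div P.α_pos).mpr (by linarith [P.α_le_half])

variable {τ r s : ℝ}

theorem pos_of_τ₀_le (P : CarlemanParameters τ₀ α a γ) (hτ : τ₀ ≤ τ) : 0 < τ := P.τ₀_pos.trans_le hτ

theorem shift_pos (hτ : τ₀ ≤ τ) : 0 < P.shift τ :=
  div_pos P.K_pos (Real.sqrt_pos.mpr (P.pos_of_τ₀_le hτ))

theorem shift_le_scale (hτ : τ₀ ≤ τ) : P.shift τ ≤ P.scale :=
  div_le_div_of_nonneg_left P.K_pos.le (Real.sqrt_pos.mpr P.τ₀_pos) (Real.sqrt_le_sqrt hτ)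

theorem add_shift_div_scale_le (hτ : τ₀ ≤ τ) (hr : 0 < r) : (r + P.shift τ) / P.scale ≤ 1 + r := by
  rw [div_le_iff₀ P.scale_pos]
  nlinarith [P.shift_le_scale hτ, P.one_le_scale]

theorem one_lt_one_add_div_scale (hs : 0 < s) : 1 < 1 + s / P.scale :=
  lt_add_of_pos_right 1 (div_pos hs P.scale_pos)

theorem profileDeriv_pos (hs : 0 < s) : 0 < P.profileDeriv s :=
  Real.rpow_pos_of_pos (zero_lt_one.trans (P.one_lt_one_add_div_scale hs)) _

theorem profileDeriv_le_one (hs : 0 < s) : P.profileDeriv s ≤ 1 :=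
  Real.rpow_le_one_of_one_le_of_nonpos (P.one_lt_one_add_div_scale hs).le (by linarith [P.α_pos])

theorem profile_nonneg (hs : 0 < s) : 0 ≤ P.profile s := by
  have hle : (1 + s / P.scale) ^ (-α) ≤ 1 :=
    Real.rpow_le_one_of_one_le_of_nonpos (P.one_lt_one_add_div_scale hs).le (by linarith [P.α_pos])
  exact mul_nonneg (div_nonneg P.scale_pos.le P.α_pos.le) (by linarith)

theorem profile_le (hs : 0 < s) : P.profile s ≤ P.scale / α := by
  have hpow : 0 ≤ (1 + s / P.scale) ^ (-α) :=
    Real.rpow_nonneg (zero_le_one.trans (P.one_lt_one_add_div_scale hs).le) _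
  exact mul_le_of_le_one_right (div_nonneg P.scale_pos.le P.α_pos.le) (by linarith)

theorem mul_profileDeriv_le_profile (hs : 0 < s) : s * P.profileDeriv s ≤ P.profile s := by
  have hR := P.scale_pos
  have hα := P.α_pos
  have hX : 0 < 1 + s / P.scale := zero_lt_one.trans (P.one_lt_one_add_div_scale hs)
  unfold profile profileDeriv
  have hbernoulli : 1 + (1 + α) * (s / P.scale) ≤ (1 + s / P.scale) ^ (1 + α) :=
    one_add_mul_self_le_rpow_one_add (by linarith) (by linarith)
  set X := 1 + s / P.scale with hX_def
  have hXα : X ^ (-α) = X * X ^ (-1 - α) := by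
    rw [show -α = 1 + (-1 - α) by ring, Real.rpow_add hX, Real.rpow_one]
  have hone : X ^ (1 + α) * X ^ (-1 - α) = 1 := by
    rw [← Real.rpow_add hX]; simp
  have hs_eq : s = P.scale * (X - 1) := by rw [hX_def]; field_simp; ring
  have hkey : (X - 1) * X ^ (-1 - α) ≤ 1 / α * (1 - X ^ (-α)) := by
    rw [one_div_mul_eq_div, le_div_iff₀ hα, hXα]
    have := mul_le_mul_of_nonneg_right hbernoulli (Real.rpow_nonneg hX.le (-1 - α))
    rw [hone] at this
    linarith
  calc s * X ^ (-1 - α) = P.scale * ((X - 1) * X ^ (-1 - α)) := by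
        nth_rewrite 1 [hs_eq]; ring
    _ ≤ P.scale * (1 / α * (1 - X ^ (-α))) := by gcongr
    _ = P.scale / α * (1 - X ^ (-α)) := by ring

theorem profile_le_mul_profileDeriv (hs : 0 < s) :
    P.profile s ≤ 1 / α * s * (1 + s / P.scale) ^ α * P.profileDeriv s := by
  have hR := P.scale_pos
  have hα := P.α_pos
  have hX := P.one_lt_one_add_div_scale hs
  unfold profile profileDeriv
  set X := 1 + s / P.scale with hX_def
  have hX0 : 0 < X := zero_lt_one.trans hX
  have hmul : X ^ α * X ^ (-1 - α) = 1 / X := by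
    rw [← Real.rpow_add hX0, show α + (-1 - α) = -1 by ring, Real.rpow_neg_one, one_div]
  have hinv : 1 / X ≤ X ^ (-α) := by
    rw [one_div, ← Real.rpow_neg_one]
    exact Real.rpow_le_rpow_of_exponent_le hX.le (by linarith [P.α_le_half])
  have hs_eq : s = P.scale * (X - 1) := by rw [hX_def]; field_simp; ring
  calc P.scale / α * (1 - X ^ (-α)) ≤ P.scale / α * (1 - 1 / X) := by gcongr
    _ = 1 / α * (P.scale * (X - 1)) * (1 / X) := by field_simp
    _ = 1 / α * s * X ^ α * X ^ (-1 - α) := by rw [← hs_eq, mul_assoc _ (X ^ α), hmul]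

theorem rpow_le_profileDeriv (hτ : τ₀ ≤ τ) (hr : 0 < r) :
    (2 * (1 + r)) ^ (-1 - α) ≤ P.profileDeriv (r + P.shift τ) := by
  have hX := P.one_lt_one_add_div_scale (add_pos hr (P.shift_pos hτ))
  exact Real.rpow_le_rpow_of_nonpos (by linarith)
    (by linarith [P.add_shift_div_scale_le hτ hr]) (by linarith [P.α_pos])

theorem one_add_div_scale_rpow_le (hτ : τ₀ ≤ τ) (hr : 0 < r) :
    (1 + (r + P.shift τ) / P.scale) ^ α ≤ 2 * (1 + r) ^ α := by
  have hX := P.one_lt_one_add_div_scale (add_pos hr (P.shift_pos hτ))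
  calc (1 + (r + P.shift τ) / P.scale) ^ α ≤ (2 * (1 + r)) ^ α :=
        Real.rpow_le_rpow (by linarith) (by linarith [P.add_shift_div_scale_le hτ hr]) P.α_pos.le
    _ = 2 ^ α * (1 + r) ^ α := Real.mul_rpow zero_le_two (by linarith)
    _ ≤ 2 * (1 + r) ^ α := by
        have : (2 : ℝ) ^ α ≤ 2 :=
          Real.rpow_le_self_of_one_le one_le_two (by linarith [P.α_le_half])
        gcongr

theorem multiplier_nonneg (hτ : τ₀ ≤ τ) (hr : 0 < r) : 0 ≤ P.multiplier τ r :=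
  mul_nonneg (sq_nonneg _) (P.profile_nonneg (add_pos hr (P.shift_pos hτ)))

theorem multiplier_le (hτ : τ₀ ≤ τ) (hr : 0 < r) : P.multiplier τ r ≤ P.scale / α := by
  have hδ := P.shift_pos hτ
  have hle : (r / (r + P.shift τ)) ^ 2 ≤ 1 :=
    pow_le_one₀ (by positivity) ((div_le_one (by positivity)).mpr (by linarith))
  exact (mul_le_of_le_one_left (P.profile_nonneg (by positivity)) hle).trans
    (P.profile_le (by positivity))

theorem multiplier_div_sq_le (hτ : τ₀ ≤ τ) (hr : 0 < r) :
    P.multiplier τ r / r ^ 2 ≤ P.scale / α / P.shift τ ^ 2 := by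
  have hδ := P.shift_pos hτ
  have hs : 0 < r + P.shift τ := by positivity
  have hdiv : P.multiplier τ r / r ^ 2 = P.profile (r + P.shift τ) / (r + P.shift τ) ^ 2 := by
    unfold multiplier; field_simp
  rw [hdiv]
  exact div_le_div₀ (div_nonneg P.scale_pos.le P.α_pos.le) (P.profile_le hs) (by positivity)
    (by gcongr; linarith)

theorem mul_profileDeriv_le_multiplierDeriv (hτ : τ₀ ≤ τ) (hr : 0 < r) :
    r / (r + P.shift τ) * P.profileDeriv (r + P.shift τ) ≤ P.multiplierDeriv τ r := by
  have hδ := P.shift_pos hτ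
  have hs : 0 < r + P.shift τ := by positivity
  have ho := P.profileDeriv_pos hs
  have hso := P.mul_profileDeriv_le_profile hs
  unfold multiplierDeriv
  set δ := P.shift τ
  calc r / (r + δ) * P.profileDeriv (r + δ)
      ≤ r / (r + δ) * P.profileDeriv (r + δ) * ((r + 2 * δ) / (r + δ)) :=
        le_mul_of_one_le_right (by positivity) ((one_le_div hs).mpr (by linarith))
    _ = (r / (r + δ)) ^ 2 * P.profileDeriv (r + δ)
          + 2 * r * δ * ((r + δ) * P.profileDeriv (r + δ)) / (r + δ) ^ 3 := by field_simp
    _ ≤ _ := by gcongr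

theorem multiplierDeriv_pos (hτ : τ₀ ≤ τ) (hr : 0 < r) : 0 < P.multiplierDeriv τ r := by
  have hδ := P.shift_pos hτ
  have ho := P.profileDeriv_pos (add_pos hr hδ)
  exact lt_of_lt_of_le (by positivity) (P.mul_profileDeriv_le_multiplierDeriv hτ hr)

theorem multiplier_div_sub_multiplierDeriv_div_two (hτ : τ₀ ≤ τ) (hr : 0 < r) :
    P.multiplier τ r / r - P.multiplierDeriv τ r / 2
      = r ^ 2 / (r + P.shift τ) ^ 3
        * (P.profile (r + P.shift τ) - (r + P.shift τ) * P.profileDeriv (r + P.shift τ) / 2) := by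
  have hs : r + P.shift τ ≠ 0 := (add_pos hr (P.shift_pos hτ)).ne'
  unfold multiplier multiplierDeriv
  field_simp
  ring

theorem multiplierDeriv_div_two_le (hτ : τ₀ ≤ τ) (hr : 0 < r) :
    P.multiplierDeriv τ r / 2 ≤ P.multiplier τ r / r := by
  have hs : 0 < r + P.shift τ := add_pos hr (P.shift_pos hτ)
  have hnonneg : 0 ≤ P.multiplier τ r / r - P.multiplierDeriv τ r / 2 := by
    rw [P.multiplier_div_sub_multiplierDeriv_div_two hτ hr]
    exact mul_nonneg (by positivity)
      (by linarith [P.mul_profileDeriv_le_profile hs, P.profile_nonneg hs])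
  linarith

theorem multiplier_le_mul_multiplierDeriv (hτ : τ₀ ≤ τ) (hr : 0 < r) :
    P.multiplier τ r ≤ 6 / α * r * (1 + r) ^ α * P.multiplierDeriv τ r := by
  have hδ := P.shift_pos hτ
  have hα := P.α_pos
  have hs : 0 < r + P.shift τ := by positivity
  have hY := Real.one_le_rpow (P.one_lt_one_add_div_scale hs).le hα.le
  have hY2 := P.one_add_div_scale_rpow_le hτ hr
  have ho := P.profile_nonneg hs
  have hoY := P.profile_le_mul_profileDeriv hs
  have hw' := (P.multiplierDeriv_pos hτ hr).le
  set δ := P.shift τ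
  set Y := (1 + (r + δ) / P.scale) ^ α
  have hcoef : 1 / 2 ≤ 1 / α * Y := by
    have : 1 ≤ 1 / α := (one_le_div hα).mpr (by linarith [P.α_le_half])
    nlinarith
  calc P.multiplier τ r
      = (r / (r + δ)) ^ 3 * P.profile (r + δ)
          + 1 / 2 * r * (2 * r * δ * P.profile (r + δ) / (r + δ) ^ 3) := by
        rw [show P.multiplier τ r = (r / (r + δ)) ^ 2 * P.profile (r + δ) from rfl]
        field_simp
    _ ≤ (r / (r + δ)) ^ 3 * (1 / α * (r + δ) * Y * P.profileDeriv (r + δ))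
          + 1 / α * Y * r * (2 * r * δ * P.profile (r + δ) / (r + δ) ^ 3) := by gcongr
    _ = 1 / α * r * Y * P.multiplierDeriv τ r := by
        rw [show P.multiplierDeriv τ r = (r / (r + δ)) ^ 2 * P.profileDeriv (r + δ)
          + 2 * r * δ * P.profile (r + δ) / (r + δ) ^ 3 from rfl]
        field_simp
    _ ≤ 1 / α * r * (6 * (1 + r) ^ α) * P.multiplierDeriv τ r := by
        gcongr; linarith [Real.rpow_nonneg (show 0 ≤ 1 + r by linarith) α]
    _ = _ := by ring

theorem multiplier_le_sqrt_mul_multiplierDeriv (hτ : τ₀ ≤ τ) (hr : 0 < r) :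
    P.multiplier τ r ≤ 6 / α * r * √(1 + r) * P.multiplierDeriv τ r := by
  have hα := P.α_pos
  have hw' := P.multiplierDeriv_pos hτ hr
  have hle : (1 + r) ^ α ≤ √(1 + r) := by
    rw [Real.sqrt_eq_rpow]
    exact Real.rpow_le_rpow_of_exponent_le (by linarith) P.α_le_half
  exact (P.multiplier_le_mul_multiplierDeriv hτ hr).trans (by gcongr)

theorem multiplier_sq_div_multiplierDeriv_le (hτ : τ₀ ≤ τ) (hr : 0 < r) :
    P.multiplier τ r ^ 2 / P.multiplierDeriv τ r ≤ P.scale / α * (6 / α) * (1 + r) ^ (1 + α) := by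
  have hw' := P.multiplierDeriv_pos hτ hr
  have hw := P.multiplier_nonneg hτ hr
  have hR := P.scale_pos
  have hα := P.α_pos
  rw [div_le_iff₀ hw', Real.rpow_add (by linarith), Real.rpow_one]
  calc P.multiplier τ r ^ 2 = P.multiplier τ r * P.multiplier τ r := by ring
    _ ≤ P.scale / α * (6 / α * r * (1 + r) ^ α * P.multiplierDeriv τ r) :=
        mul_le_mul (P.multiplier_le hτ hr) (P.multiplier_le_mul_multiplierDeriv hτ hr) hw
          (by positivity)
    _ ≤ P.scale / α * (6 / α * (1 + r) * (1 + r) ^ α * P.multiplierDeriv τ r) := by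
        gcongr; linarith
    _ = _ := by ring

theorem correction_nonneg (hτ : τ₀ ≤ τ) (hr : 0 < r) : 0 ≤ P.correction τ r := by
  have hδ := P.shift_pos hτ
  have ho := P.profileDeriv_pos (add_pos hr hδ)
  unfold correction
  positivity

theorem correction_le (hτ : τ₀ ≤ τ) (hr : 0 < r) : P.correction τ r ≤ √τ := by
  have hδ := P.shift_pos hτ
  have hle : r / (r + P.shift τ) * P.profileDeriv (r + P.shift τ) ≤ 1 :=
    mul_le_one₀ ((div_le_one (by positivity)).mpr (by linarith))
      (P.profileDeriv_pos (by positivity)).le (P.profileDeriv_le_one (by positivity))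
  unfold correction
  nlinarith [Real.sqrt_nonneg τ]

theorem exponentDeriv_pos (hr : 0 < r) : 0 < P.exponentDeriv r := by
  have hb := P.b_pos
  have hβ := P.β_pos
  unfold exponentDeriv
  positivity

theorem exponentDeriv_le_div (hr : 0 < r) : P.exponentDeriv r ≤ P.b / (1 + r) := by
  have hb := P.b_pos
  have hβr := mul_pos P.β_pos hr
  unfold exponentDeriv
  gcongr
  nlinarith

theorem exponentDeriv_le (hr : 0 < r) : P.exponentDeriv r ≤ P.b :=
  (P.exponentDeriv_le_div hr).trans (div_le_self P.b_pos.le (by linarith))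

theorem exponentDeriv_sq_mul_multiplier_le (hτ : τ₀ ≤ τ) (hr : 0 < r) :
    P.exponentDeriv r ^ 2 * P.multiplier τ r ≤ 6 / α * P.b ^ 2 * P.multiplierDeriv τ r := by
  have hα := P.α_pos
  have hw' := P.multiplierDeriv_pos hτ hr
  have hsqrt : √(1 + r) ≤ 1 + r := (Real.sqrt_le_left (by linarith)).mpr (by nlinarith)
  have hw : P.multiplier τ r ≤ 6 / α * (1 + r) * (1 + r) * P.multiplierDeriv τ r :=
    (P.multiplier_le_sqrt_mul_multiplierDeriv hτ hr).trans (by gcongr; linarith)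
  have hp := (P.exponentDeriv_pos hr).le
  calc P.exponentDeriv r ^ 2 * P.multiplier τ r
      ≤ (P.b / (1 + r)) ^ 2 * (6 / α * (1 + r) * (1 + r) * P.multiplierDeriv τ r) := by
        have := P.exponentDeriv_le_div hr
        have := P.multiplier_nonneg hτ hr
        gcongr
    _ = _ := by field_simp

theorem exponent_nonneg (hr : 0 ≤ r) : 0 ≤ P.exponent r := by
  have hβ := P.β_pos
  have hβ_half := P.β_le_half
  refine mul_nonneg (div_nonneg P.b_pos.le (by linarith)) (sub_nonneg.mpr ?_)
  exact Real.log_le_log (by positivity) (by nlinarith)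

/-- The supremum of `CarlemanParameters.exponent`. -/
def exponentSup : ℝ := P.b / (1 - P.β) * Real.log (1 / P.β)

theorem exponent_le (hr : 0 ≤ r) : P.exponent r ≤ P.exponentSup := by
  have hβ := P.β_pos
  have hβ_half := P.β_le_half
  refine mul_le_mul_of_nonneg_left ?_ (div_nonneg P.b_pos.le (by linarith))
  rw [← Real.log_div (by positivity) (by positivity)]
  refine Real.log_le_log (by positivity) ?_
  rw [div_le_div_iff₀ (by positivity) hβ]
  nlinarith

end CarlemanParameters

/-! ### Positivity of the Morawetz quadratic form -/

theorem mul_mul_add_mul_sq_add_mul_sq_nonneg {A B c : ℝ} (hA : 0 ≤ A) (hB : 0 ≤ B)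
    (hdisc : c ^ 2 ≤ 4 * A * B) (x y : ℝ) : 0 ≤ c * (x * y) + A * y ^ 2 + B * x ^ 2 := by
  rcases hA.eq_or_lt with rfl | hA
  · obtain rfl : c = 0 := by nlinarith
    nlinarith [mul_nonneg hB (sq_nonneg x)]
  · have : 0 ≤ A * (c * (x * y) + A * y ^ 2 + B * x ^ 2) := by
      nlinarith [sq_nonneg (A * y + c / 2 * x), mul_nonneg (sub_nonneg.mpr hdisc) (sq_nonneg x)]
    exact nonneg_of_mul_nonneg_right this hA

namespace CarlemanParameters

variable {τ₀ α a γ : ℝ} (P : CarlemanParameters τ₀ α a γ) {τ r V Vr V₂ : ℝ}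

/-- The coefficient of the square of the corrected radial derivative in the Morawetz quadratic
form. Each of the three cross terms below spends a sixth of it. -/
def dissipation (τ r : ℝ) : ℝ :=
  2 * P.exponentDeriv r * P.multiplier τ r + P.multiplierDeriv τ r / 2

/-- The gain in the zeroth order coefficient due to the Carleman weight. -/
def exponentGain (τ r : ℝ) : ℝ := P.exponentDeriv r ^ 2 * P.multiplier τ r / (r * (1 + r))

theorem exponentGain_nonneg (hτ : τ₀ ≤ τ) (hr : 0 < r) : 0 ≤ P.exponentGain τ r := by
  have := P.multiplier_nonneg hτ hr
  unfold exponentGain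
  positivity

theorem cross_term_nonneg_of_mul_sq_le_exponentDeriv (hτ : τ₀ ≤ τ) (hr : 0 < r) {q g : ℝ}
    (hg : 0 ≤ g) (hq : P.multiplier τ r * q ^ 2 ≤ 4 / 3 * P.exponentDeriv r * g) (v D : ℝ) :
    0 ≤ P.multiplier τ r * q * (v * D) + P.dissipation τ r / 6 * D ^ 2 + g * v ^ 2 := by
  have hw := P.multiplier_nonneg hτ hr
  have hw' := P.multiplierDeriv_pos hτ hr
  have hp := P.exponentDeriv_pos hr
  unfold dissipation
  refine mul_mul_add_mul_sq_add_mul_sq_nonneg (by positivity) hg ?_ v D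
  nlinarith [mul_le_mul_of_nonneg_left hq hw, mul_nonneg hw'.le hg]

theorem cross_term_nonneg_of_sq_le_multiplierDeriv (hτ : τ₀ ≤ τ) (hr : 0 < r) {c g : ℝ}
    (hg : 0 ≤ g) (hc : c ^ 2 ≤ P.multiplierDeriv τ r / 3 * g) (v D : ℝ) :
    0 ≤ c * (v * D) + P.dissipation τ r / 6 * D ^ 2 + g * v ^ 2 := by
  have hw := P.multiplier_nonneg hτ hr
  have hw' := P.multiplierDeriv_pos hτ hr
  have hp := P.exponentDeriv_pos hr
  unfold dissipation
  refine mul_mul_add_mul_sq_add_mul_sq_nonneg (by positivity) hg ?_ v D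
  nlinarith [mul_nonneg (mul_nonneg hp.le hw) hg]

theorem correction_cross_term_nonneg (hτ : τ₀ ≤ τ) (hr : 0 < r) (v D : ℝ) :
    0 ≤ 2 * P.correction τ r * (v * D) + P.dissipation τ r / 6 * D ^ 2
      + 3 / 64 * τ * P.multiplierDeriv τ r * v ^ 2 := by
  have hτ0 := P.pos_of_τ₀_le hτ
  have hδ := P.shift_pos hτ
  have ho := P.profileDeriv_pos (add_pos hr hδ)
  have hle := P.mul_profileDeriv_le_multiplierDeriv hτ hr
  have hw' := P.multiplierDeriv_pos hτ hr
  refine P.cross_term_nonneg_of_sq_le_multiplierDeriv hτ hr (by positivity) ?_ v D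
  calc (2 * P.correction τ r) ^ 2
      = τ / 64 * (r / (r + P.shift τ) * P.profileDeriv (r + P.shift τ)) ^ 2 := by
        rw [correction, mul_pow, mul_pow, div_pow, Real.sq_sqrt hτ0.le]; ring
    _ ≤ τ / 64 * P.multiplierDeriv τ r ^ 2 := by gcongr
    _ = _ := by ring

theorem exponentDeriv₂_sq_le (hr : 0 < r) :
    P.exponentDeriv₂ r ^ 2 ≤ 4 * P.exponentDeriv r ^ 2 / (1 + r) ^ 2 := by
  have hβ := P.β_pos
  have hβr : P.β / (1 + P.β * r) ≤ 1 / (1 + r) := by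
    rw [div_le_div_iff₀ (by positivity) (by positivity)]
    linarith [P.β_le_half]
  calc P.exponentDeriv₂ r ^ 2
      = P.exponentDeriv r ^ 2 * (1 / (1 + r) + P.β / (1 + P.β * r)) ^ 2 := by
        rw [exponentDeriv₂]; ring
    _ ≤ P.exponentDeriv r ^ 2 * (1 / (1 + r) + 1 / (1 + r)) ^ 2 := by gcongr
    _ = _ := by field_simp; norm_num

theorem multiplier_mul_exponentDeriv_div_sq_le_exponentGain (hτ : τ₀ ≤ τ) (hr : 0 < r)
    (hrb : 24 * (1 + r) ≤ P.b) :
    3 * P.multiplier τ r * P.exponentDeriv r / (1 + r) ^ 2 ≤ P.exponentGain τ r / 4 := by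
  have hβ := P.β_pos
  have hw := P.multiplier_nonneg hτ hr
  have hp := P.exponentDeriv_pos hr
  have hp12 : 12 ≤ P.exponentDeriv r := by
    have hβr : P.β * r ≤ 1 := by nlinarith [P.β_mul_b_le]
    rw [exponentDeriv, le_div_iff₀ (by positivity)]
    nlinarith
  calc 3 * P.multiplier τ r * P.exponentDeriv r / (1 + r) ^ 2
      = 12 * (P.exponentDeriv r * P.multiplier τ r) / (4 * ((1 + r) * (1 + r))) := by
        field_simp; ring
    _ ≤ P.exponentDeriv r * (P.exponentDeriv r * P.multiplier τ r) / (4 * (r * (1 + r))) := by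
        gcongr; linarith
    _ = P.exponentGain τ r / 4 := by rw [exponentGain]; field_simp

theorem multiplier_mul_exponentDeriv_div_sq_le_multiplierDeriv (hτ : τ₀ ≤ τ) (hr : 0 < r)
    (hrb : P.b < 24 * (1 + r)) :
    3 * P.multiplier τ r * P.exponentDeriv r / (1 + r) ^ 2 ≤ τ * P.multiplierDeriv τ r / 64 := by
  have hw' := P.multiplierDeriv_pos hτ hr
  have hα := P.α_pos
  have hτ₀ := P.τ₀_pos
  set z := √(1 + r)
  have hz_sq : z ^ 2 = 1 + r := Real.sq_sqrt (by linarith)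
  have hz_pos : 0 < z := Real.sqrt_pos.mpr (by linarith)
  have hz_large : 4608 * (6 / α) ≤ z * τ := by
    have : 4608 * (6 / α) / τ₀ ≤ z :=
      abs_le_of_sq_le_sq' (by rw [hz_sq]; linarith [P.inv_τ₀_le_b]) hz_pos.le |>.2
    rw [div_le_iff₀ hτ₀] at this
    nlinarith
  have hp24 : P.exponentDeriv r ≤ 24 :=
    (P.exponentDeriv_le_div hr).trans ((div_le_iff₀ (by positivity)).mpr hrb.le)
  rw [div_le_iff₀ (by positivity)]
  calc 3 * P.multiplier τ r * P.exponentDeriv r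
      ≤ 3 * (6 / α * r * z * P.multiplierDeriv τ r) * 24 := by
        have := P.multiplier_le_sqrt_mul_multiplierDeriv hτ hr
        have := (P.exponentDeriv_pos hr).le
        gcongr
    _ = 4608 * (6 / α) / 64 * z * r * P.multiplierDeriv τ r := by ring
    _ ≤ (z * τ) / 64 * z * (1 + r) * P.multiplierDeriv τ r := by
        have : 0 < z * τ := lt_of_lt_of_le (by positivity) hz_large
        gcongr
        linarith
    _ = τ * P.multiplierDeriv τ r / 64 * (z ^ 2 * (1 + r)) := by ring
    _ = τ * P.multiplierDeriv τ r / 64 * (1 + r) ^ 2 := by rw [hz_sq]; ring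

theorem exponentDeriv₂_cross_term_nonneg (hτ : τ₀ ≤ τ) (hr : 0 < r) (v D : ℝ) :
    0 ≤ P.multiplier τ r * P.exponentDeriv₂ r * (v * D) + P.dissipation τ r / 6 * D ^ 2
      + (P.exponentGain τ r / 4 + τ * P.multiplierDeriv τ r / 64) * v ^ 2 := by
  have hw := P.multiplier_nonneg hτ hr
  have hp := P.exponentDeriv_pos hr
  have hgain := P.exponentGain_nonneg hτ hr
  have hτw := mul_pos (P.pos_of_τ₀_le hτ) (P.multiplierDeriv_pos hτ hr)
  have hkey : 3 * P.multiplier τ r * P.exponentDeriv r / (1 + r) ^ 2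
      ≤ P.exponentGain τ r / 4 + τ * P.multiplierDeriv τ r / 64 := by
    rcases le_or_gt (24 * (1 + r)) P.b with hrb | hrb
    · linarith [P.multiplier_mul_exponentDeriv_div_sq_le_exponentGain hτ hr hrb]
    · linarith [P.multiplier_mul_exponentDeriv_div_sq_le_multiplierDeriv hτ hr hrb]
  refine P.cross_term_nonneg_of_mul_sq_le_exponentDeriv hτ hr (by positivity) ?_ v D
  calc P.multiplier τ r * P.exponentDeriv₂ r ^ 2
      ≤ P.multiplier τ r * (4 * P.exponentDeriv r ^ 2 / (1 + r) ^ 2) := by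
        gcongr; exact P.exponentDeriv₂_sq_le hr
    _ = 4 / 3 * P.exponentDeriv r
          * (3 * P.multiplier τ r * P.exponentDeriv r / (1 + r) ^ 2) := by field_simp
    _ ≤ _ := by gcongr

theorem multiplier_mul_inv_sub_inv_shift_le (hτ : τ₀ ≤ τ) (hr : 0 < r) :
    P.multiplier τ r * (1 / r - 1 / P.shift τ) ≤ P.multiplierDeriv τ r / 2 := by
  have hδ := P.shift_pos hτ
  have hs : 0 < r + P.shift τ := add_pos hr hδ
  have ho' := P.profileDeriv_pos hs
  calc P.multiplier τ r * (1 / r - 1 / P.shift τ)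
      ≤ P.multiplier τ r * (1 / r - 1 / (r + P.shift τ)) := by
        have := P.multiplier_nonneg hτ hr
        gcongr
        linarith
    _ = 2 * r * P.shift τ * P.profile (r + P.shift τ) / (r + P.shift τ) ^ 3 / 2 := by
        rw [multiplier]; field_simp; ring
    _ ≤ P.multiplierDeriv τ r / 2 := by
        rw [multiplierDeriv]
        gcongr
        exact le_add_of_nonneg_left (by positivity)

theorem b_sq_mul_inv_shift_add_β_le (hτ : τ₀ ≤ τ) :
    6 / α * P.b ^ 2 * (1 / P.shift τ + P.β) ≤ τ / 64 := by
  have hτ0 := P.pos_of_τ₀_le hτ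
  have hK := P.K_pos
  have hshift : 6 / α * P.b ^ 2 * (1 / P.shift τ) ≤ τ / 128 := by
    have hKτ : 128 * (6 / α) * P.b ^ 2 ≤ P.K * √τ := P.b_sq_le_K.trans (by gcongr)
    calc 6 / α * P.b ^ 2 * (1 / P.shift τ) = 128 * (6 / α) * P.b ^ 2 * √τ / (128 * P.K) := by
          rw [shift]; field_simp
      _ ≤ P.K * √τ * √τ / (128 * P.K) := by gcongr
      _ = τ / 128 := by rw [mul_assoc, Real.mul_self_sqrt hτ0.le]; field_simp
  linarith [P.b_sq_mul_β_le]

theorem exponentGain_sub_le (hτ : τ₀ ≤ τ) (hr : 0 < r) :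
    P.exponentGain τ r - τ * P.multiplierDeriv τ r / 64
      ≤ P.exponentDeriv r ^ 2 * P.multiplierDeriv τ r / 2
        + P.multiplier τ r * P.exponentDeriv r * P.exponentDeriv₂ r := by
  have hβ := P.β_pos
  have hδ := P.shift_pos hτ
  have hw' := P.multiplierDeriv_pos hτ hr
  have hpw : 0 ≤ P.exponentDeriv r ^ 2 * P.multiplier τ r :=
    mul_nonneg (sq_nonneg _) (P.multiplier_nonneg hτ hr)
  have hβr : P.β / (1 + P.β * r) ≤ P.β := div_le_self hβ.le (by nlinarith)
  have hloss : P.exponentDeriv r ^ 2 * P.multiplier τ r * (1 / P.shift τ + P.β)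
      ≤ τ * P.multiplierDeriv τ r / 64 :=
    calc P.exponentDeriv r ^ 2 * P.multiplier τ r * (1 / P.shift τ + P.β)
        ≤ 6 / α * P.b ^ 2 * P.multiplierDeriv τ r * (1 / P.shift τ + P.β) :=
          mul_le_mul_of_nonneg_right (P.exponentDeriv_sq_mul_multiplier_le hτ hr) (by positivity)
      _ = 6 / α * P.b ^ 2 * (1 / P.shift τ + P.β) * P.multiplierDeriv τ r := by ring
      _ ≤ τ / 64 * P.multiplierDeriv τ r := by gcongr; exact P.b_sq_mul_inv_shift_add_β_le hτ
      _ = _ := by ring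
  have hgain : P.exponentGain τ r
      = P.exponentDeriv r ^ 2 * P.multiplier τ r * (1 / r - 1 / (1 + r)) := by
    rw [exponentGain]; field_simp; ring
  rw [hgain, exponentDeriv₂]
  nlinarith [mul_le_mul_of_nonneg_left (P.multiplier_mul_inv_sub_inv_shift_le hτ hr)
    (sq_nonneg (P.exponentDeriv r)), mul_le_mul_of_nonneg_left hβr hpw]

theorem multiplier_mul_rpow_le (hτ : τ₀ ≤ τ) (hr : 0 < r) (hfar : P.R₁ ≤ r) :
    P.multiplier τ r * (a * (1 + r) ^ (-γ - 1)) ≤ a * (6 / α) * P.η * P.multiplierDeriv τ r := by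
  have hα := P.α_pos
  have ha := P.a_pos
  have hw' := P.multiplierDeriv_pos hτ hr
  have hr1 : 0 < 1 + r := by linarith
  have hpow : (1 + r) ^ α * (1 + r) ^ (-γ) ≤ P.η := by
    rw [← Real.rpow_add hr1]
    exact (Real.rpow_le_rpow_of_exponent_le (by linarith) (by linarith [P.α_le_half_γ])).trans
      (P.rpow_le_η r hfar)
  calc P.multiplier τ r * (a * (1 + r) ^ (-γ - 1))
      ≤ 6 / α * r * (1 + r) ^ α * P.multiplierDeriv τ r * (a * (1 + r) ^ (-γ - 1)) := by
        gcongr; exact P.multiplier_le_mul_multiplierDeriv hτ hr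
    _ = a * (6 / α) * ((1 + r) ^ α * (1 + r) ^ (-γ)) * (r / (1 + r)) * P.multiplierDeriv τ r := by
        rw [Real.rpow_sub_one hr1.ne']; ring
    _ ≤ a * (6 / α) * P.η * 1 * P.multiplierDeriv τ r := by
        have : r / (1 + r) ≤ 1 := (div_le_one hr1).mpr (by linarith)
        have : 0 < P.η := lt_of_lt_of_le (by positivity) hpow
        gcongr
    _ = _ := by ring

theorem potential_terms_nonneg_of_R₁_le (hτ : τ₀ ≤ τ) (hr : 0 < r) (hfar : P.R₁ ≤ r)
    (hV : |V| ≤ a * (1 + r) ^ (-γ)) (hVr : Vr ≤ a * (1 + r) ^ (-γ - 1))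
    (hV₂ : |V₂| ≤ a * (1 + r) ^ (-γ - 1)) (v D : ℝ) :
    0 ≤ P.multiplier τ r * V₂ * (v * D) + P.dissipation τ r / 6 * D ^ 2
      + (3 * τ * P.multiplierDeriv τ r / 64
        - P.multiplierDeriv τ r * V / 2 - P.multiplier τ r * Vr / 2) * v ^ 2 := by
  have hα := P.α_pos
  have ha := P.a_pos
  have hw := P.multiplier_nonneg hτ hr
  have hw' := P.multiplierDeriv_pos hτ hr
  have hτw := mul_pos (P.pos_of_τ₀_le hτ) hw'
  have hwa := P.multiplier_mul_rpow_le hτ hr hfar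
  have hη_le := P.η_le
  have hV_small : V ≤ τ / 32 := by
    have hη : (1 + r) ^ (-γ) ≤ P.η :=
      (Real.rpow_le_rpow_of_exponent_le (by linarith) (by linarith [P.α_le_half_γ])).trans
        (P.rpow_le_η r hfar)
    have hη_pos : 0 < P.η := lt_of_lt_of_le (by positivity) hη
    calc V ≤ a * (1 + r) ^ (-γ) := (le_abs_self V).trans hV
      _ ≤ a * P.η * 1 := by rw [mul_one]; gcongr
      _ ≤ a * P.η * (6 / α) := by gcongr; exact P.one_le_six_div_α
      _ ≤ τ / 32 := by linarith
  have hVr_small : P.multiplier τ r * Vr ≤ τ / 32 * P.multiplierDeriv τ r :=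
    ((mul_le_mul_of_nonneg_left hVr hw).trans hwa).trans (by gcongr; linarith)
  have hcross := P.cross_term_nonneg_of_sq_le_multiplierDeriv hτ hr (c := P.multiplier τ r * V₂)
    (g := τ * P.multiplierDeriv τ r / 64) (by positivity) ?_ v D
  · have hrest : 0 ≤ (2 * (τ * P.multiplierDeriv τ r / 64)
        - P.multiplierDeriv τ r * V / 2 - P.multiplier τ r * Vr / 2) * v ^ 2 :=
      mul_nonneg (by nlinarith [mul_le_mul_of_nonneg_left hV_small hw'.le]) (sq_nonneg v)
    linarith
  · calc (P.multiplier τ r * V₂) ^ 2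
        ≤ (a * (6 / α) * P.η * P.multiplierDeriv τ r) ^ 2 := by
          refine sq_le_sq.mpr (le_trans ?_ (le_abs_self _))
          rw [abs_mul, abs_of_nonneg hw]
          exact (mul_le_mul_of_nonneg_left hV₂ hw).trans hwa
      _ = 192 * (a * (6 / α) * P.η) ^ 2 * P.multiplierDeriv τ r ^ 2 / 192 := by ring
      _ ≤ τ * P.multiplierDeriv τ r ^ 2 / 192 := by gcongr; exact P.η_sq_le.trans hτ
      _ = _ := by ring

theorem div_le_exponentDeriv_of_lt_R₁ (hr : 0 < r) (hnear : r < P.R₁) :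
    P.b / (2 * (1 + P.R₁)) ≤ P.exponentDeriv r := by
  have hβ := P.β_pos
  have hβr : P.β * r ≤ 1 := (mul_le_mul_of_nonneg_left hnear.le hβ.le).trans P.β_mul_R₁_le
  refine div_le_div_of_nonneg_left P.b_pos.le (by positivity) ?_
  nlinarith

theorem multiplier_mul_le_exponentGain (hτ : τ₀ ≤ τ) (hr : 0 < r) (hnear : r < P.R₁) :
    a * (P.multiplier τ r / r) + a * P.multiplier τ r / 2 + a ^ 2 * P.multiplier τ r
      ≤ P.exponentGain τ r / 2 := by
  have ha := P.a_pos
  have hR₁ := P.R₁_pos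
  have hb := P.b_pos
  have hw := P.multiplier_nonneg hτ hr
  have hp_sq : 4 * (1 + P.R₁) ^ 2 * (a + a ^ 2) ≤ P.exponentDeriv r ^ 2 := by
    calc 4 * (1 + P.R₁) ^ 2 * (a + a ^ 2)
        = 16 * (1 + P.R₁) ^ 4 * (a + a ^ 2) / (2 * (1 + P.R₁)) ^ 2 := by field_simp; norm_num
      _ ≤ P.b ^ 2 / (2 * (1 + P.R₁)) ^ 2 := by gcongr; exact P.a_le_b_sq
      _ = (P.b / (2 * (1 + P.R₁))) ^ 2 := by rw [div_pow]
      _ ≤ P.exponentDeriv r ^ 2 := by gcongr; exact P.div_le_exponentDeriv_of_lt_R₁ hr hnear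
  calc a * (P.multiplier τ r / r) + a * P.multiplier τ r / 2 + a ^ 2 * P.multiplier τ r
      = (a + r * a / 2 + r * a ^ 2) * (2 * (1 + r)) * P.multiplier τ r / (2 * (r * (1 + r))) := by
        field_simp
    _ ≤ 4 * (1 + P.R₁) ^ 2 * (a + a ^ 2) * P.multiplier τ r / (2 * (r * (1 + r))) := by
        gcongr ?_ * _ / _
        have hcoef : a + r * a / 2 + r * a ^ 2 ≤ 2 * (1 + P.R₁) * (a + a ^ 2) := by
          nlinarith [mul_pos hR₁ ha, mul_pos hR₁ (sq_pos_of_pos ha), sq_pos_of_pos ha]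
        calc (a + r * a / 2 + r * a ^ 2) * (2 * (1 + r))
            ≤ 2 * (1 + P.R₁) * (a + a ^ 2) * (2 * (1 + P.R₁)) := by gcongr
          _ = 4 * (1 + P.R₁) ^ 2 * (a + a ^ 2) := by ring
    _ ≤ P.exponentDeriv r ^ 2 * P.multiplier τ r / (2 * (r * (1 + r))) := by gcongr
    _ = P.exponentGain τ r / 2 := by rw [exponentGain]; field_simp

theorem potential_terms_nonneg_of_lt_R₁ (hτ : τ₀ ≤ τ) (hr : 0 < r) (hnear : r < P.R₁)
    (hV : |V| ≤ a) (hVr : Vr ≤ a) (hV₂ : |V₂| ≤ a) (v D : ℝ) :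
    0 ≤ P.multiplier τ r * V₂ * (v * D) + P.dissipation τ r / 6 * D ^ 2
      + (P.exponentGain τ r / 2
        - P.multiplierDeriv τ r * V / 2 - P.multiplier τ r * Vr / 2) * v ^ 2 := by
  have ha := P.a_pos
  have hR₁ := P.R₁_pos
  have hw := P.multiplier_nonneg hτ hr
  have hw' := P.multiplierDeriv_pos hτ hr
  have hp_one : 1 ≤ P.exponentDeriv r :=
    ((one_le_div (by positivity)).mpr P.R₁_le_b).trans (P.div_le_exponentDeriv_of_lt_R₁ hr hnear)
  have hcross := P.cross_term_nonneg_of_mul_sq_le_exponentDeriv hτ hr (q := V₂)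
    (g := a ^ 2 * P.multiplier τ r) (by positivity) ?_ v D
  · have hVw : P.multiplierDeriv τ r * V / 2 ≤ a * (P.multiplier τ r / r) := by
      have := mul_le_mul_of_nonneg_left ((le_abs_self V).trans hV) hw'.le
      have := mul_le_mul_of_nonneg_left (P.multiplierDeriv_div_two_le hτ hr) ha.le
      linarith
    have hVrw := mul_le_mul_of_nonneg_left hVr hw
    have hrest : 0 ≤ (P.exponentGain τ r / 2 - P.multiplierDeriv τ r * V / 2
        - P.multiplier τ r * Vr / 2 - a ^ 2 * P.multiplier τ r) * v ^ 2 :=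
      mul_nonneg (by linarith [P.multiplier_mul_le_exponentGain hτ hr hnear]) (sq_nonneg v)
    linarith
  · have hV₂_sq : V₂ ^ 2 ≤ a ^ 2 := sq_le_sq.mpr (hV₂.trans (le_abs_self a))
    have haw : 0 ≤ a ^ 2 * P.multiplier τ r := by positivity
    nlinarith [mul_le_mul_of_nonneg_left hV₂_sq hw, mul_le_mul_of_nonneg_right hp_one haw]

theorem potential_terms_nonneg (hτ : τ₀ ≤ τ) (hr : 0 < r) (hV : |V| ≤ a * (1 + r) ^ (-γ))
    (hVr : Vr ≤ a * (1 + r) ^ (-γ - 1)) (hV₂ : |V₂| ≤ a * (1 + r) ^ (-γ - 1)) (v D : ℝ) :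
    0 ≤ P.multiplier τ r * V₂ * (v * D) + P.dissipation τ r / 6 * D ^ 2
      + (P.exponentGain τ r / 2 + 3 * τ * P.multiplierDeriv τ r / 64
        - P.multiplierDeriv τ r * V / 2 - P.multiplier τ r * Vr / 2) * v ^ 2 := by
  have ha := P.a_pos
  have hgain := mul_nonneg (P.exponentGain_nonneg hτ hr) (sq_nonneg v)
  have hτw := mul_nonneg (mul_pos (P.pos_of_τ₀_le hτ) (P.multiplierDeriv_pos hτ hr)).le
    (sq_nonneg v)
  rcases le_or_gt P.R₁ r with hfar | hnear
  · linarith [P.potential_terms_nonneg_of_R₁_le hτ hr hfar hV hVr hV₂ v D]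
  · have hpow {q : ℝ} (hq : q ≤ 0) : a * (1 + r) ^ q ≤ a :=
      mul_le_of_le_one_right ha.le (Real.rpow_le_one_of_one_le_of_nonpos (by linarith) hq)
    have hγ : 0 < γ := by linarith [P.α_pos, P.α_le_half_γ]
    linarith [P.potential_terms_nonneg_of_lt_R₁ hτ hr hnear (hV.trans (hpow (by linarith)))
      (hVr.trans (hpow (by linarith))) (hV₂.trans (hpow (by linarith))) v D]

end CarlemanParameters

namespace CarlemanParameters

variable {τ₀ α a γ : ℝ} (P : CarlemanParameters τ₀ α a γ) {τ r V Vr V₂ : ℝ}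

theorem one_div_scale_le (hτ : τ₀ ≤ τ) : 1 / P.scale ≤ √τ / P.K := by
  have := P.K_pos
  rw [scale, one_div_div]
  gcongr

theorem one_div_add_shift_le (hτ : τ₀ ≤ τ) (hr : 0 < r) : 1 / (r + P.shift τ) ≤ √τ / P.K := by
  have hle := one_div_le_one_div_of_le (P.shift_pos hτ) (by linarith : P.shift τ ≤ r + P.shift τ)
  rwa [shift, one_div_div, ← shift] at hle

theorem profileDeriv_deriv_term_le (hτ : τ₀ ≤ τ) (hr : 0 < r) :
    √τ / 16 * (r / (r + P.shift τ)
      * ((1 + α) / (P.scale + (r + P.shift τ)) * P.profileDeriv (r + P.shift τ)))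
      ≤ τ * P.multiplierDeriv τ r / 64 := by
  have hτ0 := P.pos_of_τ₀_le hτ
  have := P.α_pos
  have hscale := P.scale_pos
  have hs : 0 < r + P.shift τ := add_pos hr (P.shift_pos hτ)
  have ho' := P.profileDeriv_pos hs
  have hw' := P.multiplierDeriv_pos hτ hr
  have hinv : 1 / (P.scale + (r + P.shift τ)) ≤ √τ / P.K :=
    (one_div_le_one_div_of_le hscale (by linarith)).trans (P.one_div_scale_le hτ)
  calc √τ / 16 * (r / (r + P.shift τ)
        * ((1 + α) / (P.scale + (r + P.shift τ)) * P.profileDeriv (r + P.shift τ)))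
      = √τ / 16 * (1 + α) * (1 / (P.scale + (r + P.shift τ)))
        * (r / (r + P.shift τ) * P.profileDeriv (r + P.shift τ)) := by ring
    _ ≤ √τ / 16 * (1 + 1) * (√τ / P.K) * P.multiplierDeriv τ r := by
        have := P.K_pos
        have := P.mul_profileDeriv_le_multiplierDeriv hτ hr
        gcongr
        linarith [P.α_le_half]
    _ = √τ * √τ * P.multiplierDeriv τ r * (1 / (8 * P.K)) := by ring
    _ ≤ √τ * √τ * P.multiplierDeriv τ r * (1 / 64) := by
        gcongr
        linarith [P.eight_le_K]
    _ = τ * P.multiplierDeriv τ r / 64 := by rw [Real.mul_self_sqrt hτ0.le]; ring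

theorem profile_div_le (hτ : τ₀ ≤ τ) (hr : 0 < r) :
    P.profile (r + P.shift τ) / (4 * (r + P.shift τ) ^ 3)
      ≤ 1 / (4 * α) * (1 + P.shift τ / P.scale)
          * (P.profileDeriv (r + P.shift τ) / (r + P.shift τ) ^ 2)
        + 1 / (4 * α) * (1 / P.scale) * (1 / (r + P.shift τ))
          * (r / (r + P.shift τ) * P.profileDeriv (r + P.shift τ)) := by
  have hα := P.α_pos
  have hscale := P.scale_pos
  have hδ := P.shift_pos hτ
  have hs : 0 < r + P.shift τ := add_pos hr hδ
  have ho' := P.profileDeriv_pos hs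
  have hpow : (1 + (r + P.shift τ) / P.scale) ^ α ≤ 1 + (r + P.shift τ) / P.scale :=
    Real.rpow_le_self_of_one_le (P.one_lt_one_add_div_scale hs).le (by linarith [P.α_le_half])
  calc P.profile (r + P.shift τ) / (4 * (r + P.shift τ) ^ 3)
      ≤ 1 / α * (r + P.shift τ) * (1 + (r + P.shift τ) / P.scale)
          * P.profileDeriv (r + P.shift τ) / (4 * (r + P.shift τ) ^ 3) := by
        gcongr
        exact (P.profile_le_mul_profileDeriv hs).trans (by gcongr)
    _ = _ := by field_simp; ring

theorem inverse_square_term_le (hτ : τ₀ ≤ τ) (hr : 0 < r) :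
    (P.multiplier τ r / r - P.multiplierDeriv τ r / 2) / (4 * r ^ 2)
      ≤ P.K / 32 * (P.profileDeriv (r + P.shift τ) / (r + P.shift τ) ^ 2)
        + τ * P.multiplierDeriv τ r / 64 := by
  have hτ0 := P.pos_of_τ₀_le hτ
  have hα := P.α_pos
  have hK := P.K_pos
  have hscale := P.scale_pos
  have hδ := P.shift_pos hτ
  have hs : 0 < r + P.shift τ := add_pos hr hδ
  have ho' := P.profileDeriv_pos hs
  have hw' := P.multiplierDeriv_pos hτ hr
  have hprofile : (P.multiplier τ r / r - P.multiplierDeriv τ r / 2) / (4 * r ^ 2)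
      ≤ P.profile (r + P.shift τ) / (4 * (r + P.shift τ) ^ 3) := by
    have : 0 ≤ P.profileDeriv (r + P.shift τ) / (8 * (r + P.shift τ) ^ 2) := by positivity
    rw [← sub_nonneg]
    convert this using 1
    rw [P.multiplier_div_sub_multiplierDeriv_div_two hτ hr]
    field_simp
    ring
  have hnear : 1 / (4 * α) * (1 + P.shift τ / P.scale) ≤ P.K / 32 := by
    have := (div_le_one hscale).mpr (P.shift_le_scale hτ)
    calc 1 / (4 * α) * (1 + P.shift τ / P.scale) ≤ 1 / (4 * α) * (1 + 3) := by gcongr; linarith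
      _ = 32 / α / 32 := by field_simp; norm_num
      _ ≤ P.K / 32 := by gcongr; exact P.inv_α_le_K
  have hfar : 1 / (4 * α) * (1 / P.scale) * (1 / (r + P.shift τ))
      * (r / (r + P.shift τ) * P.profileDeriv (r + P.shift τ))
      ≤ τ * P.multiplierDeriv τ r / 64 :=
    calc _ ≤ 1 / (4 * α) * (√τ / P.K) * (√τ / P.K) * P.multiplierDeriv τ r := by
          have := P.one_div_scale_le hτ
          have := P.one_div_add_shift_le hτ hr
          have := P.mul_profileDeriv_le_multiplierDeriv hτ hr
          gcongr
      _ = 32 / α * (√τ * √τ * P.multiplierDeriv τ r) / (16 * (P.K * (8 * P.K))) := by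
          field_simp; ring
      _ ≤ P.K * (√τ * √τ * P.multiplierDeriv τ r) / (16 * (P.K * (8 * 8))) := by
          gcongr
          exacts [P.inv_α_le_K, P.eight_le_K]
      _ = τ * P.multiplierDeriv τ r / 64 / 16 := by
          rw [Real.mul_self_sqrt hτ0.le]; field_simp; norm_num
      _ ≤ τ * P.multiplierDeriv τ r / 64 := div_le_self (by positivity) (by norm_num)
  calc _ ≤ _ := hprofile.trans (P.profile_div_le hτ hr)
    _ ≤ _ := by gcongr

theorem correctionDeriv_sub_inverse_square_term_ge (hτ : τ₀ ≤ τ) (hr : 0 < r) :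
    P.K / 32 * (P.profileDeriv (r + P.shift τ) / (r + P.shift τ) ^ 2)
        - τ * P.multiplierDeriv τ r / 32
      ≤ P.correctionDeriv τ r
        - (P.multiplier τ r / r - P.multiplierDeriv τ r / 2) / (4 * r ^ 2) := by
  have hsqrt := Real.sqrt_pos.mpr (P.pos_of_τ₀_le hτ)
  have hmain : √τ / 16
      * (P.shift τ / (r + P.shift τ) ^ 2 * P.profileDeriv (r + P.shift τ))
      = P.K / 16 * (P.profileDeriv (r + P.shift τ) / (r + P.shift τ) ^ 2) := by
    have hKδ : √τ * P.shift τ = P.K := by rw [shift]; field_simp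
    rw [← hKδ]
    ring
  rw [correctionDeriv, mul_sub, hmain]
  linarith [P.profileDeriv_deriv_term_le hτ hr, P.inverse_square_term_le hτ hr]

theorem mul_profileDeriv_le_add (hτ : τ₀ ≤ τ) (hr : 0 < r) :
    1 / (128 * P.K) * τ * P.profileDeriv (r + P.shift τ)
      ≤ τ * P.multiplierDeriv τ r / 4
        + P.K / 32 * (P.profileDeriv (r + P.shift τ) / (r + P.shift τ) ^ 2) := by
  have hτ0 := P.pos_of_τ₀_le hτ
  have hK := P.K_pos
  have hδ := P.shift_pos hτ
  have hs : 0 < r + P.shift τ := add_pos hr hδ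
  have ho' := P.profileDeriv_pos hs
  have hw' := P.multiplierDeriv_pos hτ hr
  rcases le_total (P.shift τ) r with hfar | hnear
  · have hhalf : 1 / 2 * P.profileDeriv (r + P.shift τ) ≤ P.multiplierDeriv τ r := by
      have : 1 / 2 ≤ r / (r + P.shift τ) := by rw [div_le_div_iff₀ two_pos hs]; linarith
      exact le_trans (by gcongr) (P.mul_profileDeriv_le_multiplierDeriv hτ hr)
    calc 1 / (128 * P.K) * τ * P.profileDeriv (r + P.shift τ)
        ≤ 1 / 8 * τ * P.profileDeriv (r + P.shift τ) := by gcongr; linarith [P.eight_le_K]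
      _ = τ * (1 / 2 * P.profileDeriv (r + P.shift τ)) / 4 := by ring
      _ ≤ τ * P.multiplierDeriv τ r / 4 := by gcongr
      _ ≤ _ := le_add_of_nonneg_right (by positivity)
  · have hs_sq : (r + P.shift τ) ^ 2 ≤ 4 * P.K ^ 2 / τ :=
      calc (r + P.shift τ) ^ 2 ≤ (2 * P.shift τ) ^ 2 := by gcongr; linarith
        _ = 4 * P.K ^ 2 / τ := by rw [shift, mul_pow, div_pow, Real.sq_sqrt hτ0.le]; ring
    calc 1 / (128 * P.K) * τ * P.profileDeriv (r + P.shift τ)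
        = P.K / 32 * (P.profileDeriv (r + P.shift τ) / (4 * P.K ^ 2 / τ)) := by
          field_simp; norm_num
      _ ≤ P.K / 32 * (P.profileDeriv (r + P.shift τ) / (r + P.shift τ) ^ 2) := by gcongr
      _ ≤ _ := le_add_of_nonneg_left (by positivity)

theorem neg_sq_div_mul_sq_le (hτ : τ₀ ≤ τ) (hr : 0 < r) (D G : ℝ) :
    -(P.multiplier τ r ^ 2 / P.multiplierDeriv τ r * G ^ 2)
      ≤ P.multiplierDeriv τ r / 4 * D ^ 2 + P.multiplier τ r * D * G := by
  have hw' := P.multiplierDeriv_pos hτ hr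
  have hsq : 0 ≤ (P.multiplierDeriv τ r / 2 * D + P.multiplier τ r * G) ^ 2
      / P.multiplierDeriv τ r := by positivity
  have hexpand : (P.multiplierDeriv τ r / 2 * D + P.multiplier τ r * G) ^ 2
      / P.multiplierDeriv τ r
      = P.multiplierDeriv τ r / 4 * D ^ 2 + P.multiplier τ r * D * G
        + P.multiplier τ r ^ 2 / P.multiplierDeriv τ r * G ^ 2 := by field_simp; ring
  linarith

theorem le_morawetz_form (hτ : τ₀ ≤ τ) (hr : 0 < r) (hV : |V| ≤ a * (1 + r) ^ (-γ))
    (hVr : Vr ≤ a * (1 + r) ^ (-γ - 1)) (hV₂ : |V₂| ≤ a * (1 + r) ^ (-γ - 1)) (v D G : ℝ) :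
    1 / (128 * P.K) * τ * P.profileDeriv (r + P.shift τ) * v ^ 2
        - P.multiplier τ r ^ 2 / P.multiplierDeriv τ r * G ^ 2
      ≤ P.dissipation τ r * D ^ 2
        + (P.multiplier τ r * (V₂ + P.exponentDeriv₂ r) + 2 * P.correction τ r) * (v * D)
        + (P.multiplierDeriv τ r / 2 * (τ + P.exponentDeriv r ^ 2 - V)
          + P.multiplier τ r * (P.exponentDeriv r * P.exponentDeriv₂ r - Vr / 2)
          + P.correctionDeriv τ r
          - (P.multiplier τ r / r - P.multiplierDeriv τ r / 2) / (4 * r ^ 2)) * v ^ 2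
        + P.multiplier τ r * D * G := by
  have hw' := P.multiplierDeriv_pos hτ hr
  have hτw := mul_pos (P.pos_of_τ₀_le hτ) hw'
  have hgain := P.exponentGain_nonneg hτ hr
  have hpw : 0 ≤ P.exponentDeriv r * P.multiplier τ r * D ^ 2 :=
    mul_nonneg (mul_nonneg (P.exponentDeriv_pos hr).le (P.multiplier_nonneg hτ hr)) (sq_nonneg D)
  have hdissipation : P.multiplierDeriv τ r / 4 * D ^ 2 ≤ P.dissipation τ r / 2 * D ^ 2 := by
    rw [dissipation]; linarith
  have hcoefficient : 1 / (128 * P.K) * τ * P.profileDeriv (r + P.shift τ)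
      ≤ P.multiplierDeriv τ r / 2 * (τ + P.exponentDeriv r ^ 2)
        + P.multiplier τ r * (P.exponentDeriv r * P.exponentDeriv₂ r) + P.correctionDeriv τ r
        - (P.multiplier τ r / r - P.multiplierDeriv τ r / 2) / (4 * r ^ 2)
        - 3 / 64 * τ * P.multiplierDeriv τ r
        - (P.exponentGain τ r / 4 + τ * P.multiplierDeriv τ r / 64)
        - (P.exponentGain τ r / 2 + 3 * τ * P.multiplierDeriv τ r / 64) := by
    linarith [P.mul_profileDeriv_le_add hτ hr, P.exponentGain_sub_le hτ hr,
      P.correctionDeriv_sub_inverse_square_term_ge hτ hr]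
  linarith [mul_le_mul_of_nonneg_right hcoefficient (sq_nonneg v),
    P.correction_cross_term_nonneg hτ hr v D, P.exponentDeriv₂_cross_term_nonneg hτ hr v D,
    P.potential_terms_nonneg hτ hr hV hVr hV₂ v D, P.neg_sq_div_mul_sq_le hτ hr D G]

end CarlemanParameters

namespace CarlemanParameters

variable {τ₀ α a γ : ℝ} (P : CarlemanParameters τ₀ α a γ) {τ r s : ℝ}

theorem hasDerivAt_one_add_div_scale (s : ℝ) :
    HasDerivAt (fun s => 1 + s / P.scale) (1 / P.scale) s :=
  ((hasDerivAt_id s).div_const P.scale).const_add 1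

theorem hasDerivAt_profile (hs : 0 < s) : HasDerivAt P.profile (P.profileDeriv s) s := by
  have hscale := P.scale_pos
  have hα := P.α_pos
  have hX : 1 + s / P.scale ≠ 0 := by positivity
  refine ((((P.hasDerivAt_one_add_div_scale s).rpow_const (p := -α) (Or.inl hX)).const_sub
    1).const_mul (P.scale / α)).congr_deriv ?_
  rw [profileDeriv, show -1 - α = -α - 1 by ring]
  field_simp

theorem hasDerivAt_profileDeriv (hs : 0 < s) :
    HasDerivAt P.profileDeriv (-((1 + α) / (P.scale + s) * P.profileDeriv s)) s := by
  have hscale := P.scale_pos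
  have hX : 1 + s / P.scale ≠ 0 := by positivity
  refine ((P.hasDerivAt_one_add_div_scale s).rpow_const (p := -1 - α) (Or.inl hX)).congr_deriv ?_
  rw [profileDeriv, Real.rpow_sub_one hX,
    show P.scale + s = P.scale * (1 + s / P.scale) by field_simp]
  field_simp
  ring

theorem hasDerivAt_div_add {r δ : ℝ} (h : r + δ ≠ 0) :
    HasDerivAt (fun r => r / (r + δ)) (δ / (r + δ) ^ 2) r := by
  refine ((hasDerivAt_id r).fun_div ((hasDerivAt_id r).add_const δ) h).congr_deriv ?_
  simp

theorem hasDerivAt_multiplier (hτ : τ₀ ≤ τ) (hr : 0 < r) :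
    HasDerivAt (P.multiplier τ) (P.multiplierDeriv τ r) r := by
  have hs : 0 < r + P.shift τ := add_pos hr (P.shift_pos hτ)
  refine (((hasDerivAt_div_add hs.ne').fun_pow 2).fun_mul
    ((P.hasDerivAt_profile hs).comp_add_const r (P.shift τ))).congr_deriv ?_
  rw [multiplierDeriv]
  push_cast
  field_simp
  ring

theorem hasDerivAt_correction (hτ : τ₀ ≤ τ) (hr : 0 < r) :
    HasDerivAt (P.correction τ) (P.correctionDeriv τ r) r := by
  have hs : 0 < r + P.shift τ := add_pos hr (P.shift_pos hτ)
  refine (((hasDerivAt_div_add hs.ne').fun_mul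
    ((P.hasDerivAt_profileDeriv hs).comp_add_const r (P.shift τ))).const_mul
      (√τ / 16)).congr_deriv ?_
  rw [correctionDeriv]
  ring

theorem hasDerivAt_exponentDeriv (hr : 0 < r) :
    HasDerivAt P.exponentDeriv (P.exponentDeriv₂ r) r := by
  have hβ := P.β_pos
  refine ((hasDerivAt_const r P.b).fun_div (((hasDerivAt_id r).const_add 1).fun_mul
    (((hasDerivAt_id r).const_mul P.β).const_add 1)) (by simp only [id]; positivity)).congr_deriv ?_
  simp only [exponentDeriv₂, exponentDeriv, id]
  field_simp
  ring

theorem hasDerivAt_exponent (hr : 0 < r) : HasDerivAt P.exponent (P.exponentDeriv r) r := by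
  have hβ := P.β_pos
  have hβ_one : 1 - P.β ≠ 0 := by linarith [P.β_le_half]
  refine (((((hasDerivAt_id r).const_add 1).log (by simp only [id]; positivity)).fun_sub
    ((((hasDerivAt_id r).const_mul P.β).const_add 1).log (by simp only [id]; positivity))).const_mul
      (P.b / (1 - P.β))).congr_deriv ?_
  simp only [exponentDeriv, id]
  field_simp
  ring

theorem deriv_exponent (hr : 0 < r) : deriv P.exponent r = P.exponentDeriv r :=
  (P.hasDerivAt_exponent hr).deriv

theorem deriv_deriv_exponent (hr : 0 < r) : deriv (deriv P.exponent) r = P.exponentDeriv₂ r := by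
  rw [← (P.hasDerivAt_exponentDeriv hr).deriv]
  refine Filter.EventuallyEq.deriv_eq ?_
  filter_upwards [lt_mem_nhds hr] with t ht using P.deriv_exponent ht

theorem contDiffAt_multiplier (hτ : τ₀ ≤ τ) (hr : 0 < r) : ContDiffAt ℝ 1 (P.multiplier τ) r := by
  have hscale := P.scale_pos
  have hs : 0 < r + P.shift τ := add_pos hr (P.shift_pos hτ)
  have hX : 1 + (r + P.shift τ) / P.scale ≠ 0 := by positivity
  unfold multiplier profile
  fun_prop (disch := simp_all [hs.ne'])

theorem contDiffAt_correction (hτ : τ₀ ≤ τ) (hr : 0 < r) : ContDiffAt ℝ 1 (P.correction τ) r := by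
  have hscale := P.scale_pos
  have hs : 0 < r + P.shift τ := add_pos hr (P.shift_pos hτ)
  have hX : 1 + (r + P.shift τ) / P.scale ≠ 0 := by positivity
  unfold correction profileDeriv
  fun_prop (disch := simp_all [hs.ne'])

theorem contDiffAt_exponent (hr : 0 < r) : ContDiffAt ℝ 2 P.exponent r := by
  have hβ := P.β_pos
  have : 1 + r ≠ 0 := by positivity
  have : 1 + P.β * r ≠ 0 := by positivity
  unfold exponent
  fun_prop (disch := assumption)

end CarlemanParameters

/-! ### The Carleman estimate -/

section Carleman

variable {d : ℕ}

/-- The long-range potential `V₁` and the short-range potential `V₂` of the Schrödinger operator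
`-Δ + V₁ + V₂`. -/
structure IsLongRangePotential (a γ : ℝ) (V₁ V₂ : Ed d → ℝ) : Prop where
  contDiff_left : ContDiff ℝ 1 V₁
  abs_left_le : ∀ x, |V₁ x| ≤ a * (1 + ‖x‖) ^ (-γ)
  radialDeriv_left_le : ∀ x, radialDeriv V₁ x ≤ a * (1 + ‖x‖) ^ (-γ - 1)
  abs_right_le : ∀ x, |V₂ x| ≤ a * (1 + ‖x‖) ^ (-γ - 1)

/-- The real and imaginary parts of the equation `-Δu + Vu + isu - τu = f` for `u = u₁ + iu₂` of
class `C²` and `f = f₁ + if₂`. -/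
structure IsResolventPair (s τ : ℝ) (V u₁ u₂ f₁ f₂ : Ed d → ℝ) : Prop where
  contDiff_left : ContDiff ℝ 2 u₁
  contDiff_right : ContDiff ℝ 2 u₂
  realLaplacian_left : ∀ x, realLaplacian u₁ x = (V x - τ) * u₁ x - s * u₂ x - f₁ x
  realLaplacian_right : ∀ x, realLaplacian u₂ x = (V x - τ) * u₂ x + s * u₁ x - f₂ x

namespace CarlemanParameters

variable {τ₀ α a γ : ℝ} (P : CarlemanParameters τ₀ α a γ) {τ V₂ c f : ℝ} {V u : Ed d → ℝ} {x : Ed d}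

/-- The function `exp(φ(|x|)) u`, where `φ` is the Carleman exponent. -/
def conjugate (u : Ed d → ℝ) (x : Ed d) : ℝ := Real.exp (P.exponent ‖x‖) * u x

/-- The Morawetz vector field of `P.conjugate u` for the multiplier and the correction of `P`. -/
def flux (τ : ℝ) (V u : Ed d → ℝ) : Fin d → Ed d → ℝ :=
  morawetzFlux (P.multiplier τ) (morawetzPotential (P.multiplier τ) P.exponent (P.correction τ) τ V)
    (P.conjugate u)

theorem contDiffAt_conjugate (hx : x ≠ 0) (hu : ContDiffAt ℝ 2 u x) :
    ContDiffAt ℝ 2 (P.conjugate u) x :=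
  (contDiffAt_comp_norm (P.contDiffAt_exponent (norm_pos_iff.mpr hx)) hx).exp.mul hu

theorem contDiffAt_flux (hτ : τ₀ ≤ τ) (hx : x ≠ 0) (hV : ContDiffAt ℝ 1 V x)
    (hu : ContDiffAt ℝ 2 u x) (i : Fin d) : ContDiffAt ℝ 1 (P.flux τ V u i) x := by
  have hr := norm_pos_iff.mpr hx
  exact contDiffAt_morawetzFlux hx (P.contDiffAt_multiplier hτ hr)
    (contDiffAt_morawetzPotential hx (P.contDiffAt_multiplier hτ hr) (P.contDiffAt_exponent hr)
      (P.contDiffAt_correction hτ hr) hV) (P.contDiffAt_conjugate hx hu) i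

theorem le_sum_partialDeriv_flux (hτ : τ₀ ≤ τ) (hx : x ≠ 0) (hV : ContDiffAt ℝ 1 V x)
    (hVx : |V x| ≤ a * (1 + ‖x‖) ^ (-γ)) (hVr : radialDeriv V x ≤ a * (1 + ‖x‖) ^ (-γ - 1))
    (hV₂ : |V₂| ≤ a * (1 + ‖x‖) ^ (-γ - 1)) (hu : ContDiffAt ℝ 2 u x)
    (hΔ : realLaplacian u x = (V x + V₂ - τ) * u x + c - f) :
    1 / (128 * P.K) * τ * P.profileDeriv (‖x‖ + P.shift τ) * P.conjugate u x ^ 2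
        - P.multiplier τ ‖x‖ ^ 2 / P.multiplierDeriv τ ‖x‖ * (Real.exp (P.exponent ‖x‖) * f) ^ 2
        + P.multiplier τ ‖x‖ * correctedRadialDeriv (P.conjugate u) x
          * (Real.exp (P.exponent ‖x‖) * c)
      ≤ ∑ i, partialDeriv i (P.flux τ V u i) x := by
  have hr := norm_pos_iff.mpr hx
  have hw' := (P.hasDerivAt_multiplier hτ hr).deriv
  have hdiv := le_sum_partialDeriv_morawetzFlux (τ := τ) (V₂ := V₂)
    (G := Real.exp (P.exponent ‖x‖) * (c - f)) hx (P.contDiffAt_multiplier hτ hr)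
    (P.contDiffAt_exponent hr) (P.contDiffAt_correction hτ hr) hV (P.contDiffAt_conjugate hx hu)
    (by rw [hw']; exact P.multiplierDeriv_div_two_le hτ hr)
    (by
      change realLaplacian (fun y => Real.exp (P.exponent ‖y‖) * u y) x = _
      rw [realLaplacian_exp_mul hx (P.contDiffAt_exponent hr) hu, hΔ]
      unfold conjugate
      ring)
  rw [hw', (P.hasDerivAt_correction hτ hr).deriv, P.deriv_deriv_exponent hr, P.deriv_exponent hr]
    at hdiv
  have hform := P.le_morawetz_form hτ hr hVx hVr hV₂ (P.conjugate u x)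
    (correctedRadialDeriv (P.conjugate u) x) (-(Real.exp (P.exponent ‖x‖) * f))
  rw [dissipation] at hform
  unfold flux
  linarith

theorem one_le_exp_exponent (x : Ed d) : 1 ≤ Real.exp (P.exponent ‖x‖) :=
  Real.one_le_exp (P.exponent_nonneg (norm_nonneg x))

theorem exp_exponent_le (x : Ed d) : Real.exp (P.exponent ‖x‖) ≤ Real.exp P.exponentSup :=
  Real.exp_le_exp.mpr (P.exponent_le (norm_nonneg x))

theorem correctedRadialDeriv_conjugate (hx : x ≠ 0) (hu : DifferentiableAt ℝ u x) :
    correctedRadialDeriv (P.conjugate u) x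
      = Real.exp (P.exponent ‖x‖)
        * (radialDeriv u x + (P.exponentDeriv ‖x‖ + ((d : ℝ) - 1) / 2 / ‖x‖) * u x) := by
  have hexp := (P.hasDerivAt_exponent (norm_pos_iff.mpr hx)).exp
  have hmul := radialDeriv_mul (g := fun y : Ed d => Real.exp (P.exponent ‖y‖))
    (hexp.differentiableAt.comp x ((contDiffAt_norm ℝ hx (n := 1)).differentiableAt one_ne_zero)) hu
  rw [radialDeriv_comp_norm hx hexp.differentiableAt, hexp.deriv] at hmul
  rw [correctedRadialDeriv, show P.conjugate u = fun y => Real.exp (P.exponent ‖y‖) * u y from rfl,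
    hmul]
  ring

theorem partialDeriv_conjugate (hx : x ≠ 0) (hu : DifferentiableAt ℝ u x) (i : Fin d) :
    partialDeriv i (P.conjugate u) x
      = Real.exp (P.exponent ‖x‖)
        * (partialDeriv i u x + P.exponentDeriv ‖x‖ * u x * (x i / ‖x‖)) := by
  have hexp := (P.hasDerivAt_exponent (norm_pos_iff.mpr hx)).exp
  have hmul := partialDeriv_mul (i := i) (g := fun y : Ed d => Real.exp (P.exponent ‖y‖))
    (hexp.differentiableAt.comp x ((contDiffAt_norm ℝ hx (n := 1)).differentiableAt one_ne_zero)) hu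
  rw [partialDeriv_comp_norm hx hexp.differentiableAt, hexp.deriv] at hmul
  rw [show P.conjugate u = fun y => Real.exp (P.exponent ‖y‖) * u y from rfl, hmul]
  ring

theorem conjugate_sq_add_gradNormSq_le (hx : x ≠ 0) (hu : DifferentiableAt ℝ u x) :
    P.conjugate u x ^ 2 + gradNormSq (P.conjugate u) x
      ≤ Real.exp P.exponentSup ^ 2 * (2 + 2 * P.b ^ 2) * (u x ^ 2 + gradNormSq u x) := by
  have hp := P.exponentDeriv_pos (norm_pos_iff.mpr hx)
  have hcoord : ∑ i, (x i / ‖x‖) ^ 2 = 1 := by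
    simp_rw [div_pow]
    rw [← Finset.sum_div, ← norm_sq_eq_sum_sq,
      div_self (pow_ne_zero 2 (norm_ne_zero_iff.mpr hx))]
  have hgrad : gradNormSq (P.conjugate u) x ≤ Real.exp (P.exponent ‖x‖) ^ 2
      * (2 * gradNormSq u x + 2 * P.exponentDeriv ‖x‖ ^ 2 * u x ^ 2) := by
    calc gradNormSq (P.conjugate u) x
        ≤ ∑ i, Real.exp (P.exponent ‖x‖) ^ 2 * (2 * partialDeriv i u x ^ 2
            + 2 * P.exponentDeriv ‖x‖ ^ 2 * u x ^ 2 * (x i / ‖x‖) ^ 2) :=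
          Finset.sum_le_sum fun i _ => by
            rw [P.partialDeriv_conjugate hx hu, mul_pow]
            refine mul_le_mul_of_nonneg_left ?_ (sq_nonneg _)
            linarith [add_sq_le (a := partialDeriv i u x)
              (b := P.exponentDeriv ‖x‖ * u x * (x i / ‖x‖))]
      _ = _ := by
          rw [← Finset.mul_sum, Finset.sum_add_distrib, ← Finset.mul_sum, ← Finset.mul_sum, hcoord,
            gradNormSq, mul_one]
  have hexp_sq := pow_le_pow_left₀ (Real.exp_pos _).le (P.exp_exponent_le x) 2
  have hp_sq := pow_le_pow_left₀ hp.le (P.exponentDeriv_le (norm_pos_iff.mpr hx)) 2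
  have hg := gradNormSq_nonneg u x
  calc P.conjugate u x ^ 2 + gradNormSq (P.conjugate u) x
      ≤ Real.exp (P.exponent ‖x‖) ^ 2
        * (u x ^ 2 + (2 * gradNormSq u x + 2 * P.exponentDeriv ‖x‖ ^ 2 * u x ^ 2)) := by
        rw [conjugate]; linarith
    _ ≤ Real.exp P.exponentSup ^ 2 * ((2 + 2 * P.b ^ 2) * (u x ^ 2 + gradNormSq u x)) := by
        refine mul_le_mul hexp_sq ?_ (by positivity) (by positivity)
        nlinarith [mul_le_mul_of_nonneg_right hp_sq (sq_nonneg (u x)), sq_nonneg (u x),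
          mul_nonneg (sq_nonneg P.b) hg]
    _ = _ := by ring

theorem abs_morawetzPotential_le (hd : 1 ≤ d) (hτ : τ₀ ≤ τ) (hx : x ≠ 0) (hV : |V x| ≤ a) :
    |morawetzPotential (P.multiplier τ) P.exponent (P.correction τ) τ V x|
      ≤ P.scale / α / 2 * (τ + P.b ^ 2 + a) + ((d : ℝ) - 1) / 4 * (P.scale / α / P.shift τ ^ 2)
        + √τ := by
  have hr := norm_pos_iff.mpr hx
  have hτ0 := P.pos_of_τ₀_le hτ
  have hd' : 0 ≤ ((d : ℝ) - 1) / 4 :=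
    div_nonneg (sub_nonneg.mpr (Nat.one_le_cast.mpr hd)) zero_le_four
  have hw := P.multiplier_nonneg hτ hr
  have hcurvature := mul_le_mul_of_nonneg_left (P.multiplier_div_sq_le hτ hr) hd'
  have hcurvature0 : 0 ≤ ((d : ℝ) - 1) / 4 * (P.multiplier τ ‖x‖ / ‖x‖ ^ 2) := by positivity
  have hp_sq := pow_le_pow_left₀ (P.exponentDeriv_pos hr).le (P.exponentDeriv_le hr) 2
  have henergy : |P.multiplier τ ‖x‖ / 2 * (τ + P.exponentDeriv ‖x‖ ^ 2 - V x)|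
      ≤ P.scale / α / 2 * (τ + P.b ^ 2 + a) := by
    rw [abs_mul, abs_of_nonneg (by positivity)]
    refine mul_le_mul (by linarith [P.multiplier_le hτ hr]) ?_ (abs_nonneg _)
      (by linarith [P.multiplier_le hτ hr])
    have := abs_le.mp hV
    exact abs_le.mpr ⟨by nlinarith [sq_nonneg P.b, sq_nonneg (P.exponentDeriv ‖x‖)], by linarith⟩
  rw [morawetzPotential, P.deriv_exponent hr]
  have := abs_le.mp henergy
  have := P.correction_le hτ hr
  have := P.correction_nonneg hτ hr
  exact abs_le.mpr ⟨by linarith, by linarith⟩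

theorem exists_forall_abs_flux_le (hτ : τ₀ ≤ τ) :
    ∃ C, ∀ (V u : Ed d → ℝ) (x : Ed d), x ≠ 0 → |V x| ≤ a → DifferentiableAt ℝ u x → ∀ i,
      |P.flux τ V u i x| ≤ C * (u x ^ 2 + gradNormSq u x) := by
  set A : ℝ := P.scale / α + P.scale / α / P.shift τ ^ 2 + (P.scale / α / 2 * (τ + P.b ^ 2 + a)
    + ((d : ℝ) - 1) / 4 * (P.scale / α / P.shift τ ^ 2) + √τ) with hA
  refine ⟨A * (d + 2) * (Real.exp P.exponentSup ^ 2 * (2 + 2 * P.b ^ 2)),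
    fun V u x hx hV hu i => ?_⟩
  have hr := norm_pos_iff.mpr hx
  have hw := P.multiplier_nonneg hτ hr
  have hw_le := P.multiplier_le hτ hr
  have hw_div_sq := P.multiplier_div_sq_le hτ hr
  have hw_div_sq0 : 0 ≤ P.multiplier τ ‖x‖ / ‖x‖ ^ 2 := by positivity
  have hK := P.abs_morawetzPotential_le i.pos hτ hx hV
  have hK0 := abs_nonneg
    (morawetzPotential (P.multiplier τ) P.exponent (P.correction τ) τ V x)
  have hw_div : P.multiplier τ ‖x‖ / ‖x‖ ≤ P.multiplier τ ‖x‖ + P.multiplier τ ‖x‖ / ‖x‖ ^ 2 := by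
    have hinv : ‖x‖⁻¹ ≤ 1 + (‖x‖ ^ 2)⁻¹ := by
      rw [← inv_pow]; nlinarith [sq_nonneg (‖x‖⁻¹ - 1)]
    simpa only [div_eq_mul_inv, mul_add, mul_one] using mul_le_mul_of_nonneg_left hinv hw
  calc |P.flux τ V u i x|
      ≤ A * (d + 2) * (P.conjugate u x ^ 2 + gradNormSq (P.conjugate u) x) :=
        abs_morawetzFlux_le hx hw (by linarith) (by linarith) (by linarith) i
    _ ≤ A * (d + 2) * (Real.exp P.exponentSup ^ 2 * (2 + 2 * P.b ^ 2)
          * (u x ^ 2 + gradNormSq u x)) := by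
        have : 0 ≤ A := by linarith
        exact mul_le_mul_of_nonneg_left (P.conjugate_sq_add_gradNormSq_le hx hu) (by positivity)
    _ = _ := by ring

end CarlemanParameters

end Carleman

section CarlemanEstimate

variable {d : ℕ}

theorem continuous_one_add_norm_rpow {E : Type*} [SeminormedAddCommGroup E] (t : ℝ) :
    Continuous fun x : E => (1 + ‖x‖) ^ t :=
  (continuous_const.add continuous_norm).rpow_const fun x =>
    Or.inl (by positivity : 1 + ‖x‖ ≠ 0)

theorem one_add_norm_rpow_le_one {E : Type*} [SeminormedAddCommGroup E] {t : ℝ} (ht : t ≤ 0)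
    (x : E) : (1 + ‖x‖) ^ t ≤ 1 :=
  Real.rpow_le_one_of_one_le_of_nonpos (by linarith [norm_nonneg x]) ht

section PolynomialWeights

variable {E : Type*} [NormedAddCommGroup E] [MeasurableSpace E] [OpensMeasurableSpace E]
  [SecondCountableTopologyEither E ℝ] {μ : Measure E} {t t' : ℝ} {g : E → ℝ}

theorem integrable_one_add_norm_rpow_mul_of_le (ht : t ≤ t')
    (hg : Integrable (fun x => (1 + ‖x‖) ^ t' * g x) μ) :
    Integrable (fun x => (1 + ‖x‖) ^ t * g x) μ := by
  have hbdd := hg.bdd_mul (c := 1) (continuous_one_add_norm_rpow (t - t')).aestronglyMeasurable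
    (.of_forall fun x => by
      rw [Real.norm_of_nonneg (by positivity)]
      exact one_add_norm_rpow_le_one (sub_nonpos.mpr ht) x)
  refine hbdd.congr (.of_forall fun x => ?_)
  simp only [← mul_assoc]
  rw [← Real.rpow_add (by positivity), sub_add_cancel]

theorem integrable_one_add_norm_rpow_mul_of_nonpos (ht : t ≤ 0) (hg : Integrable g μ) :
    Integrable (fun x => (1 + ‖x‖) ^ t * g x) μ :=
  integrable_one_add_norm_rpow_mul_of_le ht (by simpa only [Real.rpow_zero, one_mul] using hg)

theorem integrable_of_one_add_norm_rpow_mul (ht : 0 ≤ t)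
    (hg : Integrable (fun x => (1 + ‖x‖) ^ t * g x) μ) : Integrable g μ := by
  simpa only [Real.rpow_zero, one_mul] using integrable_one_add_norm_rpow_mul_of_le ht hg

theorem integral_one_add_norm_rpow_mul_le_of_le (ht : t ≤ t') (hg_nonneg : ∀ x, 0 ≤ g x)
    (hg : Integrable (fun x => (1 + ‖x‖) ^ t' * g x) μ) :
    ∫ x, (1 + ‖x‖) ^ t * g x ∂μ ≤ ∫ x, (1 + ‖x‖) ^ t' * g x ∂μ :=
  integral_mono (integrable_one_add_norm_rpow_mul_of_le ht hg) hg fun x =>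
    mul_le_mul_of_nonneg_right
      (Real.rpow_le_rpow_of_exponent_le (le_add_of_nonneg_right (norm_nonneg x)) ht) (hg_nonneg x)

theorem integral_one_add_norm_rpow_mul_le_integral (ht : t ≤ 0) (hg_nonneg : ∀ x, 0 ≤ g x)
    (hg : Integrable g μ) : ∫ x, (1 + ‖x‖) ^ t * g x ∂μ ≤ ∫ x, g x ∂μ := by
  simpa only [Real.rpow_zero, one_mul] using integral_one_add_norm_rpow_mul_le_of_le ht hg_nonneg
    (t' := 0) (by simpa only [Real.rpow_zero, one_mul] using hg)

theorem integral_le_integral_one_add_norm_rpow_mul (ht : 0 ≤ t) (hg_nonneg : ∀ x, 0 ≤ g x)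
    (hg : Integrable (fun x => (1 + ‖x‖) ^ t * g x) μ) :
    ∫ x, g x ∂μ ≤ ∫ x, (1 + ‖x‖) ^ t * g x ∂μ := by
  simpa only [Real.rpow_zero, one_mul] using integral_one_add_norm_rpow_mul_le_of_le ht hg_nonneg hg

end PolynomialWeights

theorem continuous_gradNormSq {v : Ed d → ℝ} (hv : ContDiff ℝ 2 v) : Continuous (gradNormSq v) :=
  continuous_iff_continuousAt.mpr fun _ => (contDiffAt_gradNormSq hv.contDiffAt).continuousAt

theorem abs_mul_radialDeriv_sub_le {u₁ u₂ : Ed d → ℝ} {x : Ed d} (hx : x ≠ 0) {t : ℝ} (ht : 0 < t) :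
    |u₁ x * radialDeriv u₂ x - u₂ x * radialDeriv u₁ x|
      ≤ t * (u₁ x ^ 2 + u₂ x ^ 2) + (gradNormSq u₁ x + gradNormSq u₂ x) / t := by
  have hyoung (y z : ℝ) : |y * z| ≤ t * y ^ 2 + z ^ 2 / t := by
    have hsq : (y * z) ^ 2 = t * y ^ 2 * (z ^ 2 / t) := by field_simp
    refine abs_le_of_sq_le_sq ?_ (by positivity)
    nlinarith [show 0 ≤ t * y ^ 2 by positivity, show 0 ≤ z ^ 2 / t by positivity]
  calc |u₁ x * radialDeriv u₂ x - u₂ x * radialDeriv u₁ x|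
      ≤ |u₁ x * radialDeriv u₂ x| + |u₂ x * radialDeriv u₁ x| := abs_sub _ _
    _ ≤ t * (u₁ x ^ 2 + u₂ x ^ 2) + (radialDeriv u₁ x ^ 2 + radialDeriv u₂ x ^ 2) / t := by
        rw [add_div]
        linarith [hyoung (u₁ x) (radialDeriv u₂ x), hyoung (u₂ x) (radialDeriv u₁ x)]
    _ ≤ _ := by
        have := radialDeriv_sq_le_gradNormSq hx u₁
        have := radialDeriv_sq_le_gradNormSq hx u₂
        gcongr

namespace CarlemanParameters

variable {τ₀ α a γ : ℝ} (P : CarlemanParameters τ₀ α a γ) {s τ : ℝ} {V₁ V₂ u₁ u₂ f₁ f₂ : Ed d → ℝ}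
  {x : Ed d}

/-- The constant in front of the weighted `L²` norm of `u` in the Carleman estimate. -/
def gainConst : ℝ := 1 / (128 * P.K) * 2 ^ (-(1 + α))

/-- The constant in front of the energy produced by `s` in the Carleman estimate. -/
def energyConst : ℝ := P.scale / α * Real.exp P.exponentSup ^ 2

/-- The constant in front of the weighted `L²` norm of `f` in the Carleman estimate. -/
def sourceConst : ℝ := P.scale / α * (6 / α) * Real.exp P.exponentSup ^ 2

theorem gainConst_pos : 0 < P.gainConst := by
  have := P.K_pos
  unfold gainConst
  positivity

theorem energyConst_pos : 0 < P.energyConst := by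
  have := P.scale_pos
  have := P.α_pos
  unfold energyConst
  positivity

theorem sourceConst_pos : 0 < P.sourceConst := by
  have := P.scale_pos
  have := P.α_pos
  unfold sourceConst
  positivity

theorem gainConst_mul_le (hτ : τ₀ ≤ τ) (hx : x ≠ 0) (u : Ed d → ℝ) :
    P.gainConst * τ * ((1 + ‖x‖) ^ (-(1 + α)) * u x ^ 2)
      ≤ 1 / (128 * P.K) * τ * P.profileDeriv (‖x‖ + P.shift τ) * P.conjugate u x ^ 2 := by
  have hr := norm_pos_iff.mpr hx
  have hK := P.K_pos
  have hτ0 := P.pos_of_τ₀_le hτ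
  have hweight : 2 ^ (-(1 + α)) * (1 + ‖x‖) ^ (-(1 + α)) ≤ P.profileDeriv (‖x‖ + P.shift τ) := by
    rw [← Real.mul_rpow zero_le_two (by positivity), neg_add']
    exact P.rpow_le_profileDeriv hτ hr
  have hconjugate : u x ^ 2 ≤ P.conjugate u x ^ 2 := by
    rw [conjugate, mul_pow]
    exact le_mul_of_one_le_left (sq_nonneg _) (one_le_pow₀ (P.one_le_exp_exponent x))
  calc P.gainConst * τ * ((1 + ‖x‖) ^ (-(1 + α)) * u x ^ 2)
      = 1 / (128 * P.K) * τ * (2 ^ (-(1 + α)) * (1 + ‖x‖) ^ (-(1 + α))) * u x ^ 2 := by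
        rw [gainConst]; ring
    _ ≤ _ := by
        have := P.profileDeriv_pos (add_pos hr (P.shift_pos hτ))
        gcongr

theorem mul_exp_mul_sq_le (hτ : τ₀ ≤ τ) (hx : x ≠ 0) (f : ℝ) :
    P.multiplier τ ‖x‖ ^ 2 / P.multiplierDeriv τ ‖x‖ * (Real.exp (P.exponent ‖x‖) * f) ^ 2
      ≤ P.sourceConst * ((1 + ‖x‖) ^ (1 + α) * f ^ 2) := by
  have hr := norm_pos_iff.mpr hx
  calc _ ≤ P.scale / α * (6 / α) * (1 + ‖x‖) ^ (1 + α) * (Real.exp P.exponentSup * f) ^ 2 := by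
        have := P.multiplierDeriv_pos hτ hr
        rw [mul_pow, mul_pow]
        exact mul_le_mul (P.multiplier_sq_div_multiplierDeriv_le hτ hr)
          (mul_le_mul_of_nonneg_right (pow_le_pow_left₀ (Real.exp_pos _).le (P.exp_exponent_le x) 2)
            (sq_nonneg f)) (by positivity)
          ((by positivity : (0 : ℝ) ≤ _).trans (P.multiplier_sq_div_multiplierDeriv_le hτ hr))
    _ = _ := by rw [sourceConst]; ring

theorem neg_energyConst_mul_le (hτ : τ₀ ≤ τ) (hx : x ≠ 0) (hu₁ : DifferentiableAt ℝ u₁ x)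
    (hu₂ : DifferentiableAt ℝ u₂ x) :
    -(|s| * P.energyConst * (√τ * (u₁ x ^ 2 + u₂ x ^ 2)
        + (gradNormSq u₁ x + gradNormSq u₂ x) / √τ))
      ≤ P.multiplier τ ‖x‖ * correctedRadialDeriv (P.conjugate u₁) x
          * (Real.exp (P.exponent ‖x‖) * -(s * u₂ x))
        + P.multiplier τ ‖x‖ * correctedRadialDeriv (P.conjugate u₂) x
          * (Real.exp (P.exponent ‖x‖) * (s * u₁ x)) := by
  have hr := norm_pos_iff.mpr hx
  have hw := P.multiplier_nonneg hτ hr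
  have hmul : P.multiplier τ ‖x‖ * Real.exp (P.exponent ‖x‖) ^ 2 ≤ P.energyConst :=
    mul_le_mul (P.multiplier_le hτ hr)
      (pow_le_pow_left₀ (Real.exp_pos _).le (P.exp_exponent_le x) 2) (by positivity)
      (hw.trans (P.multiplier_le hτ hr))
  have hcurrent := abs_mul_radialDeriv_sub_le (u₁ := u₁) (u₂ := u₂) hx
    (Real.sqrt_pos.mpr (P.pos_of_τ₀_le hτ))
  rw [P.correctedRadialDeriv_conjugate hx hu₁, P.correctedRadialDeriv_conjugate hx hu₂]
  refine neg_le.mp ((neg_le_abs _).trans ?_)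
  calc _ = |s| * (P.multiplier τ ‖x‖ * Real.exp (P.exponent ‖x‖) ^ 2)
        * |u₁ x * radialDeriv u₂ x - u₂ x * radialDeriv u₁ x| := by
        rw [← abs_of_nonneg (by positivity :
          0 ≤ P.multiplier τ ‖x‖ * Real.exp (P.exponent ‖x‖) ^ 2), ← abs_mul, ← abs_mul]
        congr 1
        ring
    _ ≤ _ := by
        refine mul_le_mul ?_ hcurrent (abs_nonneg _)
          (mul_nonneg (abs_nonneg s) P.energyConst_pos.le)
        exact mul_le_mul_of_nonneg_left hmul (abs_nonneg s)

theorem le_sum_partialDeriv_flux_add (hV : IsLongRangePotential a γ V₁ V₂)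
    (hu : IsResolventPair s τ (fun x => V₁ x + V₂ x) u₁ u₂ f₁ f₂) (hτ : τ₀ ≤ τ) (hx : x ≠ 0) :
    P.gainConst * τ * ((1 + ‖x‖) ^ (-(1 + α)) * (u₁ x ^ 2 + u₂ x ^ 2))
        - |s| * P.energyConst * (√τ * (u₁ x ^ 2 + u₂ x ^ 2)
          + (gradNormSq u₁ x + gradNormSq u₂ x) / √τ)
        - P.sourceConst * ((1 + ‖x‖) ^ (1 + α) * (f₁ x ^ 2 + f₂ x ^ 2))
      ≤ ∑ i, partialDeriv i (fun y => P.flux τ V₁ u₁ i y + P.flux τ V₁ u₂ i y) x := by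
  have hVx : ContDiffAt ℝ 1 V₁ x := hV.contDiff_left.contDiffAt
  have hu₁ : ContDiffAt ℝ 2 u₁ x := hu.contDiff_left.contDiffAt
  have hu₂ : ContDiffAt ℝ 2 u₂ x := hu.contDiff_right.contDiffAt
  have hdiff {u : Ed d → ℝ} (hu : ContDiffAt ℝ 2 u x) (i : Fin d) :
      DifferentiableAt ℝ (P.flux τ V₁ u i) x :=
    (P.contDiffAt_flux hτ hx hVx hu i).differentiableAt one_ne_zero
  have hdiv₁ := P.le_sum_partialDeriv_flux (c := -(s * u₂ x)) (f := f₁ x) hτ hx hVx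
    (hV.abs_left_le x) (hV.radialDeriv_left_le x) (hV.abs_right_le x) hu₁
    (by rw [hu.realLaplacian_left]; ring)
  have hdiv₂ := P.le_sum_partialDeriv_flux (c := s * u₁ x) (f := f₂ x) hτ hx hVx
    (hV.abs_left_le x) (hV.radialDeriv_left_le x) (hV.abs_right_le x) hu₂
    (hu.realLaplacian_right x)
  simp only [partialDeriv_add (hdiff hu₁ _) (hdiff hu₂ _), Finset.sum_add_distrib]
  linarith [P.gainConst_mul_le hτ hx u₁, P.gainConst_mul_le hτ hx u₂,
    P.mul_exp_mul_sq_le hτ hx (f₁ x), P.mul_exp_mul_sq_le hτ hx (f₂ x),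
    P.neg_energyConst_mul_le (s := s) hτ hx (hu₁.differentiableAt two_ne_zero)
      (hu₂.differentiableAt two_ne_zero)]

theorem mul_integral_le (hd : 2 ≤ d) (hV : IsLongRangePotential a γ V₁ V₂)
    (hu : IsResolventPair s τ (fun x => V₁ x + V₂ x) u₁ u₂ f₁ f₂) (hτ : τ₀ ≤ τ)
    (hu_int : Integrable fun x => u₁ x ^ 2 + u₂ x ^ 2)
    (hgrad_int : Integrable fun x => gradNormSq u₁ x + gradNormSq u₂ x)
    (hf_int : Integrable fun x => (1 + ‖x‖) ^ (1 + α) * (f₁ x ^ 2 + f₂ x ^ 2)) :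
    P.gainConst * τ * ∫ x, (1 + ‖x‖) ^ (-(1 + α)) * (u₁ x ^ 2 + u₂ x ^ 2)
      ≤ |s| * P.energyConst * (√τ * (∫ x, u₁ x ^ 2 + u₂ x ^ 2)
          + (∫ x, gradNormSq u₁ x + gradNormSq u₂ x) / √τ)
        + P.sourceConst * ∫ x, (1 + ‖x‖) ^ (1 + α) * (f₁ x ^ 2 + f₂ x ^ 2) := by
  obtain ⟨C, hC⟩ := P.exists_forall_abs_flux_le (d := d) hτ
  have hweighted_int : Integrable fun x => (1 + ‖x‖) ^ (-(1 + α)) * (u₁ x ^ 2 + u₂ x ^ 2) :=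
    integrable_one_add_norm_rpow_mul_of_nonpos (by linarith [P.α_pos]) hu_int
  have henergy_int : Integrable fun x => √τ * (u₁ x ^ 2 + u₂ x ^ 2)
      + (gradNormSq u₁ x + gradNormSq u₂ x) / √τ :=
    (hu_int.const_mul _).add (hgrad_int.div_const _)
  have hdiff_int := (hweighted_int.const_mul (P.gainConst * τ)).sub
    (henergy_int.const_mul (|s| * P.energyConst))
  have hcont : Continuous fun x =>
      C * ((u₁ x ^ 2 + u₂ x ^ 2) + (gradNormSq u₁ x + gradNormSq u₂ x)) := by
    have := continuous_gradNormSq hu.contDiff_left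
    have := continuous_gradNormSq hu.contDiff_right
    have := hu.contDiff_left.continuous
    have := hu.contDiff_right.continuous
    fun_prop
  have hnonpos := integral_nonpos_of_le_divergence_of_ne_zero (by simpa using hd)
    (fun i x hx => (P.contDiffAt_flux hτ hx hV.contDiff_left.contDiffAt
      hu.contDiff_left.contDiffAt i).add (P.contDiffAt_flux hτ hx hV.contDiff_left.contDiffAt
      hu.contDiff_right.contDiffAt i)) hcont ((hu_int.add hgrad_int).const_mul C)
    (fun i x hx => by
      have hVa : |V₁ x| ≤ a := (hV.abs_left_le x).trans (mul_le_of_le_one_right P.a_pos.le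
        (one_add_norm_rpow_le_one (by linarith [P.α_pos, P.α_le_half_γ]) x))
      linarith [abs_add_le (P.flux τ V₁ u₁ i x) (P.flux τ V₁ u₂ i x),
        hC V₁ u₁ x hx hVa (hu.contDiff_left.differentiable two_ne_zero x) i,
        hC V₁ u₂ x hx hVa (hu.contDiff_right.differentiable two_ne_zero x) i])
    (hdiff_int.sub (hf_int.const_mul P.sourceConst))
    fun x hx => P.le_sum_partialDeriv_flux_add hV hu hτ hx
  rw [integral_sub' hdiff_int (hf_int.const_mul _), integral_sub' (hweighted_int.const_mul _)
    (henergy_int.const_mul _)] at hnonpos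
  simp only [integral_const_mul] at hnonpos
  rw [integral_add (hu_int.const_mul _) (hgrad_int.div_const _), integral_const_mul,
    integral_div] at hnonpos
  linarith

end CarlemanParameters

end CarlemanEstimate

/-! ### Energy inequalities -/

section Energy

variable {d : ℕ}

/-- A nonnegative weight `ψ` of class `C¹` with `|∇ψ| ≤ ηψ`. -/
structure IsSlowlyVarying (η : ℝ) (ψ : Ed d → ℝ) : Prop where
  rate_nonneg : 0 ≤ η
  contDiff : ContDiff ℝ 1 ψ
  nonneg : ∀ x, 0 ≤ ψ x
  gradNormSq_le : ∀ x, gradNormSq ψ x ≤ (η * ψ x) ^ 2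

variable {s τ b η : ℝ} {ψ u u' v v' V u₁ u₂ f₁ f₂ Q : Ed d → ℝ} {x : Ed d}

theorem abs_mul_add_mul_le (y y' z z' : ℝ) {θ : ℝ} (hθ : 0 < θ) :
    |y * z + y' * z'| ≤ θ * (y ^ 2 + y' ^ 2) + (z ^ 2 + z' ^ 2) / (4 * θ) := by
  have hyoung (y z : ℝ) : |y * z| ≤ θ * y ^ 2 + z ^ 2 / (4 * θ) := by
    have hsq : θ * y ^ 2 + z ^ 2 / (4 * θ) = |y * z| + (2 * θ * |y| - |z|) ^ 2 / (4 * θ) := by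
      rw [abs_mul, ← sq_abs y, ← sq_abs z]
      field_simp
      ring
    rw [hsq]
    exact le_add_of_nonneg_right (by positivity)
  calc |y * z + y' * z'| ≤ |y * z| + |y' * z'| := abs_add_le _ _
    _ ≤ (θ * y ^ 2 + z ^ 2 / (4 * θ)) + (θ * y' ^ 2 + z' ^ 2 / (4 * θ)) :=
        add_le_add (hyoung y z) (hyoung y' z')
    _ = θ * (y ^ 2 + y' ^ 2) + (z ^ 2 + z' ^ 2) / (4 * θ) := by ring

theorem abs_mul_sub_mul_le (y y' z z' : ℝ) {θ : ℝ} (hθ : 0 < θ) :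
    |y * z' - y' * z| ≤ θ * (y ^ 2 + y' ^ 2) + (z ^ 2 + z' ^ 2) / (4 * θ) := by
  simpa only [mul_neg, neg_sq, add_comm (z' ^ 2), ← sub_eq_add_neg] using
    abs_mul_add_mul_le y y' z' (-z) hθ

theorem partialDeriv_neg (i : Fin d) (v : Ed d → ℝ) (x : Ed d) :
    partialDeriv i (fun y => -v y) x = -partialDeriv i v x := by
  simp [partialDeriv]

theorem isSlowlyVarying_one : IsSlowlyVarying 0 (fun _ : Ed d => 1) where
  rate_nonneg := le_rfl
  contDiff := contDiff_const
  nonneg _ := zero_le_one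
  gradNormSq_le x := by simp [gradNormSq, partialDeriv]

namespace IsSlowlyVarying

theorem abs_sum_partialDeriv_mul_le (hψ : IsSlowlyVarying η ψ) (c : ℝ) :
    |∑ i, partialDeriv i ψ x * (c * partialDeriv i v x)|
      ≤ η / 2 * (ψ x * (c ^ 2 + gradNormSq v x)) := by
  have hrate := hψ.rate_nonneg
  have hψx := hψ.nonneg x
  have hgrad := gradNormSq_nonneg v x
  refine abs_le_of_sq_le_sq ?_ (by positivity)
  calc (∑ i, partialDeriv i ψ x * (c * partialDeriv i v x)) ^ 2
      ≤ gradNormSq ψ x * ∑ i, (c * partialDeriv i v x) ^ 2 :=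
        Finset.sum_mul_sq_le_sq_mul_sq _ _ _
    _ = gradNormSq ψ x * (c ^ 2 * gradNormSq v x) := by
        simp only [mul_pow, ← Finset.mul_sum, gradNormSq]
    _ ≤ (η * ψ x) ^ 2 * ((c ^ 2 + gradNormSq v x) ^ 2 / 4) :=
        mul_le_mul (hψ.gradNormSq_le x) (by nlinarith [sq_nonneg (c ^ 2 - gradNormSq v x)])
          (by positivity) (by positivity)
    _ = _ := by ring

theorem le_sum_partialDeriv (hψ : IsSlowlyVarying η ψ) (hu : DifferentiableAt ℝ u x)
    (hv : ContDiffAt ℝ 2 v x) :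
    ψ x * ((∑ i, partialDeriv i u x * partialDeriv i v x) + u x * realLaplacian v x)
        - η / 2 * (ψ x * (u x ^ 2 + gradNormSq v x))
      ≤ ∑ i, partialDeriv i (fun y => ψ y * u y * partialDeriv i v y) x := by
  have hψx : DifferentiableAt ℝ ψ x := hψ.contDiff.contDiffAt.differentiableAt one_ne_zero
  have hweight := neg_le_of_abs_le (hψ.abs_sum_partialDeriv_mul_le (x := x) (v := v) (u x))
  rw [sum_partialDeriv_mul_partialDeriv (hψx.fun_mul hu) hv]
  simp only [partialDeriv_mul hψx hu, add_mul, Finset.sum_add_distrib]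
  have hleft : ∑ i, ψ x * partialDeriv i u x * partialDeriv i v x
      = ψ x * ∑ i, partialDeriv i u x * partialDeriv i v x := by
    rw [Finset.mul_sum]
    exact Finset.sum_congr rfl fun i _ => mul_assoc _ _ _
  have hright : ∑ i, u x * partialDeriv i ψ x * partialDeriv i v x
      = ∑ i, partialDeriv i ψ x * (u x * partialDeriv i v x) :=
    Finset.sum_congr rfl fun i _ => by ring
  rw [hleft, hright]
  linarith

theorem le_sum_partialDeriv_add (hψ : IsSlowlyVarying η ψ) (hu : DifferentiableAt ℝ u x)
    (hu' : DifferentiableAt ℝ u' x) (hv : ContDiffAt ℝ 2 v x) (hv' : ContDiffAt ℝ 2 v' x) :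
    ψ x * ((∑ i, partialDeriv i u x * partialDeriv i v x) + u x * realLaplacian v x)
        + ψ x * ((∑ i, partialDeriv i u' x * partialDeriv i v' x) + u' x * realLaplacian v' x)
        - η / 2 * (ψ x * (u x ^ 2 + u' x ^ 2) + ψ x * (gradNormSq v x + gradNormSq v' x))
      ≤ ∑ i, partialDeriv i (fun y => ψ y * u y * partialDeriv i v y
          + ψ y * u' y * partialDeriv i v' y) x := by
  have hψx : DifferentiableAt ℝ ψ x := hψ.contDiff.contDiffAt.differentiableAt one_ne_zero
  have hadd (i : Fin d) := partialDeriv_add (i := i)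
    ((hψx.fun_mul hu).fun_mul (differentiableAt_partialDeriv hv i))
    ((hψx.fun_mul hu').fun_mul (differentiableAt_partialDeriv hv' i))
  simp only [hadd, Finset.sum_add_distrib]
  linarith [hψ.le_sum_partialDeriv hu hv, hψ.le_sum_partialDeriv hu' hv']

theorem abs_mul_mul_partialDeriv_le (hψ : IsSlowlyVarying η ψ) (i : Fin d) :
    |ψ x * u x * partialDeriv i v x| ≤ ψ x * (u x ^ 2 + gradNormSq v x) := by
  have hgrad := gradNormSq_nonneg v x
  rw [mul_assoc, abs_mul, abs_of_nonneg (hψ.nonneg x)]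
  exact mul_le_mul_of_nonneg_left
    ((abs_mul_partialDeriv_le (u x) i).trans (half_le_self (by positivity))) (hψ.nonneg x)

theorem integral_le_of_le_divergence (hψ : IsSlowlyVarying η ψ) (hd : 2 ≤ d)
    (hu : ContDiff ℝ 1 u) (hu' : ContDiff ℝ 1 u') (hv : ContDiff ℝ 2 v) (hv' : ContDiff ℝ 2 v')
    (hu_int : Integrable fun x => ψ x * (u x ^ 2 + u' x ^ 2))
    (hgrad_int : Integrable fun x => ψ x * (gradNormSq v x + gradNormSq v' x))
    {H : Ed d → ℝ} (hH : Integrable H)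
    (hle : ∀ x, H x ≤ ψ x * ((∑ i, partialDeriv i u x * partialDeriv i v x)
        + u x * realLaplacian v x)
      + ψ x * ((∑ i, partialDeriv i u' x * partialDeriv i v' x) + u' x * realLaplacian v' x)) :
    ∫ x, H x ≤ η / 2 * ((∫ x, ψ x * (u x ^ 2 + u' x ^ 2))
      + ∫ x, ψ x * (gradNormSq v x + gradNormSq v' x)) := by
  have hflux {u v : Ed d → ℝ} (hu : ContDiff ℝ 1 u) (hv : ContDiff ℝ 2 v) (i : Fin d) (x : Ed d) :
      ContDiffAt ℝ 1 (fun y => ψ y * u y * partialDeriv i v y) x :=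
    (hψ.contDiff.mul hu).contDiffAt.mul (contDiffAt_partialDeriv hv.contDiffAt (by norm_num) i)
  have hcont : Continuous fun x => ψ x * (u x ^ 2 + u' x ^ 2)
      + ψ x * (gradNormSq v x + gradNormSq v' x) := by
    have := hψ.contDiff.continuous
    have := hu.continuous
    have := hu'.continuous
    have := continuous_gradNormSq hv
    have := continuous_gradNormSq hv'
    fun_prop
  have hnonpos := integral_nonpos_of_le_divergence_of_ne_zero (by simpa using hd)
    (fun i x _ => (hflux hu hv i x).add (hflux hu' hv' i x)) hcont (hu_int.add hgrad_int)
    (fun i x _ => by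
      linarith [abs_add_le (ψ x * u x * partialDeriv i v x) (ψ x * u' x * partialDeriv i v' x),
        hψ.abs_mul_mul_partialDeriv_le (x := x) (u := u) (v := v) i,
        hψ.abs_mul_mul_partialDeriv_le (x := x) (u := u') (v := v') i])
    (hH.sub ((hu_int.add hgrad_int).const_mul (η / 2))) fun x _ =>
      (sub_le_sub_right (hle x) _).trans (hψ.le_sum_partialDeriv_add
        (hu.differentiable one_ne_zero x) (hu'.differentiable one_ne_zero x) hv.contDiffAt
        hv'.contDiffAt)
  rw [integral_sub' hH ((hu_int.add hgrad_int).const_mul _), integral_const_mul,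
    integral_add' hu_int hgrad_int] at hnonpos
  linarith

end IsSlowlyVarying

namespace IsResolventPair

-- `u₂ + iu₁ = i (u₁ - iu₂)`, and conjugating the equation changes the sign of `s`.
theorem swap (hu : IsResolventPair s τ V u₁ u₂ f₁ f₂) :
    IsResolventPair (-s) τ V u₂ u₁ f₂ f₁ where
  contDiff_left := hu.contDiff_right
  contDiff_right := hu.contDiff_left
  realLaplacian_left x := by rw [hu.realLaplacian_right]; ring
  realLaplacian_right x := by rw [hu.realLaplacian_left]; ring

theorem integral_mul_gradNormSq_le (hu : IsResolventPair s τ V u₁ u₂ f₁ f₂)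
    (hψ : IsSlowlyVarying η ψ) (hd : 2 ≤ d) (hV : ∀ x, |V x| ≤ b)
    (hu_int : Integrable fun x => ψ x * (u₁ x ^ 2 + u₂ x ^ 2))
    (hgrad_int : Integrable fun x => ψ x * (gradNormSq u₁ x + gradNormSq u₂ x))
    (hQ_int : Integrable fun x => ψ x * Q x)
    (hQ : ∀ x, |u₁ x * f₁ x + u₂ x * f₂ x| ≤ Q x) :
    ∫ x, ψ x * (gradNormSq u₁ x + gradNormSq u₂ x) ≤
      η / 2 * ((∫ x, ψ x * (u₁ x ^ 2 + u₂ x ^ 2))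
        + ∫ x, ψ x * (gradNormSq u₁ x + gradNormSq u₂ x))
      + (τ + b) * (∫ x, ψ x * (u₁ x ^ 2 + u₂ x ^ 2)) + ∫ x, ψ x * Q x := by
  have hc₁ := hu.contDiff_left
  have hc₂ := hu.contDiff_right
  have hle := hψ.integral_le_of_le_divergence hd (hc₁.of_le one_le_two) (hc₂.of_le one_le_two)
    hc₁ hc₂ hu_int hgrad_int ((hgrad_int.sub (hu_int.const_mul (τ + b))).sub hQ_int) fun x => by
      have hpot : 0 ≤ (V x + b) * (u₁ x ^ 2 + u₂ x ^ 2) :=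
        mul_nonneg (by linarith [neg_le_of_abs_le (hV x)]) (by positivity)
      have hpoint : gradNormSq u₁ x + gradNormSq u₂ x - (τ + b) * (u₁ x ^ 2 + u₂ x ^ 2) - Q x
          ≤ (gradNormSq u₁ x + u₁ x * realLaplacian u₁ x)
            + (gradNormSq u₂ x + u₂ x * realLaplacian u₂ x) := by
        rw [hu.realLaplacian_left, hu.realLaplacian_right]
        linarith [le_of_abs_le (hQ x)]
      simp only [← sq, Pi.sub_apply]
      refine le_trans (le_of_eq ?_) ((mul_le_mul_of_nonneg_left hpoint (hψ.nonneg x)).trans_eq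
        (mul_add _ _ _))
      ring
  rw [integral_sub' (hgrad_int.sub (hu_int.const_mul _)) hQ_int,
    integral_sub' hgrad_int (hu_int.const_mul _), integral_const_mul] at hle
  linarith

theorem mul_integral_mul_sq_le (hu : IsResolventPair s τ V u₁ u₂ f₁ f₂)
    (hψ : IsSlowlyVarying η ψ) (hd : 2 ≤ d)
    (hu_int : Integrable fun x => ψ x * (u₁ x ^ 2 + u₂ x ^ 2))
    (hgrad_int : Integrable fun x => ψ x * (gradNormSq u₁ x + gradNormSq u₂ x))
    (hQ_int : Integrable fun x => ψ x * Q x)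
    (hQ : ∀ x, |u₁ x * f₂ x - u₂ x * f₁ x| ≤ Q x) :
    s * (∫ x, ψ x * (u₁ x ^ 2 + u₂ x ^ 2)) ≤
      η / 2 * ((∫ x, ψ x * (u₁ x ^ 2 + u₂ x ^ 2))
        + ∫ x, ψ x * (gradNormSq u₁ x + gradNormSq u₂ x)) + ∫ x, ψ x * Q x := by
  have hc₁ := hu.contDiff_left
  have hc₂ := hu.contDiff_right
  have hle := hψ.integral_le_of_le_divergence (u' := fun x => -u₂ x) hd (hc₁.of_le one_le_two)
    (hc₂.of_le one_le_two).neg hc₂ hc₁ (by simpa only [neg_sq] using hu_int)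
    (by simpa only [add_comm] using hgrad_int) ((hu_int.const_mul s).sub hQ_int) fun x => by
      have hcancel : ∑ i, partialDeriv i (fun y => -u₂ y) x * partialDeriv i u₁ x
          = -∑ i, partialDeriv i u₁ x * partialDeriv i u₂ x := by
        simp only [partialDeriv_neg, mul_comm, mul_neg, Finset.sum_neg_distrib]
      have hpoint := mul_le_mul_of_nonneg_left (le_of_abs_le (hQ x)) (hψ.nonneg x)
      rw [hcancel, hu.realLaplacian_left, hu.realLaplacian_right]
      simp only [Pi.sub_apply]
      linarith
  simp only [neg_sq, add_comm (gradNormSq u₂ _)] at hle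
  rw [integral_sub' (hu_int.const_mul _) hQ_int, integral_const_mul] at hle
  linarith

theorem abs_mul_integral_mul_sq_le (hu : IsResolventPair s τ V u₁ u₂ f₁ f₂)
    (hψ : IsSlowlyVarying η ψ) (hd : 2 ≤ d)
    (hu_int : Integrable fun x => ψ x * (u₁ x ^ 2 + u₂ x ^ 2))
    (hgrad_int : Integrable fun x => ψ x * (gradNormSq u₁ x + gradNormSq u₂ x))
    (hQ_int : Integrable fun x => ψ x * Q x)
    (hQ : ∀ x, |u₁ x * f₂ x - u₂ x * f₁ x| ≤ Q x) :
    |s| * (∫ x, ψ x * (u₁ x ^ 2 + u₂ x ^ 2)) ≤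
      η / 2 * ((∫ x, ψ x * (u₁ x ^ 2 + u₂ x ^ 2))
        + ∫ x, ψ x * (gradNormSq u₁ x + gradNormSq u₂ x)) + ∫ x, ψ x * Q x := by
  rcases abs_choice s with hs | hs <;> rw [hs]
  · exact hu.mul_integral_mul_sq_le hψ hd hu_int hgrad_int hQ_int hQ
  · simpa only [add_comm (u₂ _ ^ 2), add_comm (gradNormSq u₂ _)] using
      hu.swap.mul_integral_mul_sq_le hψ hd (by simpa only [add_comm] using hu_int)
        (by simpa only [add_comm] using hgrad_int) hQ_int fun x => by
          simpa only [abs_sub_comm] using hQ x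

end IsResolventPair

end Energy

/-! ### Smooth approximations of the unit weight -/

section SmoothWeight

variable {d : ℕ} {p R : ℝ} {g : Ed d → ℝ}

/-- A smooth weight comparable to `(1 + |x|)^(-p)`, with limit `1` as `R → ∞`. -/
def smoothWeight (p R : ℝ) (x : Ed d) : ℝ := (1 + ‖x‖ ^ 2 / R ^ 2) ^ (-(p / 2))

theorem smoothWeight_pos (p R : ℝ) (x : Ed d) : 0 < smoothWeight p R x :=
  Real.rpow_pos_of_pos (by positivity) _

theorem smoothWeight_le_one (hp : 0 ≤ p) (R : ℝ) (x : Ed d) : smoothWeight p R x ≤ 1 :=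
  Real.rpow_le_one_of_one_le_of_nonpos (le_add_of_nonneg_right (by positivity)) (by linarith)

theorem contDiff_smoothWeight (p R : ℝ) : ContDiff ℝ 1 (smoothWeight p R : Ed d → ℝ) :=
  (contDiff_const.add ((contDiff_norm_sq ℝ).div_const _)).rpow_const_of_ne fun x =>
    (by positivity : 1 + ‖x‖ ^ 2 / R ^ 2 ≠ 0)

theorem partialDeriv_smoothWeight (p R : ℝ) (i : Fin d) (x : Ed d) :
    partialDeriv i (smoothWeight p R) x
      = -p * x i / R ^ 2 * smoothWeight p R x / (1 + ‖x‖ ^ 2 / R ^ 2) := by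
  have hbase : 1 + ‖x‖ ^ 2 / R ^ 2 ≠ 0 := by positivity
  have hbase_deriv : HasFDerivAt (fun y : Ed d => 1 + ‖y‖ ^ 2 / R ^ 2) _ x :=
    ((hasStrictFDerivAt_norm_sq x).hasFDerivAt.mul_const (R ^ 2)⁻¹).const_add 1
  have hfderiv : fderiv ℝ (smoothWeight p R) x = _ :=
    (hbase_deriv.rpow_const (p := -(p / 2)) (Or.inl hbase)).fderiv
  rw [partialDeriv, hfderiv, smoothWeight, Real.rpow_sub_one hbase]
  simp only [two_nsmul, FunLike.coe_smul, FunLike.coe_add, Pi.smul_apply, Pi.add_apply,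
    innerSL_apply_apply, EuclideanSpace.inner_single_right, smul_eq_mul, conj_trivial]
  ring

theorem isSlowlyVarying_smoothWeight (hp : 0 ≤ p) (hR : 0 < R) :
    IsSlowlyVarying (p / R) (smoothWeight p R : Ed d → ℝ) where
  rate_nonneg := by positivity
  contDiff := contDiff_smoothWeight p R
  nonneg x := (smoothWeight_pos p R x).le
  gradNormSq_le x := by
    calc gradNormSq (smoothWeight p R) x
        = (p / R ^ 2 * smoothWeight p R x / (1 + ‖x‖ ^ 2 / R ^ 2)) ^ 2 * ‖x‖ ^ 2 := by
          rw [norm_sq_eq_sum_sq x, Finset.mul_sum, ← norm_sq_eq_sum_sq x]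
          exact Finset.sum_congr rfl fun i _ => by rw [partialDeriv_smoothWeight]; ring
      _ = (p / R * smoothWeight p R x) ^ 2
            * (‖x‖ ^ 2 / R ^ 2 / (1 + ‖x‖ ^ 2 / R ^ 2) ^ 2) := by
          field_simp
      _ ≤ (p / R * smoothWeight p R x) ^ 2 := by
          refine mul_le_of_le_one_right (sq_nonneg _) ((div_le_one (by positivity)).mpr ?_)
          have : 0 ≤ ‖x‖ ^ 2 / R ^ 2 := by positivity
          nlinarith

theorem one_add_norm_rpow_neg (p : ℝ) (x : Ed d) :
    (1 + ‖x‖) ^ (-p) = ((1 + ‖x‖) ^ 2) ^ (-(p / 2)) := by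
  rw [← Real.rpow_natCast, ← Real.rpow_mul (by positivity)]
  congr 1
  push_cast
  ring

theorem smoothWeight_le (hp : 0 ≤ p) (hR : 1 ≤ R) (x : Ed d) :
    smoothWeight p R x ≤ (2 * R ^ 2) ^ (p / 2) * (1 + ‖x‖) ^ (-p) := by
  have hinv : (2 * R ^ 2) ^ (p / 2) = ((2 * R ^ 2)⁻¹) ^ (-(p / 2)) := by
    rw [Real.rpow_neg (by positivity), Real.inv_rpow (by positivity), inv_inv]
  rw [one_add_norm_rpow_neg, hinv, ← Real.mul_rpow (by positivity) (by positivity)]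
  refine Real.rpow_le_rpow_of_nonpos (by positivity) ?_ (by linarith)
  rw [inv_mul_le_iff₀ (by positivity), mul_add,
    show 2 * R ^ 2 * (‖x‖ ^ 2 / R ^ 2) = 2 * ‖x‖ ^ 2 by field_simp]
  nlinarith [sq_nonneg (1 - ‖x‖)]

theorem one_add_norm_rpow_neg_le_smoothWeight (hp : 0 ≤ p) (x : Ed d) :
    (1 + ‖x‖) ^ (-p) ≤ smoothWeight p 1 x := by
  rw [one_add_norm_rpow_neg]
  refine Real.rpow_le_rpow_of_nonpos (by positivity) ?_ (by linarith)
  nlinarith [norm_nonneg x]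

theorem tendsto_smoothWeight (p : ℝ) (x : Ed d) :
    Filter.Tendsto (fun R => smoothWeight p R x) Filter.atTop (nhds 1) := by
  have hbase : Filter.Tendsto (fun R : ℝ => 1 + ‖x‖ ^ 2 / R ^ 2) Filter.atTop (nhds (1 + 0)) :=
    (tendsto_const_nhds.div_atTop (Filter.tendsto_pow_atTop two_ne_zero)).const_add 1
  simpa [smoothWeight] using hbase.rpow_const (p := -(p / 2)) (Or.inl (by norm_num))

theorem integrable_smoothWeight_mul (hp : 0 ≤ p) (hR : 1 ≤ R) (hg : Continuous g)
    (hg_int : Integrable fun x => (1 + ‖x‖) ^ (-p) * g x) :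
    Integrable fun x => smoothWeight p R x * g x := by
  refine (hg_int.const_mul ((2 * R ^ 2) ^ (p / 2))).mono
    ((contDiff_smoothWeight p R).continuous.mul hg).aestronglyMeasurable
    (.of_forall fun x => ?_)
  have hle := mul_le_mul_of_nonneg_right (smoothWeight_le hp hR x) (norm_nonneg (g x))
  rwa [norm_mul, norm_mul, norm_mul, ← mul_assoc, Real.norm_of_nonneg (smoothWeight_pos p R x).le,
    Real.norm_of_nonneg (by positivity : 0 ≤ (1 + ‖x‖) ^ (-p)),
    Real.norm_of_nonneg (by positivity : 0 ≤ (2 * R ^ 2) ^ (p / 2))]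

theorem integrable_of_tendsto_of_integral_le {X : Type*} [MeasurableSpace X] {μ : Measure X}
    {F : ℕ → X → ℝ} {g : X → ℝ} {C : ℝ} (hF_int : ∀ n, Integrable (F n) μ)
    (hF_nonneg : ∀ n x, 0 ≤ F n x) (hF_le : ∀ n, ∫ x, F n x ∂μ ≤ C)
    (hlim : ∀ x, Filter.Tendsto (fun n => F n x) Filter.atTop (nhds (g x))) :
    Integrable g μ := by
  have hg_nonneg (x : X) : 0 ≤ g x := ge_of_tendsto' (hlim x) fun n => hF_nonneg n x
  refine ⟨aestronglyMeasurable_of_tendsto_ae Filter.atTop (fun n => (hF_int n).1)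
    (.of_forall hlim), ?_⟩
  rw [hasFiniteIntegral_iff_ofReal (.of_forall hg_nonneg)]
  calc ∫⁻ x, ENNReal.ofReal (g x) ∂μ
      = ∫⁻ x, Filter.liminf (fun n => ENNReal.ofReal (F n x)) Filter.atTop ∂μ :=
        lintegral_congr fun x => (ENNReal.tendsto_ofReal (hlim x)).liminf_eq.symm
    _ ≤ Filter.liminf (fun n => ∫⁻ x, ENNReal.ofReal (F n x) ∂μ) Filter.atTop :=
        lintegral_liminf_le' fun n => (hF_int n).1.aemeasurable.ennreal_ofReal
    _ ≤ ENNReal.ofReal C := by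
        refine Filter.liminf_le_of_le (by isBoundedDefault) fun b hb => ?_
        obtain ⟨n, hn⟩ := hb.exists
        rw [← ofReal_integral_eq_lintegral_ofReal (hF_int n) (.of_forall (hF_nonneg n))] at hn
        exact hn.trans (ENNReal.ofReal_le_ofReal (hF_le n))
    _ < ⊤ := ENNReal.ofReal_lt_top

end SmoothWeight

section SobolevRegularity

variable {d : ℕ} {s τ b p η θ : ℝ} {ψ V u₁ u₂ f₁ f₂ : Ed d → ℝ}

theorem integral_mul_sq_nonneg (hψ : ∀ x, 0 ≤ ψ x) (u₁ u₂ : Ed d → ℝ) :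
    0 ≤ ∫ x, ψ x * (u₁ x ^ 2 + u₂ x ^ 2) :=
  integral_nonneg fun x => mul_nonneg (hψ x) (by positivity)

theorem integral_mul_gradNormSq_nonneg (hψ : ∀ x, 0 ≤ ψ x) (u₁ u₂ : Ed d → ℝ) :
    0 ≤ ∫ x, ψ x * (gradNormSq u₁ x + gradNormSq u₂ x) :=
  integral_nonneg fun x =>
    mul_nonneg (hψ x) (add_nonneg (gradNormSq_nonneg _ _) (gradNormSq_nonneg _ _))

theorem integrable_and_integral_mul_young_eq
    (hu_int : Integrable fun x => ψ x * (u₁ x ^ 2 + u₂ x ^ 2))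
    (hf_int : Integrable fun x => ψ x * (f₁ x ^ 2 + f₂ x ^ 2)) :
    (Integrable fun x => ψ x * (θ * (u₁ x ^ 2 + u₂ x ^ 2) + (f₁ x ^ 2 + f₂ x ^ 2) / (4 * θ))) ∧
      ∫ x, ψ x * (θ * (u₁ x ^ 2 + u₂ x ^ 2) + (f₁ x ^ 2 + f₂ x ^ 2) / (4 * θ))
        = θ * (∫ x, ψ x * (u₁ x ^ 2 + u₂ x ^ 2))
          + (∫ x, ψ x * (f₁ x ^ 2 + f₂ x ^ 2)) / (4 * θ) := by
  have hsplit : (fun x => ψ x * (θ * (u₁ x ^ 2 + u₂ x ^ 2) + (f₁ x ^ 2 + f₂ x ^ 2) / (4 * θ)))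
      = fun x => θ * (ψ x * (u₁ x ^ 2 + u₂ x ^ 2)) + ψ x * (f₁ x ^ 2 + f₂ x ^ 2) / (4 * θ) := by
    ext x
    ring
  rw [hsplit, integral_add (hu_int.const_mul θ) (hf_int.div_const _), integral_const_mul,
    integral_div]
  exact ⟨(hu_int.const_mul θ).add (hf_int.div_const _), rfl⟩

namespace IsResolventPair

theorem integral_mul_gradNormSq_le_of_pos (hu : IsResolventPair s τ V u₁ u₂ f₁ f₂)
    (hψ : IsSlowlyVarying η ψ) (hd : 2 ≤ d) (hV : ∀ x, |V x| ≤ b) (hθ : 0 < θ)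
    (hu_int : Integrable fun x => ψ x * (u₁ x ^ 2 + u₂ x ^ 2))
    (hgrad_int : Integrable fun x => ψ x * (gradNormSq u₁ x + gradNormSq u₂ x))
    (hf_int : Integrable fun x => ψ x * (f₁ x ^ 2 + f₂ x ^ 2)) :
    ∫ x, ψ x * (gradNormSq u₁ x + gradNormSq u₂ x) ≤
      η / 2 * ((∫ x, ψ x * (u₁ x ^ 2 + u₂ x ^ 2))
        + ∫ x, ψ x * (gradNormSq u₁ x + gradNormSq u₂ x))
      + (τ + b + θ) * (∫ x, ψ x * (u₁ x ^ 2 + u₂ x ^ 2))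
      + (∫ x, ψ x * (f₁ x ^ 2 + f₂ x ^ 2)) / (4 * θ) := by
  obtain ⟨hQ_int, hQ_eq⟩ := integrable_and_integral_mul_young_eq (θ := θ) hu_int hf_int
  have hle := hu.integral_mul_gradNormSq_le hψ hd hV hu_int hgrad_int hQ_int fun x =>
    abs_mul_add_mul_le (u₁ x) (u₂ x) (f₁ x) (f₂ x) hθ
  rw [hQ_eq] at hle
  linarith

theorem abs_mul_integral_mul_sq_le_of_pos (hu : IsResolventPair s τ V u₁ u₂ f₁ f₂)
    (hψ : IsSlowlyVarying η ψ) (hd : 2 ≤ d) (hθ : 0 < θ)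
    (hu_int : Integrable fun x => ψ x * (u₁ x ^ 2 + u₂ x ^ 2))
    (hgrad_int : Integrable fun x => ψ x * (gradNormSq u₁ x + gradNormSq u₂ x))
    (hf_int : Integrable fun x => ψ x * (f₁ x ^ 2 + f₂ x ^ 2)) :
    |s| * (∫ x, ψ x * (u₁ x ^ 2 + u₂ x ^ 2)) ≤
      η / 2 * ((∫ x, ψ x * (u₁ x ^ 2 + u₂ x ^ 2))
        + ∫ x, ψ x * (gradNormSq u₁ x + gradNormSq u₂ x))
      + θ * (∫ x, ψ x * (u₁ x ^ 2 + u₂ x ^ 2))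
      + (∫ x, ψ x * (f₁ x ^ 2 + f₂ x ^ 2)) / (4 * θ) := by
  obtain ⟨hQ_int, hQ_eq⟩ := integrable_and_integral_mul_young_eq (θ := θ) hu_int hf_int
  have hle := hu.abs_mul_integral_mul_sq_le hψ hd hu_int hgrad_int hQ_int fun x =>
    abs_mul_sub_mul_le (u₁ x) (u₂ x) (f₁ x) (f₂ x) hθ
  rw [hQ_eq] at hle
  linarith

-- A slow enough weight lets the left-hand sides absorb the terms coming from `∇ψ`.
theorem weighted_energy_le (hu : IsResolventPair s τ V u₁ u₂ f₁ f₂) (hψ : IsSlowlyVarying η ψ)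
    (hd : 2 ≤ d) (hV : ∀ x, |V x| ≤ b) (hs : s ≠ 0) (hη : η ≤ 1)
    (hη_mul : η * (2 + τ + b) ≤ |s| / 4)
    (hu_int : Integrable fun x => ψ x * (u₁ x ^ 2 + u₂ x ^ 2))
    (hgrad_int : Integrable fun x => ψ x * (gradNormSq u₁ x + gradNormSq u₂ x))
    (hf_int : Integrable fun x => ψ x * (f₁ x ^ 2 + f₂ x ^ 2)) :
    ∫ x, ψ x * (u₁ x ^ 2 + u₂ x ^ 2)
        ≤ (1 / 2 + 4 / |s|) / |s| * ∫ x, ψ x * (f₁ x ^ 2 + f₂ x ^ 2) ∧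
      ∫ x, ψ x * (gradNormSq u₁ x + gradNormSq u₂ x)
        ≤ (3 + 2 * (τ + b)) * (∫ x, ψ x * (u₁ x ^ 2 + u₂ x ^ 2))
          + (∫ x, ψ x * (f₁ x ^ 2 + f₂ x ^ 2)) / 2 := by
  have hs_pos := abs_pos.mpr hs
  have hη_nonneg := hψ.rate_nonneg
  have hu_nonneg := integral_mul_sq_nonneg hψ.nonneg u₁ u₂
  have hf_nonneg := integral_mul_sq_nonneg hψ.nonneg f₁ f₂
  have hgrad_nonneg := integral_mul_gradNormSq_nonneg hψ.nonneg u₁ u₂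
  have hgrad_le := hu.integral_mul_gradNormSq_le_of_pos hψ hd hV one_pos hu_int hgrad_int hf_int
  have hu_le := hu.abs_mul_integral_mul_sq_le_of_pos hψ hd
    (div_pos hs_pos (by norm_num : 0 < (8 : ℝ))) hu_int hgrad_int hf_int
  generalize ∫ x, ψ x * (u₁ x ^ 2 + u₂ x ^ 2) = X at *
  generalize ∫ x, ψ x * (gradNormSq u₁ x + gradNormSq u₂ x) = Y at *
  generalize ∫ x, ψ x * (f₁ x ^ 2 + f₂ x ^ 2) = Φ at *
  have hY : Y ≤ (3 + 2 * (τ + b)) * X + Φ / 2 := by nlinarith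
  refine ⟨?_, hY⟩
  have habsorb : η / 2 * (X + Y) ≤ |s| / 4 * X + Φ / 4 := by
    nlinarith [mul_le_mul_of_nonneg_left hY hη_nonneg, mul_le_mul_of_nonneg_right hη_mul hu_nonneg,
      mul_le_mul_of_nonneg_right hη hf_nonneg]
  have hsource : Φ / (4 * (|s| / 8)) = 2 / |s| * Φ := by field_simp; ring
  rw [div_mul_eq_mul_div, le_div_iff₀ hs_pos, add_mul, show 4 / |s| * Φ = 2 * (2 / |s| * Φ) by ring]
  nlinarith

theorem exists_forall_smoothWeight_energy_le (hu : IsResolventPair s τ V u₁ u₂ f₁ f₂)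
    (hd : 2 ≤ d) (hp : 0 ≤ p) (hτ : 0 ≤ τ) (hV : ∀ x, |V x| ≤ b) (hs : s ≠ 0)
    (hu_int : Integrable fun x => (1 + ‖x‖) ^ (-p) * (u₁ x ^ 2 + u₂ x ^ 2))
    (hgrad_int : Integrable fun x => (1 + ‖x‖) ^ (-p) * (gradNormSq u₁ x + gradNormSq u₂ x))
    (hf_int : Integrable fun x => f₁ x ^ 2 + f₂ x ^ 2) :
    ∃ R₀ C, ∀ R ≥ R₀,
      ((Integrable fun x => smoothWeight p R x * (u₁ x ^ 2 + u₂ x ^ 2)) ∧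
        ∫ x, smoothWeight p R x * (u₁ x ^ 2 + u₂ x ^ 2) ≤ C) ∧
      ((Integrable fun x => smoothWeight p R x * (gradNormSq u₁ x + gradNormSq u₂ x)) ∧
        ∫ x, smoothWeight p R x * (gradNormSq u₁ x + gradNormSq u₂ x) ≤ C) := by
  have hb : 0 ≤ b := (abs_nonneg _).trans (hV 0)
  have hs_pos := abs_pos.mpr hs
  have hrate : Filter.Tendsto (fun R => p / R * (2 + τ + b)) Filter.atTop (nhds 0) := by
    simpa using (Filter.tendsto_id.const_div_atTop p).mul_const (2 + τ + b)
  obtain ⟨R₀, hR₀⟩ := Filter.eventually_atTop.mp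
    ((hrate.eventually_le_const (div_pos hs_pos zero_lt_four)).and
      (Filter.eventually_ge_atTop (max 1 p)))
  set Φ := ∫ x, f₁ x ^ 2 + f₂ x ^ 2
  set B := (1 / 2 + 4 / |s|) / |s| * Φ
  refine ⟨R₀, max B ((3 + 2 * (τ + b)) * B + Φ / 2), fun R hR => ?_⟩
  obtain ⟨hη_mul, hR_ge⟩ := hR₀ R hR
  obtain ⟨hR_one, hR_p⟩ := max_le_iff.mp hR_ge
  have hψ := isSlowlyVarying_smoothWeight (d := d) hp (zero_lt_one.trans_le hR_one)
  have hψu := integrable_smoothWeight_mul hp hR_one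
    ((hu.contDiff_left.continuous.pow 2).add (hu.contDiff_right.continuous.pow 2)) hu_int
  have hψgrad := integrable_smoothWeight_mul hp hR_one
    ((continuous_gradNormSq hu.contDiff_left).add (continuous_gradNormSq hu.contDiff_right))
    hgrad_int
  have hψf := hf_int.bdd_mul hψ.contDiff.continuous.aestronglyMeasurable (.of_forall fun x => by
    rw [Real.norm_of_nonneg (hψ.nonneg x)]
    exact smoothWeight_le_one hp R x)
  have hψf_le : ∫ x, smoothWeight p R x * (f₁ x ^ 2 + f₂ x ^ 2) ≤ Φ :=
    integral_mono hψf hf_int fun x =>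
      mul_le_of_le_one_left (by positivity) (smoothWeight_le_one hp R x)
  obtain ⟨hu_le, hgrad_le⟩ := hu.weighted_energy_le hψ hd hV hs
    ((div_le_one (zero_lt_one.trans_le hR_one)).mpr hR_p) hη_mul hψu hψgrad hψf
  have hu_le_B := hu_le.trans (mul_le_mul_of_nonneg_left hψf_le (by positivity))
  refine ⟨⟨hψu, hu_le_B.trans (le_max_left _ _)⟩, hψgrad, hgrad_le.trans (le_max_of_le_right ?_)⟩
  linarith [mul_le_mul_of_nonneg_left hu_le_B (by positivity : 0 ≤ 3 + 2 * (τ + b))]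

theorem integrable_sq_and_gradNormSq (hu : IsResolventPair s τ V u₁ u₂ f₁ f₂)
    (hd : 2 ≤ d) (hp : 0 ≤ p) (hτ : 0 ≤ τ) (hV : ∀ x, |V x| ≤ b) (hs : s ≠ 0)
    (hu_int : Integrable fun x => (1 + ‖x‖) ^ (-p) * (u₁ x ^ 2 + u₂ x ^ 2))
    (hgrad_int : Integrable fun x => (1 + ‖x‖) ^ (-p) * (gradNormSq u₁ x + gradNormSq u₂ x))
    (hf_int : Integrable fun x => f₁ x ^ 2 + f₂ x ^ 2) :
    (Integrable fun x => u₁ x ^ 2 + u₂ x ^ 2) ∧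
      Integrable fun x => gradNormSq u₁ x + gradNormSq u₂ x := by
  obtain ⟨R₀, C, hC⟩ :=
    hu.exists_forall_smoothWeight_energy_le hd hp hτ hV hs hu_int hgrad_int hf_int
  have hC (n : ℕ) := hC (R₀ + n) (le_add_of_nonneg_right n.cast_nonneg)
  have hlim (g : Ed d → ℝ) (x : Ed d) : Filter.Tendsto
      (fun n : ℕ => smoothWeight p (R₀ + n) x * g x) Filter.atTop (nhds (g x)) := by
    simpa using ((tendsto_smoothWeight p x).comp
      (Filter.tendsto_atTop_add_const_left _ R₀ tendsto_natCast_atTop_atTop)).mul_const (g x)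
  have hweight (n : ℕ) (x : Ed d) := (smoothWeight_pos p (R₀ + n) x).le
  exact ⟨integrable_of_tendsto_of_integral_le (fun n => (hC n).1.1)
      (fun n x => mul_nonneg (hweight n x) (by positivity)) (fun n => (hC n).1.2) (hlim _),
    integrable_of_tendsto_of_integral_le (fun n => (hC n).2.1)
      (fun n x => mul_nonneg (hweight n x)
        (add_nonneg (gradNormSq_nonneg _ _) (gradNormSq_nonneg _ _)))
      (fun n => (hC n).2.2) (hlim _)⟩

end IsResolventPair

end SobolevRegularity

/-! ### The resolvent estimate for real systems -/

section ResolventEstimate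

variable {d : ℕ} {s τ τ₀ α a b p γ θ : ℝ} {V V₁ V₂ u₁ u₂ f₁ f₂ Q : Ed d → ℝ}

theorem IsLongRangePotential.abs_add_le (hV : IsLongRangePotential a γ V₁ V₂) (ha : 0 ≤ a)
    (hγ : 0 ≤ γ) (x : Ed d) : |V₁ x + V₂ x| ≤ 2 * a := by
  have hleft := (hV.abs_left_le x).trans
    (mul_le_of_le_one_right ha (one_add_norm_rpow_le_one (neg_nonpos.mpr hγ) x))
  have hright := (hV.abs_right_le x).trans
    (mul_le_of_le_one_right ha (one_add_norm_rpow_le_one (by linarith : -γ - 1 ≤ 0) x))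
  linarith [_root_.abs_add_le (V₁ x) (V₂ x)]

theorem integral_smoothWeight_one_mul_le {g : Ed d → ℝ} (hp : 0 ≤ p) (hp_le : p ≤ 2)
    (hg : Continuous g) (hg_nonneg : ∀ x, 0 ≤ g x)
    (hg_int : Integrable fun x => (1 + ‖x‖) ^ (-p) * g x) :
    ∫ x, smoothWeight p 1 x * g x ≤ 2 * ∫ x, (1 + ‖x‖) ^ (-p) * g x := by
  have htwo : ((2 : ℝ) * 1 ^ 2) ^ (p / 2) ≤ 2 := by
    simpa using Real.rpow_le_rpow_of_exponent_le one_le_two (by linarith : p / 2 ≤ 1)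
  rw [← integral_const_mul]
  refine integral_mono (integrable_smoothWeight_mul hp le_rfl hg hg_int) (hg_int.const_mul 2)
    fun x => ?_
  have hweight := (smoothWeight_le hp le_rfl x).trans
    (mul_le_mul_of_nonneg_right htwo (by positivity))
  simpa only [mul_assoc] using mul_le_mul_of_nonneg_right hweight (hg_nonneg x)

namespace IsResolventPair

theorem integral_rpow_mul_gradNormSq_le (hu : IsResolventPair s τ V u₁ u₂ f₁ f₂) (hd : 2 ≤ d)
    (hp : 0 ≤ p) (hp_le : p ≤ 3 / 2) (hτ : 0 ≤ τ) (hV : ∀ x, |V x| ≤ b)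
    (hu_int : Integrable fun x => (1 + ‖x‖) ^ (-p) * (u₁ x ^ 2 + u₂ x ^ 2))
    (hgrad_int : Integrable fun x => (1 + ‖x‖) ^ (-p) * (gradNormSq u₁ x + gradNormSq u₂ x))
    (hf_int : Integrable fun x => f₁ x ^ 2 + f₂ x ^ 2) :
    ∫ x, (1 + ‖x‖) ^ (-p) * (gradNormSq u₁ x + gradNormSq u₂ x) ≤
      8 * (2 + τ + b) * (∫ x, (1 + ‖x‖) ^ (-p) * (u₁ x ^ 2 + u₂ x ^ 2))
        + ∫ x, f₁ x ^ 2 + f₂ x ^ 2 := by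
  have hb : 0 ≤ b := (abs_nonneg _).trans (hV 0)
  have hψ := isSlowlyVarying_smoothWeight (d := d) hp one_pos
  have hsq : Continuous fun x => u₁ x ^ 2 + u₂ x ^ 2 :=
    (hu.contDiff_left.continuous.pow 2).add (hu.contDiff_right.continuous.pow 2)
  have hψgrad : Integrable fun x => smoothWeight p 1 x * (gradNormSq u₁ x + gradNormSq u₂ x) :=
    integrable_smoothWeight_mul hp le_rfl ((continuous_gradNormSq hu.contDiff_left).add
      (continuous_gradNormSq hu.contDiff_right)) hgrad_int
  have hψf := hf_int.bdd_mul hψ.contDiff.continuous.aestronglyMeasurable (.of_forall fun x => by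
    rw [Real.norm_of_nonneg (hψ.nonneg x)]
    exact smoothWeight_le_one hp 1 x)
  have henergy := hu.integral_mul_gradNormSq_le_of_pos hψ hd hV one_pos
    (integrable_smoothWeight_mul hp le_rfl hsq hu_int) hψgrad hψf
  have hgrad_le : ∫ x, (1 + ‖x‖) ^ (-p) * (gradNormSq u₁ x + gradNormSq u₂ x)
      ≤ ∫ x, smoothWeight p 1 x * (gradNormSq u₁ x + gradNormSq u₂ x) :=
    integral_mono hgrad_int hψgrad fun x =>
      mul_le_mul_of_nonneg_right (one_add_norm_rpow_neg_le_smoothWeight hp x)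
        (add_nonneg (gradNormSq_nonneg _ _) (gradNormSq_nonneg _ _))
  have hu_le := integral_smoothWeight_one_mul_le hp (by linarith) hsq (fun x => by positivity)
    hu_int
  have hf_le : ∫ x, smoothWeight p 1 x * (f₁ x ^ 2 + f₂ x ^ 2) ≤ ∫ x, f₁ x ^ 2 + f₂ x ^ 2 :=
    integral_mono hψf hf_int fun x =>
      mul_le_of_le_one_left (by positivity) (smoothWeight_le_one hp 1 x)
  have hu_nonneg := integral_mul_sq_nonneg hψ.nonneg u₁ u₂
  have hgrad_nonneg := integral_mul_gradNormSq_nonneg hψ.nonneg u₁ u₂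
  have habsorb := mul_le_mul_of_nonneg_right (by linarith : p / 1 / 2 ≤ 3 / 4)
    (add_nonneg hu_nonneg hgrad_nonneg)
  linarith [mul_le_mul_of_nonneg_left hu_le (by positivity : 0 ≤ 4 * (2 + τ + b))]

theorem sq_mul_integral_sq_le (hu : IsResolventPair s τ V u₁ u₂ f₁ f₂) (hd : 2 ≤ d) (hs : s ≠ 0)
    (hu_int : Integrable fun x => u₁ x ^ 2 + u₂ x ^ 2)
    (hgrad_int : Integrable fun x => gradNormSq u₁ x + gradNormSq u₂ x)
    (hf_int : Integrable fun x => f₁ x ^ 2 + f₂ x ^ 2) :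
    s ^ 2 * (∫ x, u₁ x ^ 2 + u₂ x ^ 2) ≤ ∫ x, f₁ x ^ 2 + f₂ x ^ 2 := by
  have hs_pos := abs_pos.mpr hs
  have henergy := hu.abs_mul_integral_mul_sq_le_of_pos isSlowlyVarying_one hd (half_pos hs_pos)
    (by simpa only [one_mul] using hu_int) (by simpa only [one_mul] using hgrad_int)
    (by simpa only [one_mul] using hf_int)
  simp only [one_mul, zero_div, zero_mul, zero_add] at henergy
  generalize ∫ x, u₁ x ^ 2 + u₂ x ^ 2 = X at *
  generalize ∫ x, f₁ x ^ 2 + f₂ x ^ 2 = Φ at *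
  have hle : |s| / 2 * X ≤ Φ / (2 * |s|) := by
    rw [show 2 * |s| = 4 * (|s| / 2) by ring]
    linarith
  rw [le_div_iff₀ (by positivity)] at hle
  calc s ^ 2 * X = |s| / 2 * X * (2 * |s|) := by rw [← sq_abs]; ring
    _ ≤ Φ := hle

theorem abs_mul_energy_le (hu : IsResolventPair s τ V u₁ u₂ f₁ f₂) (hd : 2 ≤ d)
    (hV : ∀ x, |V x| ≤ b) (hτ₀ : 0 < τ₀) (hτ : τ₀ ≤ τ) (hsτ : |s| ≤ τ)
    (hu_int : Integrable fun x => u₁ x ^ 2 + u₂ x ^ 2)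
    (hgrad_int : Integrable fun x => gradNormSq u₁ x + gradNormSq u₂ x) (hQ_int : Integrable Q)
    (hQ_re : ∀ x, |u₁ x * f₁ x + u₂ x * f₂ x| ≤ Q x)
    (hQ_im : ∀ x, |u₁ x * f₂ x - u₂ x * f₁ x| ≤ Q x) :
    |s| * (√τ * (∫ x, u₁ x ^ 2 + u₂ x ^ 2) + (∫ x, gradNormSq u₁ x + gradNormSq u₂ x) / √τ)
      ≤ (3 + b / τ₀) * √τ * ∫ x, Q x := by
  have hb : 0 ≤ b := (abs_nonneg _).trans (hV 0)
  have hτ_pos := hτ₀.trans_le hτ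
  have hu_int' : Integrable fun x => 1 * (u₁ x ^ 2 + u₂ x ^ 2) := by simpa only [one_mul]
  have hgrad_int' : Integrable fun x => 1 * (gradNormSq u₁ x + gradNormSq u₂ x) := by
    simpa only [one_mul]
  have hQ_int' : Integrable fun x => 1 * Q x := by simpa only [one_mul]
  have hgrad_le :=
    hu.integral_mul_gradNormSq_le isSlowlyVarying_one hd hV hu_int' hgrad_int' hQ_int' hQ_re
  have hu_le :=
    hu.abs_mul_integral_mul_sq_le isSlowlyVarying_one hd hu_int' hgrad_int' hQ_int' hQ_im
  have hQ_nonneg : 0 ≤ ∫ x, Q x := integral_nonneg fun x => (abs_nonneg _).trans (hQ_re x)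
  have hu_nonneg : 0 ≤ ∫ x, u₁ x ^ 2 + u₂ x ^ 2 := integral_nonneg fun x => by positivity
  simp only [one_mul, zero_div, zero_mul, zero_add] at hgrad_le hu_le
  generalize ∫ x, u₁ x ^ 2 + u₂ x ^ 2 = X at *
  generalize ∫ x, gradNormSq u₁ x + gradNormSq u₂ x = Y at *
  generalize ∫ x, Q x = I at *
  have hb_le : b ≤ b / τ₀ * τ := by
    rw [div_mul_eq_mul_div, le_div_iff₀ hτ₀]
    exact mul_le_mul_of_nonneg_left hτ hb
  have hsY : |s| * Y ≤ (2 + b / τ₀) * τ * I := by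
    calc |s| * Y ≤ (τ + b) * (|s| * X) + |s| * I := by
          linarith [mul_le_mul_of_nonneg_left hgrad_le (abs_nonneg s)]
      _ ≤ (τ + b / τ₀ * τ) * I + τ * I := by gcongr
      _ = (2 + b / τ₀) * τ * I := by ring
  calc |s| * (√τ * X + Y / √τ) = √τ * (|s| * X) + |s| * Y / √τ := by ring
    _ ≤ √τ * I + (2 + b / τ₀) * τ * I / √τ := by gcongr
    _ = √τ * I + (2 + b / τ₀) * I * (τ / √τ) := by ring
    _ = (3 + b / τ₀) * √τ * I := by rw [Real.div_sqrt]; ring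

end IsResolventPair

theorem rpow_neg_mul_add_div_eq {E : Type*} [SeminormedAddCommGroup E] (hθ : 0 < θ) (p y z : ℝ)
    (x : E) :
    θ * (1 + ‖x‖) ^ (-p) * y + z / (4 * (θ * (1 + ‖x‖) ^ (-p)))
      = θ * ((1 + ‖x‖) ^ (-p) * y) + (1 + ‖x‖) ^ p * z / (4 * θ) := by
  rw [Real.rpow_neg (by positivity)]
  field_simp

namespace CarlemanParameters

variable (P : CarlemanParameters τ₀ α a γ)

/-- The constant `M` with which `M√τ ∫|u||f|` bounds the energy term of the Carleman estimate. -/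
def absorptionConst : ℝ := P.energyConst * (3 + 2 * a / τ₀)

/-- The constant of the weighted `L²` estimate for `u`. -/
def massConst : ℝ :=
  1 / τ₀ + 2 / P.gainConst * (P.sourceConst + P.absorptionConst ^ 2 / (2 * P.gainConst))

theorem absorptionConst_pos : 0 < P.absorptionConst := by
  have := P.energyConst_pos
  have := P.a_pos
  have := P.τ₀_pos
  unfold absorptionConst
  positivity

theorem massConst_pos : 0 < P.massConst := by
  have := P.τ₀_pos
  have := P.gainConst_pos
  have := P.sourceConst_pos
  unfold massConst
  positivity

theorem absorptionConst_mul_sqrt_mul_eq (hτ : 0 < τ) (hθ : θ = P.gainConst * √τ /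
    (2 * P.absorptionConst)) (X Φ : ℝ) :
    P.absorptionConst * √τ * (θ * X + Φ / (4 * θ))
      = P.gainConst / 2 * τ * X + P.absorptionConst ^ 2 / (2 * P.gainConst) * Φ := by
  have := P.gainConst_pos
  have := P.absorptionConst_pos
  have := Real.sqrt_pos.mpr hτ
  nth_rw 2 [← Real.mul_self_sqrt hτ.le]
  rw [hθ]
  field_simp
  ring

theorem gainConst_mul_integral_le (hd : 2 ≤ d) (hV : IsLongRangePotential a γ V₁ V₂)
    (hu : IsResolventPair s τ (fun x => V₁ x + V₂ x) u₁ u₂ f₁ f₂) (hτ : τ₀ ≤ τ) (hsτ : |s| ≤ τ)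
    (hu_int : Integrable fun x => u₁ x ^ 2 + u₂ x ^ 2)
    (hgrad_int : Integrable fun x => gradNormSq u₁ x + gradNormSq u₂ x)
    (hf_int : Integrable fun x => (1 + ‖x‖) ^ (1 + α) * (f₁ x ^ 2 + f₂ x ^ 2)) :
    P.gainConst / 2 * τ * (∫ x, (1 + ‖x‖) ^ (-(1 + α)) * (u₁ x ^ 2 + u₂ x ^ 2))
      ≤ (P.sourceConst + P.absorptionConst ^ 2 / (2 * P.gainConst))
        * ∫ x, (1 + ‖x‖) ^ (1 + α) * (f₁ x ^ 2 + f₂ x ^ 2) := by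
  have hκ := P.gainConst_pos
  have hM := P.absorptionConst_pos
  have hτ_pos := P.τ₀_pos.trans_le hτ
  have hweighted : Integrable fun x => (1 + ‖x‖) ^ (-(1 + α)) * (u₁ x ^ 2 + u₂ x ^ 2) :=
    integrable_one_add_norm_rpow_mul_of_nonpos (by linarith [P.α_pos]) hu_int
  obtain ⟨θ, hθ⟩ : ∃ θ, θ = P.gainConst * √τ / (2 * P.absorptionConst) := ⟨_, rfl⟩
  have hθ_pos : 0 < θ := by rw [hθ]; positivity
  -- Young's inequality with the `x`-dependent parameter `θ(1 + |x|)^(-(1 + α))`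
  have henergy := hu.abs_mul_energy_le hd (hV.abs_add_le P.a_pos.le
      (by linarith [P.α_pos, P.α_le_half_γ])) P.τ₀_pos hτ hsτ hu_int hgrad_int
    ((hweighted.const_mul θ).add (hf_int.div_const (4 * θ)))
    (fun x => (abs_mul_add_mul_le _ _ _ _ (by positivity)).trans_eq
      (rpow_neg_mul_add_div_eq hθ_pos _ _ _ x))
    (fun x => (abs_mul_sub_mul_le _ _ _ _ (by positivity)).trans_eq
      (rpow_neg_mul_add_div_eq hθ_pos _ _ _ x))
  rw [integral_add' (hweighted.const_mul _) (hf_int.div_const _), integral_const_mul, integral_div]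
    at henergy
  have hcarleman := P.mul_integral_le hd hV hu hτ hu_int hgrad_int hf_int
  have habsorb := mul_le_mul_of_nonneg_left henergy P.energyConst_pos.le
  have hconst := P.absorptionConst_mul_sqrt_mul_eq hτ_pos hθ
    (∫ x, (1 + ‖x‖) ^ (-(1 + α)) * (u₁ x ^ 2 + u₂ x ^ 2))
    (∫ x, (1 + ‖x‖) ^ (1 + α) * (f₁ x ^ 2 + f₂ x ^ 2))
  nth_rw 1 [absorptionConst] at hconst
  linarith

theorem mul_integral_rpow_mul_sq_le (hd : 2 ≤ d) (hV : IsLongRangePotential a γ V₁ V₂)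
    (hu : IsResolventPair s τ (fun x => V₁ x + V₂ x) u₁ u₂ f₁ f₂) (hτ : τ₀ ≤ τ)
    (hu_int : Integrable fun x => u₁ x ^ 2 + u₂ x ^ 2)
    (hgrad_int : Integrable fun x => gradNormSq u₁ x + gradNormSq u₂ x)
    (hf_int : Integrable fun x => (1 + ‖x‖) ^ (1 + α) * (f₁ x ^ 2 + f₂ x ^ 2)) :
    τ * (∫ x, (1 + ‖x‖) ^ (-(1 + α)) * (u₁ x ^ 2 + u₂ x ^ 2))
      ≤ P.massConst * ∫ x, (1 + ‖x‖) ^ (1 + α) * (f₁ x ^ 2 + f₂ x ^ 2) := by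
  have hτ₀ := P.τ₀_pos
  have hα := P.α_pos
  have hκ := P.gainConst_pos
  have := P.sourceConst_pos
  have : 0 ≤ ∫ x, (1 + ‖x‖) ^ (1 + α) * (f₁ x ^ 2 + f₂ x ^ 2) :=
    integral_nonneg fun x => by positivity
  rw [massConst, add_mul]
  rcases le_total |s| τ with hsτ | hsτ
  · have hgain := P.gainConst_mul_integral_le hd hV hu hτ hsτ hu_int hgrad_int hf_int
    refine le_add_of_nonneg_of_le (by positivity) ?_
    rw [mul_assoc, div_mul_eq_mul_div, le_div_iff₀ hκ]
    linarith
  · have hs : s ≠ 0 := abs_pos.mp (by linarith)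
    have hu_le : ∫ x, (1 + ‖x‖) ^ (-(1 + α)) * (u₁ x ^ 2 + u₂ x ^ 2)
        ≤ ∫ x, u₁ x ^ 2 + u₂ x ^ 2 :=
      integral_one_add_norm_rpow_mul_le_integral (by linarith) (fun x => by positivity) hu_int
    have hf_le := integral_le_integral_one_add_norm_rpow_mul (by linarith : 0 ≤ 1 + α)
      (fun x => by positivity) hf_int
    have hmass := hu.sq_mul_integral_sq_le hd hs hu_int hgrad_int
      (integrable_of_one_add_norm_rpow_mul (by linarith : 0 ≤ 1 + α) hf_int)
    refine le_add_of_le_of_nonneg ?_ (by positivity)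
    rw [one_div_mul_eq_div, le_div_iff₀ hτ₀]
    have hX : 0 ≤ ∫ x, u₁ x ^ 2 + u₂ x ^ 2 := integral_nonneg fun x => by positivity
    rw [← sq_abs] at hmass
    calc τ * (∫ x, (1 + ‖x‖) ^ (-(1 + α)) * (u₁ x ^ 2 + u₂ x ^ 2)) * τ₀
        ≤ |s| * (∫ x, u₁ x ^ 2 + u₂ x ^ 2) * |s| := by
          gcongr
          exact hτ.trans hsτ
      _ = |s| ^ 2 * ∫ x, u₁ x ^ 2 + u₂ x ^ 2 := by ring
      _ ≤ _ := hmass.trans hf_le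

/-- The constant of the weighted resolvent estimate. -/
def resolventConst : ℝ := (1 + 8 * ((2 + 2 * a) / τ₀ + 1)) * P.massConst + 1

theorem resolventConst_pos : 0 < P.resolventConst := by
  have := P.massConst_pos
  have := P.τ₀_pos
  have := P.a_pos
  unfold resolventConst
  positivity

theorem integral_gradNormSq_add_le (hd : 2 ≤ d) (hV : IsLongRangePotential a γ V₁ V₂)
    (hu : IsResolventPair s τ (fun x => V₁ x + V₂ x) u₁ u₂ f₁ f₂) (hτ : τ₀ ≤ τ)
    (hu_int : Integrable fun x => u₁ x ^ 2 + u₂ x ^ 2)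
    (hgrad_int : Integrable fun x => gradNormSq u₁ x + gradNormSq u₂ x)
    (hf_int : Integrable fun x => (1 + ‖x‖) ^ (1 + α) * (f₁ x ^ 2 + f₂ x ^ 2)) :
    (∫ x, (1 + ‖x‖) ^ (-(1 + α)) * (gradNormSq u₁ x + gradNormSq u₂ x))
        + τ * (∫ x, (1 + ‖x‖) ^ (-(1 + α)) * (u₁ x ^ 2 + u₂ x ^ 2))
      ≤ P.resolventConst * ∫ x, (1 + ‖x‖) ^ (1 + α) * (f₁ x ^ 2 + f₂ x ^ 2) := by
  have hτ₀ := P.τ₀_pos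
  have hα := P.α_pos
  have ha := P.a_pos
  have hmass := P.mul_integral_rpow_mul_sq_le hd hV hu hτ hu_int hgrad_int hf_int
  have hgrad := hu.integral_rpow_mul_gradNormSq_le hd (by linarith : 0 ≤ 1 + α)
    (by linarith [P.α_le_half]) (hτ₀.le.trans hτ)
    (hV.abs_add_le ha.le (by linarith [P.α_le_half_γ]))
    (integrable_one_add_norm_rpow_mul_of_nonpos (by linarith) hu_int)
    (integrable_one_add_norm_rpow_mul_of_nonpos (by linarith) hgrad_int)
    (integrable_of_one_add_norm_rpow_mul (by linarith : 0 ≤ 1 + α) hf_int)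
  have hf_le := integral_le_integral_one_add_norm_rpow_mul (by linarith : 0 ≤ 1 + α)
    (fun x => by positivity) hf_int
  have hX : 0 ≤ ∫ x, (1 + ‖x‖) ^ (-(1 + α)) * (u₁ x ^ 2 + u₂ x ^ 2) :=
    integral_nonneg fun x => by positivity
  generalize ∫ x, (1 + ‖x‖) ^ (-(1 + α)) * (u₁ x ^ 2 + u₂ x ^ 2) = X at *
  have hτ_le : 2 + τ + 2 * a ≤ ((2 + 2 * a) / τ₀ + 1) * τ := by
    have : 2 + 2 * a ≤ (2 + 2 * a) / τ₀ * τ := by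
      rw [div_mul_eq_mul_div, le_div_iff₀ hτ₀]
      gcongr
    linarith
  have hcoeff : 8 * (2 + τ + 2 * a) * X ≤ 8 * ((2 + 2 * a) / τ₀ + 1) * (τ * X) := by
    linarith [mul_le_mul_of_nonneg_right hτ_le hX]
  have hmass' := mul_le_mul_of_nonneg_left hmass
    (by positivity : 0 ≤ 1 + 8 * ((2 + 2 * a) / τ₀ + 1))
  rw [resolventConst]
  linarith

end CarlemanParameters

end ResolventEstimate

/-! ### Weighted estimates for real systems in terms of lower integrals -/

section LowerIntegral

variable {d : ℕ} {s τ τ₀ α a γ : ℝ} {V₁ V₂ u₁ u₂ f₁ f₂ : Ed d → ℝ}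

theorem exists_forall_integral_gradNormSq_add_le (hd : 2 ≤ d) (hτ₀ : 0 < τ₀) (hα : 0 < α)
    (ha : 0 < a) (hγ : 0 < γ) :
    ∃ C, 0 < C ∧ ∀ ⦃s τ : ℝ⦄ ⦃V₁ V₂ u₁ u₂ f₁ f₂ : Ed d → ℝ⦄, s ≠ 0 → τ₀ ≤ τ →
      IsLongRangePotential a γ V₁ V₂ →
      IsResolventPair s τ (fun x => V₁ x + V₂ x) u₁ u₂ f₁ f₂ →
      (Integrable fun x => (1 + ‖x‖) ^ (-(1 + α)) * (u₁ x ^ 2 + u₂ x ^ 2)) →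
      (Integrable fun x => (1 + ‖x‖) ^ (-(1 + α)) * (gradNormSq u₁ x + gradNormSq u₂ x)) →
      (Integrable fun x => (1 + ‖x‖) ^ (1 + α) * (f₁ x ^ 2 + f₂ x ^ 2)) →
      (∫ x, (1 + ‖x‖) ^ (-(1 + α)) * (gradNormSq u₁ x + gradNormSq u₂ x))
          + τ * (∫ x, (1 + ‖x‖) ^ (-(1 + α)) * (u₁ x ^ 2 + u₂ x ^ 2))
        ≤ C * ∫ x, (1 + ‖x‖) ^ (1 + α) * (f₁ x ^ 2 + f₂ x ^ 2) := by
  -- once `u` is known to be in `H¹`, a smaller exponent gives a stronger estimate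
  obtain ⟨β, hβ, hβα, hβ_half, hβγ⟩ : ∃ β, 0 < β ∧ β ≤ α ∧ β ≤ 1 / 2 ∧ β ≤ γ / 2 :=
    ⟨min α (min (1 / 2) (γ / 2)), by positivity, by simp, by simp, by simp⟩
  obtain ⟨P⟩ := CarlemanParameters.nonempty hτ₀ hβ hβ_half hβγ ha
  refine ⟨P.resolventConst, P.resolventConst_pos,
    fun s τ V₁ V₂ u₁ u₂ f₁ f₂ hs hτ hV hu hu_int hgrad_int hf_int => ?_⟩
  have hτ_nonneg : 0 ≤ τ := hτ₀.le.trans hτ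
  obtain ⟨hu_int, hgrad_int⟩ := hu.integrable_sq_and_gradNormSq hd (by linarith : 0 ≤ 1 + α)
    hτ_nonneg (hV.abs_add_le ha.le hγ.le) hs hu_int hgrad_int
    (integrable_of_one_add_norm_rpow_mul (by linarith : 0 ≤ 1 + α) hf_int)
  have hexp : -(1 + α) ≤ -(1 + β) := by linarith
  have hexp' : 1 + β ≤ 1 + α := by linarith
  calc (∫ x, (1 + ‖x‖) ^ (-(1 + α)) * (gradNormSq u₁ x + gradNormSq u₂ x))
        + τ * (∫ x, (1 + ‖x‖) ^ (-(1 + α)) * (u₁ x ^ 2 + u₂ x ^ 2))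
      ≤ (∫ x, (1 + ‖x‖) ^ (-(1 + β)) * (gradNormSq u₁ x + gradNormSq u₂ x))
        + τ * (∫ x, (1 + ‖x‖) ^ (-(1 + β)) * (u₁ x ^ 2 + u₂ x ^ 2)) :=
        add_le_add
          (integral_one_add_norm_rpow_mul_le_of_le hexp
            (fun x => add_nonneg (gradNormSq_nonneg _ _) (gradNormSq_nonneg _ _))
            (integrable_one_add_norm_rpow_mul_of_nonpos (by linarith) hgrad_int))
          (mul_le_mul_of_nonneg_left (integral_one_add_norm_rpow_mul_le_of_le hexp
            (fun x => by positivity)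
            (integrable_one_add_norm_rpow_mul_of_nonpos (by linarith) hu_int)) hτ_nonneg)
    _ ≤ P.resolventConst * ∫ x, (1 + ‖x‖) ^ (1 + β) * (f₁ x ^ 2 + f₂ x ^ 2) :=
        P.integral_gradNormSq_add_le hd hV hu hτ hu_int hgrad_int
          (integrable_one_add_norm_rpow_mul_of_le hexp' hf_int)
    _ ≤ P.resolventConst * ∫ x, (1 + ‖x‖) ^ (1 + α) * (f₁ x ^ 2 + f₂ x ^ 2) :=
        mul_le_mul_of_nonneg_left (integral_one_add_norm_rpow_mul_le_of_le hexp'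
          (fun x => by positivity) hf_int) P.resolventConst_pos.le

theorem abs_max_min_sub_le {B v : ℝ} (hv : |v| ≤ B) (t : ℝ) :
    |max (-B) (min B t) - t| ≤ |v - t| := by
  obtain ⟨hv_ge, hv_le⟩ := abs_le.mp hv
  rcases le_total t (-B) with ht | ht
  · rw [min_eq_right (by linarith), max_eq_left ht, abs_of_nonneg (by linarith),
      abs_of_nonneg (by linarith)]
    linarith
  rcases le_total t B with ht' | ht'
  · rw [min_eq_right ht', max_eq_right ht, sub_self, abs_zero]
    exact abs_nonneg _
  · rw [min_eq_left ht', max_eq_right (by linarith), abs_of_nonpos (by linarith),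
      abs_of_nonpos (by linarith)]
    linarith

theorem add_mul_sq_add_add_mul_sq_le {y y' z z' t t' : ℝ}
    (ht : |t - -(y * z + y' * z') / (z ^ 2 + z' ^ 2)|
      ≤ |t' - -(y * z + y' * z') / (z ^ 2 + z' ^ 2)|) :
    (y + t * z) ^ 2 + (y' + t * z') ^ 2 ≤ (y + t' * z) ^ 2 + (y' + t' * z') ^ 2 := by
  rcases (by positivity : 0 ≤ z ^ 2 + z' ^ 2).eq_or_lt with hz | hz
  · obtain rfl : z = 0 := by nlinarith [sq_nonneg z, sq_nonneg z']
    obtain rfl : z' = 0 := by nlinarith [sq_nonneg z']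
    simp
  · have hsquare (t : ℝ) : (y + t * z) ^ 2 + (y' + t * z') ^ 2
        = (z ^ 2 + z' ^ 2) * (t - -(y * z + y' * z') / (z ^ 2 + z' ^ 2)) ^ 2
          + (y * z' - y' * z) ^ 2 / (z ^ 2 + z' ^ 2) := by
      field_simp
      ring
    rw [hsquare t, hsquare t']
    have := sq_le_sq.mpr ht
    gcongr

theorem continuous_realLaplacian {v : Ed d → ℝ} (hv : ContDiff ℝ 2 v) :
    Continuous (realLaplacian v) := by
  refine continuous_finsetSum _ fun i _ => continuous_iff_continuousAt.mpr fun x => ?_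
  exact (contDiffAt_partialDeriv (m := 0) (contDiffAt_partialDeriv (m := 1) hv.contDiffAt
    (by norm_num) i) (by norm_num) i).continuousAt

-- `V₂` need not be measurable: replace it by the admissible potential minimising `|f|` pointwise.
theorem IsLongRangePotential.exists_measurable_source (hV : IsLongRangePotential a γ V₁ V₂)
    (hu : IsResolventPair s τ (fun x => V₁ x + V₂ x) u₁ u₂ f₁ f₂) :
    ∃ W g₁ g₂, IsLongRangePotential a γ V₁ W ∧
      IsResolventPair s τ (fun x => V₁ x + W x) u₁ u₂ g₁ g₂ ∧ Measurable g₁ ∧ Measurable g₂ ∧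
      ∀ x, g₁ x ^ 2 + g₂ x ^ 2 ≤ f₁ x ^ 2 + f₂ x ^ 2 := by
  set h₁ : Ed d → ℝ := fun x => -realLaplacian u₁ x + (V₁ x - τ) * u₁ x - s * u₂ x with hh₁
  set h₂ : Ed d → ℝ := fun x => -realLaplacian u₂ x + (V₁ x - τ) * u₂ x + s * u₁ x with hh₂
  set B : Ed d → ℝ := fun x => a * (1 + ‖x‖) ^ (-γ - 1)
  set W : Ed d → ℝ := fun x =>
    max (-B x) (min (B x) (-(h₁ x * u₁ x + h₂ x * u₂ x) / (u₁ x ^ 2 + u₂ x ^ 2)))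
  have hB_nonneg (x : Ed d) : 0 ≤ B x := (abs_nonneg _).trans (hV.abs_right_le x)
  have hu₁_meas := hu.contDiff_left.continuous.measurable
  have hu₂_meas := hu.contDiff_right.continuous.measurable
  have hV₁_meas := hV.contDiff_left.continuous.measurable
  have hΔ₁_meas := (continuous_realLaplacian hu.contDiff_left).measurable
  have hΔ₂_meas := (continuous_realLaplacian hu.contDiff_right).measurable
  have hB_meas : Measurable B := (continuous_one_add_norm_rpow _).measurable.const_mul a
  refine ⟨W, fun x => h₁ x + W x * u₁ x, fun x => h₂ x + W x * u₂ x,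
    ⟨hV.contDiff_left, hV.abs_left_le, hV.radialDeriv_left_le, fun x => ?_⟩,
    ⟨hu.contDiff_left, hu.contDiff_right, fun x => ?_, fun x => ?_⟩, by fun_prop, by fun_prop,
    fun x => ?_⟩
  · exact abs_le.mpr ⟨le_max_left _ _, max_le (by linarith [hB_nonneg x]) (min_le_left _ _)⟩
  · simp only [hh₁]; ring
  · simp only [hh₂]; ring
  · have hf₁ : f₁ x = h₁ x + V₂ x * u₁ x := by linarith [hu.realLaplacian_left x]
    have hf₂ : f₂ x = h₂ x + V₂ x * u₂ x := by linarith [hu.realLaplacian_right x]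
    rw [hf₁, hf₂]
    exact add_mul_sq_add_add_mul_sq_le (abs_max_min_sub_le (hV.abs_right_le x) _)

section WeightedLowerIntegral

variable {X : Type*} [MeasurableSpace X] {μ : Measure X} {g w : X → ℝ}

theorem integrable_mul_of_lintegral_lt_top (hw : Measurable w) (hg : Measurable g)
    (hw_nonneg : ∀ x, 0 ≤ w x) (hg_nonneg : ∀ x, 0 ≤ g x)
    (hfin : ∫⁻ x, ENNReal.ofReal (g x) * ENNReal.ofReal (w x) ∂μ < ⊤) :
    Integrable (fun x => w x * g x) μ := by
  refine ⟨(hw.mul hg).aestronglyMeasurable, ?_⟩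
  rw [hasFiniteIntegral_iff_ofReal (.of_forall fun x => mul_nonneg (hw_nonneg x) (hg_nonneg x))]
  simpa only [mul_comm (w _), ENNReal.ofReal_mul (hg_nonneg _)] using hfin

theorem lintegral_ofReal_mul_ofReal (hw_nonneg : ∀ x, 0 ≤ w x) (hg_nonneg : ∀ x, 0 ≤ g x)
    (hint : Integrable (fun x => w x * g x) μ) :
    ∫⁻ x, ENNReal.ofReal (g x) * ENNReal.ofReal (w x) ∂μ
      = ENNReal.ofReal (∫ x, w x * g x ∂μ) := by
  rw [ofReal_integral_eq_lintegral_ofReal hint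
    (.of_forall fun x => mul_nonneg (hw_nonneg x) (hg_nonneg x))]
  simp only [mul_comm (w _), ENNReal.ofReal_mul (hg_nonneg _)]

end WeightedLowerIntegral

theorem exists_forall_lintegral_gradNormSq_add_le (hd : 2 ≤ d) (hτ₀ : 0 < τ₀) (hα : 0 < α)
    (ha : 0 < a) (hγ : 0 < γ) :
    ∃ C, 0 < C ∧ ∀ ⦃s τ : ℝ⦄ ⦃V₁ V₂ u₁ u₂ f₁ f₂ : Ed d → ℝ⦄, s ≠ 0 → τ₀ ≤ τ →
      IsLongRangePotential a γ V₁ V₂ →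
      IsResolventPair s τ (fun x => V₁ x + V₂ x) u₁ u₂ f₁ f₂ →
      ∫⁻ x, ENNReal.ofReal (u₁ x ^ 2 + u₂ x ^ 2) * ENNReal.ofReal ((1 + ‖x‖) ^ (-(1 + α))) < ⊤ →
      ∫⁻ x, ENNReal.ofReal (gradNormSq u₁ x + gradNormSq u₂ x)
        * ENNReal.ofReal ((1 + ‖x‖) ^ (-(1 + α))) < ⊤ →
      ∫⁻ x, ENNReal.ofReal (f₁ x ^ 2 + f₂ x ^ 2) * ENNReal.ofReal ((1 + ‖x‖) ^ (1 + α)) < ⊤ →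
      (∫⁻ x, ENNReal.ofReal (gradNormSq u₁ x + gradNormSq u₂ x)
          * ENNReal.ofReal ((1 + ‖x‖) ^ (-(1 + α))))
        + ENNReal.ofReal τ * (∫⁻ x, ENNReal.ofReal (u₁ x ^ 2 + u₂ x ^ 2)
          * ENNReal.ofReal ((1 + ‖x‖) ^ (-(1 + α))))
      ≤ ENNReal.ofReal C * ∫⁻ x, ENNReal.ofReal (f₁ x ^ 2 + f₂ x ^ 2)
          * ENNReal.ofReal ((1 + ‖x‖) ^ (1 + α)) := by
  obtain ⟨C, hC, hest⟩ := exists_forall_integral_gradNormSq_add_le hd hτ₀ hα ha hγ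
  refine ⟨C, hC, fun s τ V₁ V₂ u₁ u₂ f₁ f₂ hs hτ hV hu hu_fin hgrad_fin hf_fin => ?_⟩
  obtain ⟨W, g₁, g₂, hW, hu, hg₁, hg₂, hg_le⟩ := hV.exists_measurable_source hu
  have hlintegral_le : ∫⁻ x, ENNReal.ofReal (g₁ x ^ 2 + g₂ x ^ 2)
        * ENNReal.ofReal ((1 + ‖x‖) ^ (1 + α))
      ≤ ∫⁻ x, ENNReal.ofReal (f₁ x ^ 2 + f₂ x ^ 2) * ENNReal.ofReal ((1 + ‖x‖) ^ (1 + α)) :=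
    lintegral_mono fun x => mul_le_mul_left (ENNReal.ofReal_le_ofReal (hg_le x)) _
  have hτ_nonneg : 0 ≤ τ := hτ₀.le.trans hτ
  have hweight (t : ℝ) (x : Ed d) : 0 ≤ (1 + ‖x‖) ^ t := by positivity
  have hmeas (t : ℝ) := (continuous_one_add_norm_rpow (E := Ed d) t).measurable
  have hsq_nonneg (v v' : Ed d → ℝ) (x : Ed d) : 0 ≤ v x ^ 2 + v' x ^ 2 := by positivity
  have hgrad_nonneg (x : Ed d) : 0 ≤ gradNormSq u₁ x + gradNormSq u₂ x :=
    add_nonneg (gradNormSq_nonneg _ _) (gradNormSq_nonneg _ _)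
  have hu_int := integrable_mul_of_lintegral_lt_top (hmeas _)
    ((hu.contDiff_left.continuous.pow 2).add (hu.contDiff_right.continuous.pow 2)).measurable
    (hweight _) (hsq_nonneg u₁ u₂) hu_fin
  have hgrad_int := integrable_mul_of_lintegral_lt_top (hmeas _)
    ((continuous_gradNormSq hu.contDiff_left).add
      (continuous_gradNormSq hu.contDiff_right)).measurable (hweight _) hgrad_nonneg hgrad_fin
  have hg_int := integrable_mul_of_lintegral_lt_top (hmeas _) ((hg₁.pow_const 2).add
    (hg₂.pow_const 2)) (hweight _) (hsq_nonneg g₁ g₂) (hlintegral_le.trans_lt hf_fin)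
  refine le_trans ?_ (mul_le_mul_right hlintegral_le _)
  rw [lintegral_ofReal_mul_ofReal (hweight _) hgrad_nonneg hgrad_int,
    lintegral_ofReal_mul_ofReal (hweight _) (hsq_nonneg u₁ u₂) hu_int,
    lintegral_ofReal_mul_ofReal (hweight _) (hsq_nonneg g₁ g₂) hg_int,
    ← ENNReal.ofReal_mul hτ_nonneg, ← ENNReal.ofReal_mul hC.le, ← ENNReal.ofReal_add
      (integral_nonneg fun x => mul_nonneg (hweight _ x) (hgrad_nonneg x))
      (mul_nonneg hτ_nonneg
        (integral_nonneg fun x => mul_nonneg (hweight _ x) (hsq_nonneg u₁ u₂ x)))]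
  exact ENNReal.ofReal_le_ofReal (hest hs hτ hW hu hu_int hgrad_int hg_int)

end LowerIntegral

/-! ### Real and imaginary parts of complex solutions -/

section ComplexSolutions

variable {d : ℕ} {s τ : ℝ} {V : Ed d → ℝ} {u f : Ed d → ℂ}

theorem partialDeriv_clm_comp (L : ℂ →L[ℝ] ℝ) {x : Ed d} (hu : DifferentiableAt ℝ u x)
    (i : Fin d) : partialDeriv i (fun y => L (u y)) x = L (pd u i x) := by
  have hL : HasFDerivAt (fun y => L (u y)) _ x := L.hasFDerivAt.comp x hu.hasFDerivAt
  rw [partialDeriv, hL.fderiv]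
  rfl

theorem realLaplacian_clm_comp (L : ℂ →L[ℝ] ℝ) (hu : ContDiff ℝ 2 u) (x : Ed d) :
    realLaplacian (fun y => L (u y)) x = L (lap u x) := by
  have hpd (i : Fin d) : ContDiff ℝ 1 (pd u i) :=
    (hu.fderiv_right (by norm_num)).clm_apply contDiff_const
  have hpartial (i : Fin d) : partialDeriv i (fun y => L (u y)) = fun y => L (pd u i y) :=
    funext fun y => partialDeriv_clm_comp L (hu.differentiable two_ne_zero y) i
  simp only [realLaplacian, lap, map_sum, hpartial]
  exact Finset.sum_congr rfl fun i _ =>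
    partialDeriv_clm_comp L ((hpd i).differentiable one_ne_zero x) i

theorem isResolventPair_re_im (hu : ContDiff ℝ 2 u)
    (heq : ∀ x, -lap u x + (V x : ℂ) * u x + ((s : ℂ) * Complex.I) * u x - (τ : ℂ) * u x = f x) :
    IsResolventPair s τ V (fun x => (u x).re) (fun x => (u x).im) (fun x => (f x).re)
      (fun x => (f x).im) where
  contDiff_left := Complex.reCLM.contDiff.comp hu
  contDiff_right := Complex.imCLM.contDiff.comp hu
  realLaplacian_left x := by
    have hre := congrArg Complex.re (heq x)
    simp only [Complex.add_re, Complex.sub_re, Complex.neg_re, Complex.mul_re, Complex.ofReal_re,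
      Complex.ofReal_im, Complex.I_re, Complex.I_im, Complex.mul_im] at hre
    have hlap := realLaplacian_clm_comp Complex.reCLM hu x
    simp only [Complex.reCLM_apply] at hlap
    linarith
  realLaplacian_right x := by
    have him := congrArg Complex.im (heq x)
    simp only [Complex.add_im, Complex.sub_im, Complex.neg_im, Complex.mul_re, Complex.ofReal_re,
      Complex.ofReal_im, Complex.I_re, Complex.I_im, Complex.mul_im] at him
    have hlap := realLaplacian_clm_comp Complex.imCLM hu x
    simp only [Complex.imCLM_apply] at hlap
    linarith

theorem coe_nnnorm_sq_eq_ofReal (z : ℂ) :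
    (‖z‖₊ : ℝ≥0∞) ^ 2 = ENNReal.ofReal (z.re ^ 2 + z.im ^ 2) := by
  rw [← enorm_eq_nnnorm, ← ofReal_norm, ← ENNReal.ofReal_pow (norm_nonneg _), Complex.sq_norm,
    Complex.normSq_apply, sq, sq]

theorem usq_eq_ofReal (u : Ed d → ℂ) (x : Ed d) :
    usq u x = ENNReal.ofReal ((u x).re ^ 2 + (u x).im ^ 2) :=
  coe_nnnorm_sq_eq_ofReal _

theorem gradSq_eq_ofReal {x : Ed d} (hu : DifferentiableAt ℝ u x) :
    gradSq u x = ENNReal.ofReal (gradNormSq (fun y => (u y).re) x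
      + gradNormSq (fun y => (u y).im) x) := by
  have hre := partialDeriv_clm_comp Complex.reCLM hu
  have him := partialDeriv_clm_comp Complex.imCLM hu
  simp only [Complex.reCLM_apply, Complex.imCLM_apply] at hre him
  simp only [gradSq, gradNormSq, hre, him, coe_nnnorm_sq_eq_ofReal]
  rw [← Finset.sum_add_distrib, ENNReal.ofReal_sum_of_nonneg fun i _ => by positivity]

end ComplexSolutions

/-- weighted resolvent estimate for long range potentials,
uniform in `ε ≠ 0` and `τ ≥ τ₀` (Theorem 4.5 of the paper). -/
theorem stmt_10 (d : ℕ) (hd : 2 ≤ d) (τ₀ α a γ : ℝ)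
    (hτ₀ : 0 < τ₀) (hα : 0 < α) (ha : 0 < a) (hγ : 0 < γ) :
    ∃ C : ℝ, 0 < C ∧
      ∀ (V₁ V₂ : Ed d → ℝ), ContDiff ℝ 1 V₁ →
      (∀ x : Ed d, |V₁ x| ≤ a * (1 + ‖x‖) ^ (-γ)) →
      (∀ x : Ed d, |V₂ x| ≤ a * (1 + ‖x‖) ^ (-γ - 1)) →
      (∀ x : Ed d, radialDeriv V₁ x ≤ a * (1 + ‖x‖) ^ (-γ - 1)) →
      ∀ (ε τ : ℝ), ε ≠ 0 → τ₀ ≤ τ →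
      ∀ (σ : ℝ), σ = 1 ∨ σ = -1 →
      ∀ (u f : Ed d → ℂ), ContDiff ℝ 2 u →
      (∫⁻ x, usq u x * ENNReal.ofReal ((1 + ‖x‖) ^ (-(1 + α)))) < ⊤ →
      (∫⁻ x, gradSq u x * ENNReal.ofReal ((1 + ‖x‖) ^ (-(1 + α)))) < ⊤ →
      (∫⁻ x, usq f x * ENNReal.ofReal ((1 + ‖x‖) ^ (1 + α))) < ⊤ →
      (∀ x, -lap u x + ((V₁ x : ℂ) + (V₂ x : ℂ)) * u x
        + (σ : ℂ) * ((ε : ℂ) * Complex.I) * u x - (τ : ℂ) * u x = f x) →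
      (∫⁻ x, gradSq u x * ENNReal.ofReal ((1 + ‖x‖) ^ (-(1 + α))))
        + ENNReal.ofReal τ * (∫⁻ x, usq u x * ENNReal.ofReal ((1 + ‖x‖) ^ (-(1 + α))))
      ≤ ENNReal.ofReal C *
          (∫⁻ x, usq f x * ENNReal.ofReal ((1 + ‖x‖) ^ (1 + α))) := by
  obtain ⟨C, hC, hest⟩ := exists_forall_lintegral_gradNormSq_add_le hd hτ₀ hα ha hγ
  refine ⟨C, hC, ?_⟩
  intro V₁ V₂ hV₁_diff hV₁ hV₂ hV₁_radial ε τ hε hτ σ hσ u f hu hu_fin hgrad_fin hf_fin heq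
  have hs : σ * ε ≠ 0 := mul_ne_zero (by rcases hσ with rfl | rfl <;> norm_num) hε
  have hpair : IsResolventPair (σ * ε) τ (fun x => V₁ x + V₂ x) (fun x => (u x).re)
      (fun x => (u x).im) (fun x => (f x).re) (fun x => (f x).im) :=
    isResolventPair_re_im hu fun x => by
      rw [← heq x]
      push_cast
      ring
  simp only [usq_eq_ofReal, gradSq_eq_ofReal (hu.differentiable two_ne_zero _)]
    at hu_fin hgrad_fin hf_fin ⊢
  exact hest hs hτ ⟨hV₁_diff, hV₁, hV₁_radial, hV₂⟩ hpair hu_fin hgrad_fin hf_fin
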